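/- Let (ν, δ) be a universal pair over ℕ. Then (11, η(ν, δ)) is a universal pair over ℤ, where η(ν, δ) = 15616 + 233856·δ + 233952·δ·(2δ + 1)^{ν+1} + 467712·δ²·(2δ + 1)^{ν+1}. -/

import Mathlib

/-- A set `𝒜 ⊆ ℕ` is Diophantine if there are `ν ∈ ℕ` and a polynomial
`P ∈ ℤ[X₀, …, X_ν]` such that `a ∈ 𝒜 ↔ ∃ z ∈ ℕ^ν, P(a, z) = 0`. -/
def IsDiophantine (A : Set ℕ) : Prop :=
  ∃ (ν : ℕ) (P : MvPolynomial (Fin (ν + 1)) ℤ),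
    ∀ a : ℕ, a ∈ A ↔ ∃ z : Fin ν → ℕ,
      MvPolynomial.eval (Fin.cons (a : ℤ) (fun i => (z i : ℤ))) P = 0

/-- `(ν, δ)` is a universal pair over `ℕ`: every Diophantine set is represented
by a polynomial with `ν` unknowns ranging over `ℕ` and total degree `≤ δ`. -/
def IsUniversalPairNat (ν δ : ℕ) : Prop :=
  ∀ A : Set ℕ, IsDiophantine A →
    ∃ P : MvPolynomial (Fin (ν + 1)) ℤ, P.totalDegree ≤ δ ∧
      ∀ a : ℕ, a ∈ A ↔ ∃ z : Fin ν → ℕ,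
        MvPolynomial.eval (Fin.cons (a : ℤ) (fun i => (z i : ℤ))) P = 0

/-- `(ν, δ)` is a universal pair over `ℤ`: every Diophantine set is represented
by a polynomial with `ν` unknowns ranging over `ℤ` and total degree `≤ δ`. -/
def IsUniversalPairInt (ν δ : ℕ) : Prop :=
  ∀ A : Set ℕ, IsDiophantine A →
    ∃ P : MvPolynomial (Fin (ν + 1)) ℤ, P.totalDegree ≤ δ ∧
      ∀ a : ℕ, a ∈ A ↔ ∃ z : Fin ν → ℤ,
        MvPolynomial.eval (Fin.cons (a : ℤ) z) P = 0



namespace UP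

/-- reduction of positive definite binary forms -/
lemma binary_red : ∀ (m : ℕ) (A B C D : ℤ), A.toNat ≤ m → 0 < A → A * C - B ^ 2 = D → 0 < D →
    ∃ p q r s : ℤ, p * s - q * r = 1 ∧ 0 < A * p ^ 2 + 2 * B * p * q + C * q ^ 2 ∧
      3 * (A * p ^ 2 + 2 * B * p * q + C * q ^ 2) ^ 2 ≤ 4 * D := by
  intro m
  induction m with
  | zero => intro A B C D h hA; omega
  | succ m ih =>
    intro A B C D hm hA hD hD0
    by_cases hred : 3 * A ^ 2 ≤ 4 * D
    · exact ⟨1, 0, 0, 1, by ring, by simpa using hA, by simpa using hred⟩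
    · push Not at hred
      obtain ⟨k, hk1, hk2⟩ : ∃ k : ℤ, -A ≤ 2 * (B + k * A) ∧ 2 * (B + k * A) ≤ A := by
        refine ⟨-((2 * B + A) / (2 * A)), ?_, ?_⟩
        · have := Int.mul_ediv_add_emod (2 * B + A) (2 * A)
          have h2 := Int.emod_nonneg (2 * B + A) (by omega : 2 * A ≠ 0)
          nlinarith
        · have := Int.mul_ediv_add_emod (2 * B + A) (2 * A)
          have h2 := Int.emod_lt_of_pos (2 * B + A) (by omega : 0 < 2 * A)
          nlinarith
      set B' := B + k * A with hB'
      set C' := C + 2 * k * B + k ^ 2 * A with hC'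
      have hdet : A * C' - B' ^ 2 = D := by rw [hB', hC', ← hD]; ring
      have hB2 : 4 * B' ^ 2 ≤ A ^ 2 := by nlinarith
      have hC0 : 0 < C' := by
        have : 0 < A * C' := by nlinarith [sq_nonneg B']
        exact (mul_pos_iff_of_pos_left hA).mp this
      have hCA : C' < A := by
        have : A * C' < A * A := by nlinarith
        exact lt_of_mul_lt_mul_left this hA.le
      obtain ⟨p, q, r, s, h1, h2, h3⟩ := ih C' (-B') A D (by omega) hC0 (by rw [← hdet]; ring) hD0
      have key : A * (-q + k * p) ^ 2 + 2 * B * (-q + k * p) * p + C * p ^ 2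
          = C' * p ^ 2 + 2 * (-B') * p * q + A * q ^ 2 := by rw [hB', hC']; ring
      refine ⟨-q + k * p, p, -s + k * r, r, by linear_combination h1, ?_, ?_⟩
      · rw [key]; exact h2
      · rw [key]; exact h3

set_option maxHeartbeats 1000000 in
lemma ternary_red : ∀ (m : ℕ) (a b c d e f : ℤ), a.toNat ≤ m → 0 < a → 0 < a * b - d ^ 2 →
    a * b * c + 2 * d * e * f - a * f ^ 2 - b * e ^ 2 - c * d ^ 2 = 1 →
    ∀ x y z : ℤ, ∃ u v w : ℤ, a * x ^ 2 + b * y ^ 2 + c * z ^ 2 + 2 * d * x * y + 2 * e * x * z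
      + 2 * f * y * z = u ^ 2 + v ^ 2 + w ^ 2 := by
  intro m
  induction m with
  | zero => intro a b c d e f h ha; omega
  | succ m ih =>
    intro a b c d e f hm ha hA hdet x y z
    obtain ⟨p, q, r, s, h1, h2, h3⟩ := binary_red _ (a * b - d ^ 2) (a * f - d * e) (a * c - e ^ 2) a
      le_rfl hA (by linear_combination a * hdet) ha
    set y' := s * y - r * z with hy'
    set z' := -q * y + p * z with hz'
    have hy : y = p * y' + r * z' := by rw [hy', hz']; linear_combination (-y) * h1
    have hz : z = q * y' + s * z' := by rw [hy', hz']; linear_combination (-z) * h1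
    clear_value y' z'
    subst hy hz
    set d1 := p * d + q * e with hd1
    obtain ⟨k, hk1, hk2⟩ : ∃ k : ℤ, -a ≤ 2 * (d1 + k * a) ∧ 2 * (d1 + k * a) ≤ a := by
      refine ⟨-((2 * d1 + a) / (2 * a)), ?_, ?_⟩
      · have := Int.mul_ediv_add_emod (2 * d1 + a) (2 * a)
        have h2 := Int.emod_nonneg (2 * d1 + a) (by omega : 2 * a ≠ 0)
        nlinarith
      · have := Int.mul_ediv_add_emod (2 * d1 + a) (2 * a)
        have h2 := Int.emod_lt_of_pos (2 * d1 + a) (by omega : 0 < 2 * a)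
        nlinarith
    set d2 := d1 + k * a with hd2
    set b1 := b * p ^ 2 + 2 * f * p * q + c * q ^ 2 with hb1
    set e1 := r * d + s * e with he1
    set c1 := b * r ^ 2 + 2 * f * r * s + c * s ^ 2 with hc1
    set f1 := b * p * r + f * (p * s + q * r) + c * q * s with hf1
    set b2 := b1 + 2 * k * d1 + k ^ 2 * a with hb2
    set f2 := f1 + k * e1 with hf2
    have hAA : (a * b - d ^ 2) * p ^ 2 + 2 * (a * f - d * e) * p * q + (a * c - e ^ 2) * q ^ 2
        = a * b2 - d2 ^ 2 := by rw [hb2, hd2, hb1, hd1]; ring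
    rw [hAA] at h2 h3
    have hdet2 : a * b2 * c1 + 2 * d2 * e1 * f2 - a * f2 ^ 2 - b2 * e1 ^ 2 - c1 * d2 ^ 2 = 1 := by
      have : a * b2 * c1 + 2 * d2 * e1 * f2 - a * f2 ^ 2 - b2 * e1 ^ 2 - c1 * d2 ^ 2
        = (a * b * c + 2 * d * e * f - a * f ^ 2 - b * e ^ 2 - c * d ^ 2) * (p * s - q * r) ^ 2 := by
        rw [hb2, hd2, hb1, hd1, hc1, he1, hf2, hf1, he1]; ring
      rw [this, hdet, h1]; ring
    have hform : a * x ^ 2 + b * (p * y' + r * z') ^ 2 + c * (q * y' + s * z') ^ 2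
        + 2 * d * x * (p * y' + r * z') + 2 * e * x * (q * y' + s * z')
        + 2 * f * (p * y' + r * z') * (q * y' + s * z')
        = a * (x - k * y') ^ 2 + b2 * y' ^ 2 + c1 * z' ^ 2 + 2 * d2 * (x - k * y') * y'
          + 2 * e1 * (x - k * y') * z' + 2 * f2 * y' * z' := by
      rw [hb2, hd2, hb1, hd1, hc1, he1, hf2, hf1, he1]; ring
    rw [hform]
    clear_value b2 d2 c1 e1 f2
    clear hform hAA
    generalize x - k * y' = x'
    have hd4 : 4 * d2 ^ 2 ≤ a ^ 2 := by nlinarith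
    have hb0 : 0 < b2 := by
      have : 0 < a * b2 := by nlinarith [sq_nonneg d2]
      exact (mul_pos_iff_of_pos_left ha).mp this
    by_cases hlt : b2 < a
    · obtain ⟨u, v, w, huvw⟩ := ih b2 a c1 d2 f2 e1 (by omega) hb0 (by linarith [mul_comm a b2])
        (by linear_combination hdet2) y' x' z'
      exact ⟨u, v, w, by rw [← huvw]; ring⟩
    · push Not at hlt
      have h50 : a * a ≤ a * b2 := mul_le_mul_of_nonneg_left hlt ha.le
      have h5 : 3 * a ^ 2 ≤ 4 * (a * b2 - d2 ^ 2) := by linarith [pow_two a]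
      have h6 : 9 * a ^ 4 ≤ 16 * (a * b2 - d2 ^ 2) ^ 2 := by
        have := pow_le_pow_left₀ (by positivity) h5 2
        linarith [mul_pow 3 (a ^ 2) 2, pow_mul a 2 2, mul_pow 4 (a * b2 - d2 ^ 2) 2]
      have ha1 : a = 1 := by
        by_contra hne
        have : 2 ≤ a := by omega
        have h7 : 27 * a ^ 4 ≤ 64 * a := by linarith
        have h8 : 8 ≤ a ^ 3 := by
          calc (8:ℤ) = 2 ^ 3 := by norm_num
            _ ≤ a ^ 3 := by gcongr
        nlinarith
      subst ha1
      have hd0 : d2 = 0 := by omega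
      subst hd0
      have hb21 : b2 = 1 := by
        by_contra hne
        have : 2 ≤ b2 := by omega
        nlinarith
      subst hb21
      refine ⟨x' + e1 * z', y' + f2 * z', z', ?_⟩
      linear_combination z' ^ 2 * hdet2

open NumberTheorySymbols in
lemma three_sq_aux (n : ℕ) (hn : n % 4 = 1) (hn1 : 1 < n) :
    ∃ u v w : ℤ, (n : ℤ) = u ^ 2 + v ^ 2 + w ^ 2 := by
  obtain ⟨t, rfl⟩ : ∃ t, n = 4 * t + 1 := ⟨n / 4, by omega⟩
  have hcop : (6 * t + 1).Coprime (4 * (4 * t + 1)) := by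
    apply Nat.Coprime.mul_right
    · have h2 : (6 * t + 1).Coprime 2 := by
        rw [Nat.coprime_two_right]; exact ⟨3 * t, by ring⟩
      have := Nat.Coprime.mul_right h2 h2
      simpa using this
    · have : IsCoprime ((6 * t + 1 : ℕ) : ℤ) ((4 * t + 1 : ℕ) : ℤ) :=
        ⟨-2, 3, by push_cast; ring⟩
      exact Nat.isCoprime_iff_coprime.mp this
  obtain ⟨p, hpgt, hp, hpm⟩ := Nat.forall_exists_prime_gt_and_modEq (6 * t + 1)
    (q := 4 * (4 * t + 1)) (a := 6 * t + 1) (by omega) hcop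
  have : Fact p.Prime := ⟨hp⟩
  obtain ⟨m, hm⟩ : ∃ m, p = 4 * (4 * t + 1) * m + (6 * t + 1) := by
    have := (Nat.modEq_iff_dvd' hpgt.le).mp hpm.symm
    obtain ⟨m, hm⟩ := this
    exact ⟨m, by omega⟩
  set d := 8 * m + 3 with hd
  have hdn : (d : ℤ) * (4 * t + 1) - 1 = 2 * p := by rw [hm, hd]; push_cast; ring
  have hpodd : Odd p := ⟨2 * (4 * t + 1) * m + 3 * t, by rw [hm]; ring⟩
  have hdodd : Odd d := ⟨4 * m + 1, by rw [hd]; ring⟩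
  have h2d : J(2 | d) = -1 := by
    rw [jacobiSym.at_two hdodd, ZMod.χ₈_nat_eq_if_mod_eight]
    have h8 : d % 8 = 3 := by omega
    have h2 : d % 2 = 1 := by omega
    simp [h8, h2]
  have h1d : J(-1 | d) = -1 := by
    rw [jacobiSym.at_neg_one hdodd, ZMod.χ₄_nat_three_mod_four (by omega)]
  have hpd : J(p | d) = 1 := by
    have h3 : J(2 * p | d) = J(-1 | d) := by
      apply jacobiSym.mod_left'
      rw [← hdn]
      exact (Int.modEq_iff_dvd.mpr ⟨-(4 * (t:ℤ) + 1), by ring⟩ : (d:ℤ) * (4 * t + 1) - 1 ≡ -1 [ZMOD d])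
    rw [jacobiSym.mul_left, h2d, h1d] at h3
    linarith
  have hneg : J(-(d:ℤ) | p) = 1 := by
    rw [jacobiSym.neg _ hpodd]
    rcases (by obtain ⟨j, hj⟩ := hpodd; omega : p % 4 = 1 ∨ p % 4 = 3) with h | h
    · rw [ZMod.χ₄_nat_one_mod_four h, jacobiSym.quadratic_reciprocity_one_mod_four' hdodd h, hpd]
      norm_num
    · rw [ZMod.χ₄_nat_three_mod_four h,
        jacobiSym.quadratic_reciprocity_three_mod_four (by omega) h, hpd]
      norm_num
  have hsq := ZMod.isSquare_of_jacobiSym_eq_one hneg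
  obtain ⟨s0, hs0⟩ := hsq
  obtain ⟨s, hs, hsodd⟩ : ∃ s : ℤ, (p : ℤ) ∣ s ^ 2 + d ∧ s % 2 = 1 := by
    have h0 : (p : ℤ) ∣ (s0.val : ℤ) ^ 2 + d := by
      rw [← ZMod.intCast_zmod_eq_zero_iff_dvd]
      push_cast at hs0 ⊢
      rw [ZMod.natCast_zmod_val]
      linear_combination -hs0
    rcases (by omega : (s0.val : ℤ) % 2 = 1 ∨ (s0.val : ℤ) % 2 = 0) with h | h
    · exact ⟨_, h0, h⟩
    · refine ⟨s0.val + p, ?_, ?_⟩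
      · have : ((s0.val : ℤ) + p) ^ 2 + d = ((s0.val : ℤ) ^ 2 + d) + p * (2 * s0.val + p) := by ring
        rw [this]; exact dvd_add h0 (dvd_mul_right _ _)
      · obtain ⟨j, hj⟩ := hpodd; omega
  have h2 : (2 : ℤ) ∣ s ^ 2 + d := by
    obtain ⟨j, hj⟩ : ∃ j, s = 2 * j + 1 := ⟨s / 2, by omega⟩
    exact ⟨2 * j ^ 2 + 2 * j + 1 + (4 * m + 1), by rw [hj, hd]; push_cast; ring⟩
  have hcop2 : IsCoprime (2 : ℤ) p := by
    have : Nat.Coprime 2 p := by rw [Nat.coprime_two_left]; exact hpodd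
    exact_mod_cast Nat.isCoprime_iff_coprime.mpr this
  obtain ⟨a, ha⟩ := hcop2.mul_dvd h2 hs
  have hdpos : (0 : ℤ) < d := by omega
  have hppos : (0 : ℤ) < p := by exact_mod_cast hp.pos
  have hapos : 0 < a := by
    have : 0 < (2 * (p:ℤ)) * a := by rw [← ha]; positivity
    exact (mul_pos_iff_of_pos_left (by positivity)).mp this
  obtain ⟨u, v, w, h⟩ := ternary_red _ a (2 * p) (4 * t + 1) s 1 0 le_rfl hapos
    (by linarith) (by linear_combination (-(4 * (t:ℤ) + 1)) * ha + hdn) 0 0 1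
  exact ⟨u, v, w, by push_cast; linarith⟩

/-- every natural number has the form `x² + y² + z² + z` -/
theorem gauss_form (n : ℕ) : ∃ x y z : ℤ, (n : ℤ) = x ^ 2 + y ^ 2 + z ^ 2 + z := by
  have key : ∃ u v w : ℤ, ((4 * n + 1 : ℕ) : ℤ) = u ^ 2 + v ^ 2 + w ^ 2 := by
    rcases Nat.eq_zero_or_pos n with rfl | h
    · exact ⟨1, 0, 0, by norm_num⟩
    · exact three_sq_aux _ (by omega) (by omega)
  obtain ⟨u, v, w, h⟩ := key
  push_cast at h
  have fin : ∀ u v w : ℤ, 4 * (n:ℤ) + 1 = u ^ 2 + v ^ 2 + w ^ 2 → u % 2 = 0 → v % 2 = 0 →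
      ∃ x y z : ℤ, (n : ℤ) = x ^ 2 + y ^ 2 + z ^ 2 + z := by
    intro u v w h hu hv
    obtain ⟨x, rfl⟩ : ∃ x, u = 2 * x := ⟨u / 2, by omega⟩
    obtain ⟨y, rfl⟩ : ∃ x, v = 2 * x := ⟨v / 2, by omega⟩
    rcases (by omega : w % 2 = 0 ∨ w % 2 = 1) with hw | hw
    · obtain ⟨z, rfl⟩ : ∃ x, w = 2 * x := ⟨w / 2, by omega⟩
      ring_nf at h
      omega
    · obtain ⟨z, rfl⟩ : ∃ x, w = 2 * x + 1 := ⟨w / 2, by omega⟩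
      exact ⟨x, y, z, by linarith⟩
  have sqm : ∀ u : ℤ, (u % 2 = 0 ∧ u ^ 2 % 4 = 0) ∨ (u % 2 = 1 ∧ u ^ 2 % 4 = 1) := by
    intro u
    rcases (by omega : u % 2 = 0 ∨ u % 2 = 1) with hw | hw
    · obtain ⟨z, rfl⟩ : ∃ x, u = 2 * x := ⟨u / 2, by omega⟩
      left; exact ⟨hw, by ring_nf; omega⟩
    · obtain ⟨z, rfl⟩ : ∃ x, u = 2 * x + 1 := ⟨u / 2, by omega⟩
      right; exact ⟨hw, by ring_nf; omega⟩
  rcases sqm u with ⟨hu, hu2⟩ | ⟨hu, hu2⟩ <;> rcases sqm v with ⟨hv, hv2⟩ | ⟨hv, hv2⟩ <;>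
    rcases sqm w with ⟨hw, hw2⟩ | ⟨hw, hw2⟩
  · exact fin u v w h hu hv
  · exact fin u v w h hu hv
  · exact fin u w v (by linarith) hu hw
  · exact absurd h (by omega)
  · exact fin v w u (by linarith) hv hw
  · exact absurd h (by omega)
  · exact absurd h (by omega)
  · exact absurd h (by omega)

end UP


namespace UP

/-- The relation combining polynomial (two squares, one divisibility, one inequality). -/
def relX (A1 A2 : ℤ) : ℤ := 1 + A1 ^ 2 + A2 ^ 2
def relQ (S R : ℤ) : ℤ := S ^ 2 * (2 * R - 1)
def relZ (A1 A2 S T R n : ℤ) : ℤ :=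
  S ^ 2 * n + T ^ 2 - relQ S R * (T ^ 2 + relX A1 A2 ^ 2)
def relM (A1 A2 S T R n : ℤ) : ℤ :=
  relZ A1 A2 S T R n ^ 4
    - 2 * relZ A1 A2 S T R n ^ 2 * (relQ S R ^ 2 * A1 + relQ S R ^ 2 * relX A1 A2 ^ 2 * A2)
    + (relQ S R ^ 2 * A1 - relQ S R ^ 2 * relX A1 A2 ^ 2 * A2) ^ 2

lemma isSquare_of_sq_mul {m A t : ℤ} (hm : m ≠ 0) (h : m ^ 2 * A = t ^ 2) : IsSquare A := by
  have hd : m ^ 2 ∣ t ^ 2 := ⟨A, h.symm⟩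
  rw [Int.pow_dvd_pow_iff (by norm_num)] at hd
  obtain ⟨c, rfl⟩ := hd
  refine ⟨c, ?_⟩
  have : m ^ 2 * A = m ^ 2 * (c * c) := by rw [h]; ring
  exact mul_left_cancel₀ (pow_ne_zero 2 hm) this

lemma relQ_ne {S R : ℤ} (hS : S ≠ 0) : relQ S R ≠ 0 := by
  unfold relQ
  exact mul_ne_zero (pow_ne_zero 2 hS) (by omega)

lemma relM_squares {A1 A2 S T R n : ℤ} (hS : S ≠ 0) (h : relM A1 A2 S T R n = 0) :
    IsSquare A1 ∧ IsSquare A2 := by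
  have hQ := relQ_ne (R := R) hS
  unfold relM at h
  have hX : 0 < relX A1 A2 := by unfold relX; positivity
  set Q := relQ S R
  set z := relZ A1 A2 S T R n
  by_cases hz : z = 0
  · rw [hz] at h
    have h1 : Q ^ 2 * (A1 - relX A1 A2 ^ 2 * A2) = 0 := by
      have : (Q ^ 2 * (A1 - relX A1 A2 ^ 2 * A2)) ^ 2 = 0 := by linear_combination h
      exact pow_eq_zero_iff (by norm_num) |>.mp this
    have h2 : A1 = relX A1 A2 ^ 2 * A2 := by
      rcases mul_eq_zero.mp h1 with h | h
      · exact absurd h (pow_ne_zero 2 hQ)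
      · linarith
    by_cases hA2 : A2 = 0
    · rw [hA2] at h2 ⊢; simp at h2; rw [h2]; simp
    · exfalso
      have h3 : |A1| = relX A1 A2 ^ 2 * |A2| := by
        conv_lhs => rw [h2]
        rw [abs_mul, abs_of_pos (pow_pos hX 2)]
      have h4 : 1 ≤ |A2| := Int.one_le_abs hA2
      have h5 : |A1| < relX A1 A2 := by
        unfold relX
        rcases abs_cases A1 with ⟨h, _⟩ | ⟨h, _⟩ <;> rw [h] <;> nlinarith [sq_nonneg A2]
      nlinarith
  · constructor
    · apply isSquare_of_sq_mul (m := 2 * z * Q)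
        (t := z ^ 2 + Q ^ 2 * A1 - Q ^ 2 * relX A1 A2 ^ 2 * A2)
      · exact mul_ne_zero (mul_ne_zero (by norm_num) hz) hQ
      · linear_combination -h
    · apply isSquare_of_sq_mul (m := 2 * z * (Q * relX A1 A2))
        (t := z ^ 2 - Q ^ 2 * A1 + Q ^ 2 * relX A1 A2 ^ 2 * A2)
      · exact mul_ne_zero (mul_ne_zero (by norm_num) hz) (mul_ne_zero hQ hX.ne')
      · linear_combination -h

lemma abs_le_pow4 (s : ℤ) : |s| ≤ (s * s) ^ 2 := by
  rcases eq_or_ne s 0 with rfl | hs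
  · simp
  · have h1 : 1 ≤ |s| := Int.one_le_abs hs
    have : (s * s) ^ 2 = |s| ^ 4 := by
      rw [show |s| ^ 4 = (|s| ^ 2) ^ 2 by ring, sq_abs]; ring
    rw [this]
    exact le_self_pow₀ h1 (by norm_num)

lemma relW_bound (s1 s2 e1 e2 : ℤ) (h1 : |e1| ≤ |s1|) (h2 : |e2| ≤ |s2|) :
    0 < relX (s1 * s1) (s2 * s2) ^ 2 + e1 + e2 * relX (s1 * s1) (s2 * s2) := by
  set X := relX (s1 * s1) (s2 * s2) with hXd
  have ha := abs_le_pow4 s1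
  have hb := abs_le_pow4 s2
  have hXeq : X = 1 + (s1 * s1) ^ 2 + (s2 * s2) ^ 2 := rfl
  have hX : 1 ≤ X := by rw [hXeq]; nlinarith [sq_nonneg (s1 * s1), sq_nonneg (s2 * s2)]
  have e1' := neg_abs_le e1
  have e2' := neg_abs_le e2
  have h3 : -(s1 * s1) ^ 2 ≤ e1 := by linarith
  have h4 : -(s2 * s2) ^ 2 ≤ e2 := by linarith
  nlinarith [sq_nonneg (s1 * s1)]

theorem relM_iff {A1 A2 S T R : ℤ} (hS : S ≠ 0) :
    (IsSquare A1 ∧ IsSquare A2 ∧ S ∣ T ∧ 0 < R) ↔ ∃ n : ℕ, relM A1 A2 S T R n = 0 := by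
  constructor
  · rintro ⟨⟨s1, rfl⟩, ⟨s2, rfl⟩, ⟨c, rfl⟩, hR⟩
    have hW := relW_bound s1 s2 s1 s2 le_rfl le_rfl
    set X := relX (s1 * s1) (s2 * s2) with hX
    set N := (2 * R - 1) * ((S * c) ^ 2 + (X ^ 2 + s1 + s2 * X)) - c ^ 2 with hN
    have hNn : 0 ≤ N := by
      have hS2 : 1 ≤ S ^ 2 := by
        have : 0 < S ^ 2 := by positivity
        linarith
      have : c ^ 2 ≤ (S * c) ^ 2 := by rw [mul_pow]; nlinarith [sq_nonneg c]
      rw [hN]; nlinarith [sq_nonneg (S * c)]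
    refine ⟨N.toNat, ?_⟩
    rw [Int.toNat_of_nonneg hNn]
    have hz : relZ (s1 * s1) (s2 * s2) S (S * c) R N = relQ S R * (s1 + s2 * X) := by
      unfold relZ relQ; rw [← hX, hN]; ring
    unfold relM
    rw [hz, ← hX]; ring
  · rintro ⟨n, hn⟩
    obtain ⟨⟨s1, rfl⟩, ⟨s2, rfl⟩⟩ := relM_squares hS hn
    have hX : ∀ e1 e2 : ℤ, |e1| ≤ |s1| → |e2| ≤ |s2| →
        relZ (s1 * s1) (s2 * s2) S T R n
          = relQ S R * (e1 + e2 * relX (s1 * s1) (s2 * s2)) → S ∣ T ∧ 0 < R := by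
      intro e1 e2 h1 h2 hz
      have hW := relW_bound s1 s2 e1 e2 h1 h2
      set X := relX (s1 * s1) (s2 * s2) with hX
      unfold relZ relQ at hz
      rw [← hX] at hz
      have hT : T ^ 2 = S ^ 2 * ((2 * R - 1) * (T ^ 2 + (X ^ 2 + e1 + e2 * X)) - n) := by
        linear_combination hz
      refine ⟨?_, ?_⟩
      · have : S ^ 2 ∣ T ^ 2 := ⟨_, hT⟩
        rwa [Int.pow_dvd_pow_iff (by norm_num)] at this
      · by_contra hR
        have h5 : (2 * R - 1) * (T ^ 2 + (X ^ 2 + e1 + e2 * X)) < 0 :=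
          mul_neg_of_neg_of_pos (by omega) (by positivity)
        have hS2 : 0 < S ^ 2 := by positivity
        have h6 : S ^ 2 * ((2 * R - 1) * (T ^ 2 + (X ^ 2 + e1 + e2 * X)) - n) < 0 :=
          mul_neg_of_pos_of_neg hS2 (by have : (0:ℤ) ≤ n := by positivity
                                        linarith)
        nlinarith [sq_nonneg T]
    have hfac : (relZ (s1 * s1) (s2 * s2) S T R n - relQ S R * (s1 + s2 * relX (s1 * s1) (s2 * s2)))
        * (relZ (s1 * s1) (s2 * s2) S T R n - relQ S R * (-s1 + s2 * relX (s1 * s1) (s2 * s2)))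
        * (relZ (s1 * s1) (s2 * s2) S T R n - relQ S R * (s1 + (-s2) * relX (s1 * s1) (s2 * s2)))
        * (relZ (s1 * s1) (s2 * s2) S T R n - relQ S R * (-s1 + (-s2) * relX (s1 * s1) (s2 * s2)))
        = 0 := by
      rw [← hn]; unfold relM; ring
    refine ⟨⟨s1, rfl⟩, ⟨s2, rfl⟩, ?_⟩
    rcases mul_eq_zero.mp hfac with h | h
    · rcases mul_eq_zero.mp h with h | h
      · rcases mul_eq_zero.mp h with h | h
        · exact hX s1 s2 le_rfl le_rfl (by linarith)
        · exact hX (-s1) s2 (by simp) le_rfl (by linarith)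
      · exact hX s1 (-s2) le_rfl (by simp) (by linarith)
    · exact hX (-s1) (-s2) (by simp) (by simp) (by linarith)

end UP

namespace UP
open Pell

/-! ### Pell sequences with integer index -/

def om (a : ℤ) : Pell.Solution₁ (a ^ 2 - 1) := Pell.Solution₁.mk a 1 (by ring)
def px (a n : ℤ) : ℤ := (om a ^ n).x
def py (a n : ℤ) : ℤ := (om a ^ n).y

lemma dcong {m x y : ℤ} (h : m ∣ x) (e : y = x) : m ∣ y := e ▸ h

lemma px_zero (a : ℤ) : px a 0 = 1 := by simp [px]
lemma py_zero (a : ℤ) : py a 0 = 0 := by simp [py]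
lemma px_one (a : ℤ) : px a 1 = a := by simp [px, om]
lemma py_one (a : ℤ) : py a 1 = 1 := by simp [py, om]
lemma pxy (a n : ℤ) : px a n ^ 2 - (a ^ 2 - 1) * py a n ^ 2 = 1 := (om a ^ n).prop
lemma px_add (a m n : ℤ) : px a (m + n) = px a m * px a n + (a ^ 2 - 1) * (py a m * py a n) := by
  simp only [px, py, zpow_add, Solution₁.x_mul]
lemma py_add (a m n : ℤ) : py a (m + n) = px a m * py a n + py a m * px a n := by
  simp only [px, py, zpow_add, Solution₁.y_mul]
lemma px_neg (a n : ℤ) : px a (-n) = px a n := by simp [px, zpow_neg]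
lemma py_neg (a n : ℤ) : py a (-n) = - py a n := by simp [py, zpow_neg]
lemma px_succ (a n : ℤ) : px a (n + 1) = px a n * a + (a ^ 2 - 1) * py a n := by
  rw [px_add, px_one, py_one]; ring
lemma py_succ (a n : ℤ) : py a (n + 1) = px a n + py a n * a := by
  rw [py_add, px_one, py_one]; ring
lemma py_two (a n : ℤ) : py a (n + 2) = 2 * a * py a (n + 1) - py a n := by
  rw [show n + 2 = (n + 1) + 1 by ring, py_succ a (n + 1), px_succ, py_succ]; ring

lemma pxy_congr {a b m : ℤ} (h : a ≡ b [ZMOD m]) (n : ℕ) :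
    px a n ≡ px b n [ZMOD m] ∧ py a n ≡ py b n [ZMOD m] := by
  induction n with
  | zero => simp [px_zero, py_zero, Int.ModEq.refl]
  | succ k ih =>
    push_cast
    rw [px_succ, py_succ, px_succ, py_succ]
    exact ⟨(ih.1.mul h).add (((h.pow 2).sub_right 1).mul ih.2), ih.1.add (ih.2.mul h)⟩

lemma py_congr {a b m : ℤ} (h : a ≡ b [ZMOD m]) (n : ℤ) : py a n ≡ py b n [ZMOD m] := by
  obtain ⟨k, rfl | rfl⟩ := n.eq_nat_or_neg
  · exact (pxy_congr h k).2
  · rw [py_neg, py_neg]; exact (pxy_congr h k).2.neg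

lemma pxy_at_one (n : ℕ) : px 1 n = 1 ∧ py 1 n = n := by
  induction n with
  | zero => simp [px_zero, py_zero]
  | succ k ih =>
    push_cast
    rw [px_succ, py_succ, ih.1, ih.2]; constructor <;> ring

lemma py_at_one (n : ℤ) : py 1 n = n := by
  obtain ⟨k, rfl | rfl⟩ := n.eq_nat_or_neg
  · exact (pxy_at_one k).2
  · rw [py_neg, (pxy_at_one k).2]

lemma py_modEq_self {a m : ℤ} (h : m ∣ a - 1) (n : ℤ) : py a n ≡ n [ZMOD m] := by
  have := py_congr (a := a) (b := 1) (m := m) ((Int.modEq_iff_dvd.2 h).symm) n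
  rwa [py_at_one] at this

lemma om_fund {a : ℤ} (ha : 2 ≤ a) : Pell.IsFundamental (om a) := by
  refine ⟨by simp [om]; omega, by simp [om], ?_⟩
  intro b hb
  have h1 := b.prop
  have h2 : b.y ≠ 0 := Solution₁.y_ne_zero_of_one_lt_x hb
  have h3 : 1 ≤ b.y ^ 2 := by
    have : 0 < b.y ^ 2 := by positivity
    omega
  simp only [om, Solution₁.x_mk]
  have h4 : 0 < a ^ 2 - 1 := by nlinarith
  have h5 : a ^ 2 ≤ b.x ^ 2 := by nlinarith [mul_le_mul_of_nonneg_left h3 h4.le]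
  exact (pow_le_pow_iff_left₀ (by omega) (by omega) two_ne_zero).1 h5

lemma py_strictMono {a : ℤ} (ha : 2 ≤ a) : StrictMono (py a) := (om_fund ha).y_strictMono

lemma px_pos {a : ℤ} (ha : 2 ≤ a) (n : ℤ) : 0 < px a n :=
  Solution₁.x_zpow_pos (by simp [om]; omega) n

lemma eq_py_of_sq {a C : ℤ} (ha : 2 ≤ a) (h : IsSquare ((a ^ 2 - 1) * C ^ 2 + 1)) :
    ∃ n : ℤ, C = py a n := by
  obtain ⟨r, hr⟩ := h
  obtain ⟨n, hn | hn⟩ := (om_fund ha).eq_zpow_or_neg_zpow (Solution₁.mk r C (by linarith))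
  · exact ⟨n, by rw [py, ← hn]; simp⟩
  · refine ⟨-n, ?_⟩
    rw [py_neg, py]
    have := congrArg Solution₁.y hn
    simpa using this

lemma sq_eq_px (a n : ℤ) : (a ^ 2 - 1) * py a n ^ 2 + 1 = px a n ^ 2 := by
  linarith [pxy a n]

lemma py_pos {a : ℤ} (ha : 2 ≤ a) {n : ℤ} (hn : 0 < n) : 0 < py a n := by
  have := py_strictMono ha hn
  rwa [py_zero] at this

lemma le_py {a : ℤ} (ha : 2 ≤ a) (n : ℕ) : (n : ℤ) ≤ py a n := by
  induction n with
  | zero => simp [py_zero]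
  | succ k ih =>
    have := py_strictMono ha (show (k : ℤ) < (k : ℤ) + 1 by omega)
    push_cast; omega

lemma abs_le_abs_py {a : ℤ} (ha : 2 ≤ a) (n : ℤ) : |n| ≤ |py a n| := by
  obtain ⟨k, rfl | rfl⟩ := n.eq_nat_or_neg
  · rw [Nat.abs_cast]; exact (le_py ha k).trans (le_abs_self _)
  · rw [py_neg, abs_neg, abs_neg, Nat.abs_cast]; exact (le_py ha k).trans (le_abs_self _)

lemma py_bounds {a : ℤ} (ha : 2 ≤ a) (n : ℕ) :
    (2 * a - 1) * py a n ≤ py a (n + 1) ∧ py a (n + 1) ≤ 2 * a * py a n + (if n = 0 then 1 else 0) ∧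
    (2 * a - 1) ^ n ≤ py a (n + 1) ∧ py a (n + 1) ≤ (2 * a) ^ n := by
  induction n with
  | zero => simp [py_zero, py_one]
  | succ k ih =>
    obtain ⟨h1, h2, h3, h4⟩ := ih
    have h5 := py_two a k
    have h0 : 0 ≤ py a k := (Int.natCast_nonneg k).trans (le_py ha k)
    have hm := py_strictMono ha (show (k : ℤ) < (k : ℤ) + 1 by omega)
    push_cast
    rw [show (k : ℤ) + 1 + 1 = k + 2 by ring, h5]
    refine ⟨by nlinarith, by simp; omega, ?_, ?_⟩
    · rw [pow_succ]; nlinarith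
    · rw [pow_succ]; nlinarith

lemma py_eq_yn {a : ℕ} (a1 : 1 < a) (n : ℕ) :
    py (a : ℤ) n = yn a1 n ∧ py (a : ℤ) (n + 1) = yn a1 (n + 1) := by
  induction n with
  | zero => simp [py_zero, py_one]
  | succ k ih =>
    refine ⟨by push_cast; exact ih.2, ?_⟩
    have h := yn_succ_succ a1 k
    push_cast
    rw [show (k : ℤ) + 1 + 1 = k + 2 by ring, py_two, ih.1, ih.2]
    zify at h
    rw [show k + 1 + 1 = k + 2 by ring]
    linarith

lemma dvd_of_sq_dvd_py {a : ℤ} (ha : 2 ≤ a) (q s : ℤ) (h : py a q ^ 2 ∣ py a s) :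
    py a q ∣ s := by
  lift a to ℕ using (by omega)
  have a1 : 1 < a := by omega
  have key : ∀ q s : ℕ, py a q ^ 2 ∣ py (a : ℤ) s → py (a : ℤ) q ∣ (s : ℤ) := by
    intro q s h
    rw [(py_eq_yn a1 q).1, (py_eq_yn a1 s).1] at h
    rw [(py_eq_yn a1 q).1]
    exact_mod_cast dvd_of_ysq_dvd a1 (by rw [← sq]; exact_mod_cast h)
  obtain ⟨k, rfl | rfl⟩ := q.eq_nat_or_neg <;> obtain ⟨t, rfl | rfl⟩ := s.eq_nat_or_neg
  · exact key k t h
  · rw [py_neg, dvd_neg] at h; rw [dvd_neg]; exact key k t h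
  · rw [py_neg, neg_sq] at h; rw [py_neg, neg_dvd]; exact key k t h
  · rw [py_neg, neg_sq, py_neg, dvd_neg] at h; rw [py_neg, neg_dvd, dvd_neg]; exact key k t h

lemma exists_mult {a m : ℤ} (ha : 2 ≤ a) (hm : m ≠ 0) :
    ∃ x : ℤ, x ≠ 0 ∧ IsSquare ((a ^ 2 - 1) * (m * x) ^ 2 + 1) := by
  have hd : 0 < (a ^ 2 - 1) * m ^ 2 := by
    have : 0 < m ^ 2 := by positivity
    have : 0 < a ^ 2 - 1 := by nlinarith
    positivity
  have hns : ¬ IsSquare (a ^ 2 - 1) := (om_fund ha).d_nonsquare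
  have hns2 : ¬ IsSquare ((a ^ 2 - 1) * m ^ 2) := by
    rintro ⟨r, hr⟩
    apply hns
    have h1 : m ^ 2 ∣ r ^ 2 := ⟨a ^ 2 - 1, by rw [sq r, ← hr]; ring⟩
    obtain ⟨t, rfl⟩ := (Int.pow_dvd_pow_iff two_ne_zero).1 h1
    refine ⟨t, ?_⟩
    have hm2 : m ^ 2 ≠ 0 := by positivity
    apply mul_right_cancel₀ hm2
    rw [hr]; ring
  obtain ⟨x, y, hxy, hy⟩ := Pell.exists_of_not_isSquare hd hns2
  exact ⟨y, hy, x, by linear_combination -hxy⟩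

lemma px_gt {a : ℤ} (ha : 3 ≤ a) {s : ℤ} (hs : 0 < s) : 2 * py a s < px a s := by
  have h1 := pxy a s
  have h2 := px_pos (by omega : 2 ≤ a) s
  have h3 := py_pos (by omega : 2 ≤ a) hs
  have h4 : 8 ≤ a ^ 2 - 1 := by nlinarith
  have : (2 * py a s) ^ 2 < px a s ^ 2 := by
    nlinarith [mul_le_mul_of_nonneg_right h4 (sq_nonneg (py a s)), sq_nonneg (py a s)]
  exact lt_of_pow_lt_pow_left₀ 2 h2.le this

lemma px_dvd_shift (a s n : ℤ) : px a s ∣ py a (n + 2 * s) + py a n := by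
  have h : py a (n + 2 * s) + py a n = 2 * px a s * py a (n + s) := by
    rw [show n + 2 * s = (n + s) + s by ring, py_add a (n+s) s]
    have : py a n = py a ((n + s) + (-s)) := by ring_nf
    rw [this, py_add a (n+s) (-s), px_neg, py_neg]; ring
  rw [h]; exact ⟨2 * py a (n+s), by ring⟩

lemma px_dvd_shift4 (a s n k : ℤ) :
    px a s ∣ py a (n + 2 * s * k) - py a n ∨ px a s ∣ py a (n + 2 * s * k) + py a n := by
  induction k using Int.induction_on with
  | zero => simp
  | succ i ih =>
    have h := px_dvd_shift a s (n + 2 * s * i)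
    rw [show n + 2 * s * i + 2 * s = n + 2 * s * (i + 1) by ring] at h
    rcases ih with ih | ih
    · right; exact dcong (dvd_sub h ih) (by ring)
    · left; exact dcong (dvd_sub h ih) (by ring)
  | pred i ih =>
    have h := px_dvd_shift a s (n + 2 * s * (-i - 1))
    rw [show n + 2 * s * (-i - 1) + 2 * s = n + 2 * s * (-i) by ring] at h
    rcases ih with ih | ih
    · right; exact dcong (dvd_sub h ih) (by ring)
    · left; exact dcong (dvd_sub h ih) (by ring)

lemma small_rep {s : ℤ} (hs : 0 < s) (n : ℤ) : ∃ n' k : ℤ, n = n' + 2 * s * k ∧ |n'| ≤ s := by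
  refine ⟨(n + s) % (2 * s) - s, (n + s) / (2 * s), ?_, ?_⟩
  · have := Int.emod_add_mul_ediv (n + s) (2 * s); linarith
  · have h1 := Int.emod_nonneg (n + s) (by omega : 2 * s ≠ 0)
    have h2 := Int.emod_lt_of_pos (n + s) (by omega : 0 < 2 * s)
    rw [abs_le]; omega

lemma step_down_pos {a : ℤ} (ha : 3 ≤ a) {s : ℤ} (hs : 0 < s) (r q : ℤ)
    (h : px a s ∣ py a r - py a q) : 2 * s ∣ r - q ∨ 2 * s ∣ r + q := by
  have ha2 : 2 ≤ a := by omega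
  obtain ⟨r', k, rfl, hr⟩ := small_rep hs r
  obtain ⟨q', l, rfl, hq⟩ := small_rep hs q
  have hbound : ∀ t : ℤ, |t| ≤ s → |py a t| ≤ py a s := by
    intro t ht
    rw [abs_le] at ht ⊢
    rw [← py_neg]
    exact ⟨(py_strictMono ha2).monotone ht.1, (py_strictMono ha2).monotone ht.2⟩
  have hlt := px_gt ha hs
  have hR := abs_le.1 (hbound r' hr)
  have hQ := abs_le.1 (hbound q' hq)
  have key : px a s ∣ py a r' - py a q' ∨ px a s ∣ py a r' + py a q' := by
    rcases px_dvd_shift4 a s r' k with h1 | h1 <;> rcases px_dvd_shift4 a s q' l with h2 | h2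
    · left; exact dcong (dvd_add (dvd_sub h h1) h2) (by ring)
    · right; exact dcong (dvd_add (dvd_sub h h1) h2) (by ring)
    · right; exact dcong (dvd_sub (dvd_sub h1 h) h2) (by ring)
    · left; exact dcong (dvd_sub (dvd_sub h1 h) h2) (by ring)
  rcases key with h1 | h1
  · have h0 := Int.eq_zero_of_abs_lt_dvd h1 (by rw [abs_lt]; omega)
    have : r' = q' := (py_strictMono ha2).injective (by omega)
    left; subst this; exact ⟨k - l, by ring⟩
  · have h0 := Int.eq_zero_of_abs_lt_dvd h1 (by rw [abs_lt]; omega)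
    have : r' = -q' := (py_strictMono ha2).injective (by rw [py_neg]; omega)
    right; subst this; exact ⟨k + l, by ring⟩

lemma step_down {a : ℤ} (ha : 3 ≤ a) {s : ℤ} (hs : s ≠ 0) (r q : ℤ)
    (h : px a s ∣ py a r - py a q) : 2 * s ∣ r - q ∨ 2 * s ∣ r + q := by
  rcases lt_or_gt_of_ne hs with h0 | h0
  · have := step_down_pos ha (s := -s) (by omega) r q (by rwa [px_neg])
    simpa [mul_neg, neg_dvd] using this
  · exact step_down_pos ha h0 r q h

/-- divisibility lemma for powers of two -/
lemma pow_two_dvd (a : ℤ) (n : ℕ) : (4 * a - 5) ∣ 3 * 2 ^ n * py a n - 2 * (4 ^ n - 1) := by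
  have key : ∀ n : ℕ, (4 * a - 5) ∣ 3 * 2 ^ n * py a n - 2 * (4 ^ n - 1) ∧
      (4 * a - 5) ∣ 3 * 2 ^ (n+1) * py a (n+1) - 2 * (4 ^ (n+1) - 1) := by
    intro n
    induction n with
    | zero => simp [py_zero, py_one]
    | succ k ih =>
      refine ⟨by push_cast; exact ih.2, ?_⟩
      push_cast
      rw [show (k : ℤ) + 1 + 1 = k + 2 by ring, py_two]
      have := ((ih.2.mul_left 5).sub (ih.1.mul_left 4)).add
        (Dvd.intro (3 * 2 ^ (k + 1) * py a (k + 1)) rfl : (4 * a - 5) ∣ _)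
      exact dcong this (by ring)
  exact (key n).1

end UP

namespace UP

def dD (a C : ℤ) : ℤ := (a ^ 2 - 1) * C ^ 2 + 1
def dE (a C x : ℤ) : ℤ := 2 * C ^ 2 * dD a C * x
def dF (a C x : ℤ) : ℤ := (a ^ 2 - 1) * dE a C x ^ 2 + 1
def dG (a C x : ℤ) : ℤ := a + dF a C x * (1 - a + 2 * C ^ 2 * dD a C)
def dH (a b C x y : ℤ) : ℤ := C + dF a C x * (b - C + 2 * C * y)
def dI (a b C x y : ℤ) : ℤ := (dG a C x ^ 2 - 1) * dH a b C x y ^ 2 + 1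
def dfi (a b C x y : ℤ) : ℤ := dD a C * dF a C x * dI a b C x y

lemma sq_of_coprime_mul {u v : ℤ} (hu : 0 < u) (hv : 0 < v) (hc : IsCoprime u v)
    (h : IsSquare (u * v)) : IsSquare u ∧ IsSquare v := by
  have key : ∀ u v : ℤ, 0 < u → IsCoprime u v → IsSquare (u * v) → IsSquare u := by
    rintro u v hu hc ⟨r, hr⟩
    obtain ⟨t, ht | ht⟩ := Int.sq_of_isCoprime hc (by rw [hr, sq])
    · exact ⟨t, by rw [ht, sq]⟩
    · nlinarith [sq_nonneg t]
  exact ⟨key u v hu hc h, key v u hv hc.symm (by rwa [mul_comm])⟩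

lemma dD_dvd_dE (a C x : ℤ) : dD a C ∣ dE a C x := ⟨2 * C ^ 2 * x, by unfold dE; ring⟩

lemma dF_cop (a C x : ℤ) {m : ℤ} (h : m ∣ dE a C x) : m ∣ dF a C x - 1 := by
  obtain ⟨t, ht⟩ := h
  exact ⟨(a ^ 2 - 1) * m * t ^ 2, by unfold dF; rw [ht]; ring⟩

lemma dG_one (a C x : ℤ) {m : ℤ} (h : m ∣ 2 * C ^ 2 * dD a C) : m ∣ dG a C x - 1 := by
  obtain ⟨u, hu⟩ := dF_cop a C x (m := m) (h.trans ⟨x, by unfold dE; ring⟩)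
  obtain ⟨t, ht⟩ := h
  have : dF a C x = 1 + m * u := by linarith
  refine ⟨t + u * (1 - a + 2 * C ^ 2 * dD a C), ?_⟩
  unfold dG
  rw [this, ht]; ring

lemma cop_of_dvd_sub_one {m u : ℤ} (h : m ∣ u - 1) : IsCoprime m u := by
  obtain ⟨t, ht⟩ := h
  exact ⟨-t, 1, by linarith⟩

lemma dD_pos {a C : ℤ} (ha : 2 ≤ a) : 0 < dD a C := by
  have : 0 < a ^ 2 - 1 := by nlinarith
  unfold dD; positivity

lemma dF_pos {a C x : ℤ} (ha : 2 ≤ a) : 0 < dF a C x := by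
  have : 0 < a ^ 2 - 1 := by nlinarith
  unfold dF; positivity

lemma dG_ge {a C x : ℤ} (ha : 2 ≤ a) (hC : C ≠ 0) : 2 ≤ dG a C x := by
  have h1 := dF_pos (C := C) (x := x) ha
  have h2 : 1 ≤ C ^ 2 := by have : 0 < C ^ 2 := by positivity
                            omega
  have h3 : a ≤ dD a C := by
    have h5 : 0 ≤ a ^ 2 - 1 := by nlinarith
    unfold dD; nlinarith [mul_le_mul_of_nonneg_left h2 h5]
  have h4 : 0 ≤ 1 - a + 2 * C ^ 2 * dD a C := by nlinarith
  unfold dG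
  nlinarith [mul_nonneg h1.le h4]

lemma dfi_back {a b C x y h : ℤ} (ha : 3 ≤ a) (hb : 0 < b) (h2b : 2 * b < a - 1) (hx : x ≠ 0)
    (hC : C = b + (a - 1) * h) (hsq : IsSquare (dfi a b C x y)) : C = py a b := by
  have ha2 : 2 ≤ a := by omega
  have hbC : b ≤ |C| := by
    rcases le_or_gt 0 h with h0 | h0
    · have : b ≤ C := by nlinarith
      exact this.trans (le_abs_self _)
    · have : b ≤ -C := by nlinarith
      exact this.trans (neg_le_abs _)
  have hC0 : C ≠ 0 := by
    intro h0; rw [h0, abs_zero] at hbC; omega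
  have hD := dD_pos (C := C) ha2
  have hF := dF_pos (C := C) (x := x) ha2
  have hG := dG_ge (x := x) ha2 hC0
  have hI : 0 < dI a b C x y := by
    have : 0 < dG a C x ^ 2 - 1 := by nlinarith
    unfold dI; positivity
  have cDF : IsCoprime (dD a C) (dF a C x) := cop_of_dvd_sub_one (dF_cop a C x (dD_dvd_dE a C x))
  have hG1 : dD a C ∣ dG a C x - 1 := dG_one a C x ⟨2 * C ^ 2, by ring⟩
  have cDI : IsCoprime (dD a C) (dI a b C x y) := by
    apply cop_of_dvd_sub_one
    obtain ⟨t, ht⟩ := hG1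
    refine ⟨t * (dG a C x + 1) * dH a b C x y ^ 2, ?_⟩
    unfold dI
    linear_combination (dG a C x + 1) * dH a b C x y ^ 2 * ht
  have cFI : IsCoprime (dF a C x) (dI a b C x y) := by
    have : ∃ t, dI a b C x y = dD a C + dF a C x * t := by
      refine ⟨((1 - a + 2 * C ^ 2 * dD a C) * (dG a C x + a)) * dH a b C x y ^ 2
        + (a ^ 2 - 1) * ((b - C + 2 * C * y) * (dH a b C x y + C)), ?_⟩
      have e1 : dG a C x - a = dF a C x * (1 - a + 2 * C ^ 2 * dD a C) := by unfold dG; ring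
      have e2 : dH a b C x y - C = dF a C x * (b - C + 2 * C * y) := by unfold dH; ring
      have e3 : dD a C = (a ^ 2 - 1) * C ^ 2 + 1 := rfl
      unfold dI
      linear_combination (dG a C x + a) * dH a b C x y ^ 2 * e1
        + (a ^ 2 - 1) * (dH a b C x y + C) * e2 - e3
    obtain ⟨t, ht⟩ := this
    rw [ht]
    exact IsCoprime.add_mul_left_right cDF.symm t
  obtain ⟨hDF, hIs⟩ := sq_of_coprime_mul (mul_pos hD hF) hI (IsCoprime.mul_left cDI cFI) hsq
  obtain ⟨hDs, hFs⟩ := sq_of_coprime_mul hD hF cDF hDF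
  obtain ⟨q, hq⟩ := eq_py_of_sq ha2 hDs
  obtain ⟨s, hs⟩ := eq_py_of_sq ha2 hFs
  obtain ⟨r, hr⟩ := eq_py_of_sq hG hIs
  have hE0 : dE a C x ≠ 0 := by
    unfold dE; positivity
  have hs0 : s ≠ 0 := by
    rintro rfl; rw [py_zero] at hs; exact hE0 hs
  have hCs : C ∣ s := by
    rw [hq]
    apply dvd_of_sq_dvd_py ha2
    rw [← hq, ← hs]
    exact ⟨2 * dD a C * x, by unfold dE; ring⟩
  have hFx : dF a C x = px a s ^ 2 := by
    rw [← sq_eq_px, ← hs]; rfl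
  have hrb : 2 * C ∣ r - b := by
    have h1 : 2 * C ∣ dG a C x - 1 := dG_one a C x ⟨C * dD a C, by ring⟩
    have h2 := (py_modEq_self h1 r).dvd
    rw [← hr] at h2
    obtain ⟨u, hu⟩ := dF_cop a C x (m := 2 * C) ⟨C * dD a C * x, by unfold dE; ring⟩
    have hu' : dF a C x = 1 + 2 * C * u := by linarith
    have h3 : 2 * C ∣ dH a b C x y - b := by
      refine ⟨y + u * (b - C + 2 * C * y), ?_⟩
      unfold dH; rw [hu']; ring
    exact dcong (dvd_add h2 h3) (by ring)
  have hrq : px a s ∣ py a r - py a q := by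
    have h1 : dF a C x ∣ py (dG a C x) r - py a r := by
      apply (py_congr (Int.modEq_iff_dvd.2 _) r).dvd
      exact ⟨1 - a + 2 * C ^ 2 * dD a C, by unfold dG; ring⟩
    have h2 : dF a C x ∣ dH a b C x y - C := ⟨b - C + 2 * C * y, by unfold dH; ring⟩
    rw [← hr] at h1
    rw [← hq]
    have h3 : dF a C x ∣ py a r - C := dcong (dvd_sub h2 h1) (by ring)
    exact (Dvd.intro (px a s) (by rw [hFx, sq])).trans h3
  have h2C : 2 * C ∣ 2 * s := mul_dvd_mul_left 2 hCs
  have hqC : |q| ≤ |C| := by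
    have := abs_le_abs_py ha2 q
    rwa [← hq] at this
  have hqb : q = b ∨ q = -b := by
    have key : 2 * C ∣ b - q ∨ 2 * C ∣ b + q := by
      rcases step_down ha hs0 r q hrq with h1 | h1
      · left; exact dcong (dvd_sub (h2C.trans h1) hrb) (by ring)
      · right; exact dcong (dvd_sub (h2C.trans h1) hrb) (by ring)
    have hA := abs_le.1 hqC
    have gen : ∀ t : ℤ, |t| ≤ |C| → 2 * C ∣ b - t → t = b ∨ t = -b := by
      intro t ht hd
      have ht' := abs_le.1 ht
      by_cases hlt : |b - t| < 2 * |C|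
      · left
        have := Int.eq_zero_of_abs_lt_dvd (m := 2 * |C|) (x := b - t)
          (by rw [show 2 * |C| = |2 * C| by rw [abs_mul]; simp]; exact (abs_dvd _ _).2 hd) hlt
        omega
      · right
        rw [not_lt, le_abs] at hlt
        omega
    rcases key with h1 | h1
    · exact gen q hqC h1
    · rcases gen (-q) (by rwa [abs_neg]) (by simpa using h1) with h2 | h2 <;> omega
  rcases hqb with rfl | rfl
  · exact hq
  · exfalso
    have h1 := (py_modEq_self (dvd_refl (a - 1)) (-b)).dvd
    rw [← hq] at h1
    have h2 : a - 1 ∣ 2 * b := by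
      obtain ⟨t, ht⟩ := h1
      exact ⟨-t - h, by linear_combination -ht - hC⟩
    have := Int.le_of_dvd (by omega) h2
    omega

lemma dfi_forward {a b : ℤ} (ha : 2 ≤ a) (hb : 0 < b) :
    ∃ x y : ℤ, x ≠ 0 ∧ IsSquare (dfi a b (py a b) x y) := by
  set C := py a b with hCdef
  have hC : 0 < C := py_pos ha hb
  have hD := dD_pos (C := C) ha
  obtain ⟨x, hx, hsq⟩ := exists_mult ha (m := 2 * C ^ 2 * dD a C) (by positivity)
  have hFs : IsSquare (dF a C x) := hsq
  have h1 : dF a C x ∣ py (dG a C x) b - C := by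
    apply (py_congr (Int.modEq_iff_dvd.2 _) b).dvd
    exact ⟨1 - a + 2 * C ^ 2 * dD a C, by unfold dG; ring⟩
  obtain ⟨t, ht⟩ := h1
  have h2 : 2 * C ∣ dG a C x - 1 := dG_one a C x ⟨C * dD a C, by ring⟩
  have h3 := (py_modEq_self h2 b).dvd
  obtain ⟨u, hu⟩ := dF_cop a C x (m := 2 * C) ⟨C * dD a C * x, by unfold dE; ring⟩
  have h4 : 2 * C ∣ t - (b - C) := by
    obtain ⟨v, hv⟩ := h3
    refine ⟨-v - u * t, ?_⟩
    linear_combination -ht - hv - t * hu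
  obtain ⟨y, hy⟩ := h4
  refine ⟨x, y, hx, ?_⟩
  have hH : dH a b C x y = py (dG a C x) b := by
    unfold dH
    linear_combination -ht - dF a C x * hy
  unfold dfi
  refine IsSquare.mul (IsSquare.mul ?_ hFs) ?_
  · exact ⟨px a b, by rw [dD, sq_eq_px, sq]⟩
  · exact ⟨px (dG a C x) b, by rw [dI, hH, sq_eq_px, sq]⟩

end UP

namespace UP
open Finset

def Zs (n : ℕ) (V : ℤ) : ℤ := ∑ i ∈ range (n + 1), ((2 * n).choose (n + i) : ℤ) * V ^ i

def bW (q w : ℤ) : ℤ := 2 * q ^ 2 * w ^ 2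
def bV (Y W : ℤ) : ℤ := 4 * W * Y
def ba (X Y l V : ℤ) : ℤ := (l ^ 2 + 1) * X * Y * (V + 1)
def bb (X Y l V : ℤ) : ℤ := 2 * (l ^ 2 + 1) ^ 2 * X ^ 2 * Y ^ 2 * V

lemma Zs_split (n : ℕ) (V : ℤ) :
    (V + 1) ^ (2 * n) = V ^ n * Zs n V + ∑ j ∈ range n, ((2 * n).choose j : ℤ) * V ^ j := by
  rw [add_pow, show 2 * n + 1 = n + (n + 1) by ring, sum_range_add, add_comm, Zs, mul_sum]
  congr 1
  · apply sum_congr rfl; intros; rw [pow_add, one_pow]; ring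
  · apply sum_congr rfl; intros; rw [one_pow]; ring

lemma Zs_rem {n : ℕ} {V : ℤ} (hV : 1 ≤ V) :
    V * ∑ j ∈ range n, ((2 * n).choose j : ℤ) * V ^ j ≤ 4 ^ n * V ^ n := by
  have h1 : (4 : ℤ) ^ n = ∑ j ∈ range (2 * n + 1), ((2 * n).choose j : ℤ) := by
    have := Nat.sum_range_choose (2 * n)
    rw [← Nat.cast_sum, this, pow_mul]; norm_num
  rw [h1, sum_mul, mul_sum]
  calc _ ≤ ∑ j ∈ range n, ((2 * n).choose j : ℤ) * V ^ n := by
        apply sum_le_sum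
        intro j hj
        have : V ^ (j + 1) ≤ V ^ n := pow_le_pow_right₀ hV (by simpa using hj)
        calc V * (((2 * n).choose j : ℤ) * V ^ j) = ((2 * n).choose j : ℤ) * V ^ (j + 1) := by ring
          _ ≤ _ := by gcongr
    _ ≤ _ := by
        apply sum_le_sum_of_subset_of_nonneg
        · intro j; simp only [mem_range]; omega
        · intros; positivity

lemma Zs_dvd {n : ℕ} {V Y : ℤ} (h : Y ∣ V) : Y ∣ Zs n V ↔ Y ∣ ((2 * n).choose n : ℤ) := by
  rw [Zs, sum_range_succ']
  simp only [pow_zero, mul_one, add_zero]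
  apply dvd_add_right
  apply dvd_sum
  intro i _
  rw [pow_succ]
  exact (h.mul_left _).mul_left _

lemma bern {A : ℤ} (hA : 1 ≤ A) (n : ℕ) : (A - n) * A ^ n ≤ A * (A - 1) ^ n := by
  induction n with
  | zero => simp
  | succ k ih =>
    have h1 : (A - 1) * ((A - k) * A ^ k) ≤ (A - 1) * (A * (A - 1) ^ k) :=
      mul_le_mul_of_nonneg_left ih (by omega)
    have h2 : (0 : ℤ) ≤ k * A ^ k := by positivity
    push_cast
    rw [pow_succ, pow_succ]
    nlinarith

set_option maxHeartbeats 1000000 in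
lemma ratio {n : ℕ} (hn : 1 ≤ n) {Y l Z V C J : ℤ} (hY : 1 ≤ Y) (hl : 1 ≤ l)
    (hV : V = 8 * 4 ^ n * Y) (hZ : Z = Zs n V) (hZl : Z ≤ 3 * l * Y)
    (hC : C = py (ba n Y l V) (2 * n + 1)) (hJ : J = py (bb n Y l V) (n + 1)) :
    4 * Y * (C - Z * J) ≤ J ∧ 4 * Y * (Z * J - C) ≤ J := by
  have h4 : (4 : ℤ) ≤ 4 ^ n := by
    calc (4 : ℤ) = 4 ^ 1 := by norm_num
      _ ≤ 4 ^ n := pow_le_pow_right₀ (by norm_num) hn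
  have hV32 : 32 * Y ≤ V := by rw [hV]; nlinarith only [h4, hY]
  have hV1 : 32 ≤ V := by omega
  have hX : (1 : ℤ) ≤ n := by exact_mod_cast hn
  have hl2 : 2 * l ≤ l ^ 2 + 1 := by nlinarith only [sq_nonneg (l - 1)]
  have hXY : 1 ≤ (n : ℤ) * Y := by nlinarith only [hX, hY]
  set U : ℤ := 2 * (l ^ 2 + 1) * n * Y with hU
  have hUl : 4 * l * n * Y ≤ U := by
    have := mul_le_mul_of_nonneg_right hl2 (show 0 ≤ (n : ℤ) * Y by omega)
    rw [hU]; linarith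
  have hU4 : 4 ≤ U := by
    have := mul_le_mul hl hXY (by norm_num) (by omega)
    linarith
  set A : ℤ := U * (V + 1) with hA
  set Q : ℤ := U ^ 2 * V with hQ
  have e1 : 2 * ba n Y l V = A := by rw [hA, hU, ba]; ring
  have e2 : 2 * bb n Y l V = Q := by rw [hQ, hU, bb]; ring
  have hA4 : 4 * 33 ≤ A := by
    have := mul_le_mul hU4 (show 33 ≤ V + 1 by omega) (by norm_num) (by omega)
    rw [hA]; linarith
  have hQ4 : 16 * 32 ≤ Q := by
    have := mul_le_mul (pow_le_pow_left₀ (by norm_num) hU4 2) hV1 (by norm_num) (by positivity)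
    rw [hQ]; linarith
  have bC := (py_bounds (show 2 ≤ ba n Y l V by omega) (2 * n)).2.2
  have bJ := (py_bounds (show 2 ≤ bb n Y l V by omega) n).2.2
  push_cast at bC bJ
  rw [← hC, e1] at bC
  rw [← hJ, e2] at bJ
  have beC := (bern (show 1 ≤ A by omega) (2 * n)).trans
    (mul_le_mul_of_nonneg_left bC.1 (by omega))
  have beJ := (bern (show 1 ≤ Q by omega) n).trans
    (mul_le_mul_of_nonneg_left bJ.1 (by omega))
  have hJpos : 0 < J := lt_of_lt_of_le (pow_pos (by omega) _) bJ.1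
  have hJQ : Q ^ n = U ^ (2 * n) * V ^ n := by rw [hQ, mul_pow, ← pow_mul]
  have hsplit := Zs_split n V
  have hrem := Zs_rem (n := n) (show 1 ≤ V by omega)
  have hr0 : 0 ≤ ∑ j ∈ range n, ((2 * n).choose j : ℤ) * V ^ j := by positivity
  set r := ∑ j ∈ range n, ((2 * n).choose j : ℤ) * V ^ j
  rw [← hZ] at hsplit
  have hCA : A ^ (2 * n) = U ^ (2 * n) * (V ^ n * Z + r) := by rw [hA, mul_pow, hsplit]
  have hr8 : 8 * Y * r ≤ V ^ n := by
    have : 4 ^ n * (8 * Y * r) ≤ 4 ^ n * V ^ n := by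
      calc _ = V * r := by rw [hV]; ring
        _ ≤ _ := hrem
    exact le_of_mul_le_mul_left this (by positivity)
  have hU2 : 0 ≤ U ^ (2 * n) := by positivity
  have hJQpos : 0 ≤ Q ^ n := by positivity
  have hZ0 : 0 ≤ Z := by rw [hZ, Zs]; positivity
  push_cast at beC
  constructor
  · have h1 : 8 * Y * C ≤ (8 * Y * Z + 1) * Q ^ n := by
      calc 8 * Y * C ≤ 8 * Y * A ^ (2 * n) := mul_le_mul_of_nonneg_left bC.2 (by omega)
        _ = U ^ (2 * n) * (8 * Y * Z * V ^ n + 8 * Y * r) := by rw [hCA]; ring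
        _ ≤ U ^ (2 * n) * (8 * Y * Z * V ^ n + V ^ n) := by gcongr
        _ = _ := by rw [hJQ]; ring
    have h2 : (8 * Y * Z + 2) * n ≤ Q := by
      have t1 : 8 * Y * Z + 2 ≤ 26 * (l * Y) ^ 2 := by
        have : 1 ≤ l * Y := by nlinarith only [hl, hY]
        have t5 : 1 ≤ (l * Y) ^ 2 := one_le_pow₀ this
        have t6 := mul_le_mul_of_nonneg_left hZl (show 0 ≤ 8 * Y by omega)
        have t7 : l * Y ^ 2 ≤ l ^ 2 * Y ^ 2 := by
          apply mul_le_mul_of_nonneg_right _ (sq_nonneg Y)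
          nlinarith only [hl]
        linarith
      have t2 : (4 * l * n * Y) ^ 2 ≤ U ^ 2 := by gcongr
      have t3 : (n : ℤ) ≤ n ^ 2 := by nlinarith only [hX]
      calc (8 * Y * Z + 2) * n ≤ 26 * (l * Y) ^ 2 * n ^ 2 := by gcongr
        _ ≤ (4 * l * n * Y) ^ 2 * V := by
          have := mul_le_mul_of_nonneg_right (show 26 ≤ 16 * V by omega) (sq_nonneg (l * Y * n))
          linarith
        _ ≤ Q := by rw [hQ]; gcongr
    have hQn' : 0 < Q - n := by
      have := mul_nonneg (mul_nonneg (show (0:ℤ) ≤ Y by omega) hZ0) (show (0:ℤ) ≤ n by omega)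
      linarith
    have hQn := hQn'.le
    have h3 : (Q - n) * (8 * Y * C) ≤ (Q - n) * ((8 * Y * Z + 2) * J) := by
      calc (Q - n) * (8 * Y * C) ≤ (Q - n) * ((8 * Y * Z + 1) * Q ^ n) := by gcongr
        _ = (8 * Y * Z + 1) * ((Q - n) * Q ^ n) := by ring
        _ ≤ (8 * Y * Z + 1) * (Q * J) := by gcongr
        _ ≤ _ := by
          have := mul_le_mul_of_nonneg_right h2 hJpos.le
          linarith
    have h4 := le_of_mul_le_mul_left h3 hQn'
    linarith
  · have h0 : 8 * n * Y * Z ≤ A := by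
      calc 8 * n * Y * Z ≤ 8 * n * Y * (3 * l * Y) := by gcongr
        _ = (n * Y * l) * (24 * Y) := by ring
        _ ≤ (4 * l * n * Y) * (V + 1) := by
          have := mul_le_mul_of_nonneg_left (show 24 * Y ≤ 4 * (V + 1) by omega)
            (mul_nonneg (show (0:ℤ) ≤ n * Y by omega) (show 0 ≤ l by omega))
          linarith
        _ ≤ A := by rw [hA]; gcongr
    have hA2 : 0 ≤ A - 2 * n := by
      have : (4 * 1 * n * 1) ≤ 4 * l * n * Y := by gcongr
      have := mul_le_mul_of_nonneg_left (show 1 ≤ V + 1 by omega) (show 0 ≤ U by omega)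
      rw [hA]; linarith
    have h1 : (A - 2 * n) * (Z * J) ≤ A * C := by
      calc (A - 2 * n) * (Z * J) ≤ (A - 2 * n) * (Z * Q ^ n) := by gcongr; exact bJ.2
        _ ≤ (A - 2 * n) * A ^ (2 * n) := by
          apply mul_le_mul_of_nonneg_left _ hA2
          rw [hJQ, hCA]
          have := mul_nonneg hU2 hr0
          linarith
        _ ≤ _ := beC
    have h2 : A * (4 * Y * (Z * J - C)) ≤ A * J := by
      have := mul_le_mul_of_nonneg_right h0 hJpos.le
      have := mul_le_mul_of_nonneg_left h1 (show 0 ≤ 4 * Y by omega)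
      linarith
    exact le_of_mul_le_mul_left h2 (by omega)

end UP

namespace UP
open Finset

/-- The Pell block of conditions. -/
def Blk (n : ℕ) (Y q w l h k x y : ℤ) : Prop :=
  ∀ W V a b C J : ℤ, W = bW q w → V = bV Y W → a = ba n Y l V → b = bb n Y l V →
    C = 2 * n + 1 + (a - 1) * h → J = n + 1 + (b - 1) * k →
    IsSquare (dfi a (2 * n + 1) C x y) ∧ IsSquare ((b ^ 2 - 1) * J ^ 2 + 1) ∧
    4 * a - 5 ∣ 3 * W * C - 2 * (W ^ 2 - 1)

lemma abs_two_lt {u J : ℤ} (h : 4 * u ^ 2 < J ^ 2) : 2 * |u| < |J| := by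
  have : (2 * |u|) ^ 2 < |J| ^ 2 := by rw [mul_pow, sq_abs, sq_abs]; linarith
  exact lt_of_pow_lt_pow_left₀ 2 (abs_nonneg _) this

lemma J_index {n : ℕ} (hn : 1 ≤ n) {Y l V a b C J k : ℤ} (hY : 256 ≤ Y) (hl : l ≠ 0)
    (hV : 32 ≤ V) (ha : a = ba n Y l V) (hb : b = bb n Y l V) (hC : C = py a (2 * n + 1))
    (hJ : J = n + 1 + (b - 1) * k) (hsq : IsSquare ((b ^ 2 - 1) * J ^ 2 + 1))
    (hR : 4 * (C - l * J * Y) ^ 2 < J ^ 2) : J = py b (n + 1) := by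
  have hX : (1 : ℤ) ≤ n := by exact_mod_cast hn
  have hXY : 256 * (n : ℤ) ≤ n * Y := by nlinarith only [hX, hY]
  have hl1 : 1 ≤ l ^ 2 := by have : 0 < l ^ 2 := by positivity
                             omega
  have hm : 2 * ((n : ℤ) * Y) ≤ (l ^ 2 + 1) * (n * Y) := by nlinarith only [hXY, hl1, hX]
  set u : ℤ := (l ^ 2 + 1) * (n * Y) with hu
  have eb : b = 2 * u ^ 2 * V := by rw [hb, bb, hu]; ring
  have ea : a = u * (V + 1) := by rw [ha, ba, hu]; ring
  have hu1 : 512 * (n : ℤ) ≤ u := by omega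
  have huV : u * 1 ≤ u * V := mul_le_mul_of_nonneg_left (by omega) (by omega)
  have hab : 2 * a ≤ 2 * b - 1 := by
    have : 512 * (u * V) ≤ u * (u * V) := mul_le_mul_of_nonneg_right (by omega) (by omega)
    rw [ea, eb]; nlinarith only [this, huV, hu1, hX]
  have ha2 : 512 * (n : ℤ) ≤ a := by rw [ea]; linarith
  have hb2 : 2 ≤ b := by omega
  have ha3 : 2 ≤ a := by omega
  have bC := (py_bounds ha3 (2 * n)).2.2
  push_cast at bC
  rw [← hC] at bC
  have hCpos : 0 < C := by rw [hC]; exact py_pos ha3 (by omega)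
  have h2 := abs_two_lt hR
  obtain ⟨r, hr⟩ := eq_py_of_sq hb2 hsq
  have hmod := (py_modEq_self (dvd_refl (b - 1)) r).dvd
  rw [← hr, hJ] at hmod
  have hmod2 : b - 1 ∣ r - (n + 1) := dcong (dvd_add hmod (Dvd.intro k rfl)) (by ring)
  by_contra hne
  have hrn : r ≠ n + 1 := by rintro rfl; exact hne hr
  have hrabs : (2 * n + 2 : ℤ) ≤ |r| := by
    have h3 := Int.le_of_dvd (abs_pos.2 (sub_ne_zero.2 hrn)) ((dvd_abs _ _).2 hmod2)
    have h4 : |r - (n + 1)| ≤ |r| + |(n + 1 : ℤ)| := abs_sub _ _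
    rw [abs_of_pos (show (0 : ℤ) < n + 1 by omega)] at h4
    omega
  have hJabs : py b (2 * n + 2) ≤ |J| := by
    have : |J| = py b |r| := by
      rcases abs_cases r with ⟨e, h0⟩ | ⟨e, h0⟩
      · rw [e, ← hr, abs_of_nonneg]
        rw [hr, ← py_zero b]; exact (py_strictMono hb2).monotone h0
      · rw [e, py_neg, ← hr, abs_of_neg]
        rw [hr, ← py_zero b]; exact (py_strictMono hb2) h0
    rw [this]
    exact (py_strictMono hb2).monotone hrabs
  have bJ := (py_bounds hb2 (2 * n + 1)).2.2.1
  push_cast at bJ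
  rw [show (2 * n + 1 + 1 : ℤ) = 2 * n + 2 by ring] at bJ
  have h5 : 4 * C ≤ |J| := by
    calc 4 * C ≤ (2 * b - 1) * (2 * a) ^ (2 * n) := by
          apply mul_le_mul (by omega) bC.2 hCpos.le (by omega)
      _ ≤ (2 * b - 1) * (2 * b - 1) ^ (2 * n) := by
          apply mul_le_mul_of_nonneg_left _ (by omega)
          exact pow_le_pow_left₀ (by omega) hab _
      _ = (2 * b - 1) ^ (2 * n + 1) := by ring
      _ ≤ |J| := bJ.trans hJabs
  have h6 : |l * J * Y| ≤ |C| + |C - l * J * Y| := by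
    have := abs_sub C (C - l * J * Y)
    simpa using this
  rw [abs_of_pos hCpos, abs_mul, abs_mul, abs_of_pos (show 0 < Y by omega)] at h6
  have h7 : 1 ≤ |l| := Int.one_le_abs hl
  have h8 : |J| ≤ |l| * |J| := by nlinarith only [h7, abs_nonneg J]
  have h9 : 2 * (|l| * |J|) ≤ |l| * |J| * Y := by
    have : 0 ≤ |l| * |J| := by positivity
    nlinarith only [this, hY]
  omega

lemma bridge_back {n : ℕ} (hn : 1 ≤ n) {Y q w l h k x y : ℤ} (hY : 256 ≤ Y) (hq : q ≠ 0)
    (hl : l ≠ 0) (hx : x ≠ 0) (hblk : Blk n Y q w l h k x y)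
    {W V a b C J : ℤ} (hW : W = bW q w) (hV : V = bV Y W) (ha : a = ba n Y l V)
    (hb : b = bb n Y l V) (hC : C = 2 * n + 1 + (a - 1) * h) (hJ : J = n + 1 + (b - 1) * k)
    (hR : 4 * (C - l * J * Y) ^ 2 < J ^ 2) :
    (q * w) ^ 2 = 4 ^ n ∧ Y ∣ ((2 * n).choose n : ℤ) := by
  obtain ⟨hsq1, hsq2, hdvd⟩ := hblk W V a b C J hW hV ha hb hC hJ
  have hX : (1 : ℤ) ≤ n := by exact_mod_cast hn
  have hXY : 256 * (n : ℤ) ≤ n * Y := by nlinarith only [hX, hY]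
  have hl1 : 1 ≤ l ^ 2 := by have : 0 < l ^ 2 := by positivity
                             omega
  have hm : 2 * ((n : ℤ) * Y) ≤ (l ^ 2 + 1) * (n * Y) := by nlinarith only [hXY, hl1, hX]
  set u : ℤ := (l ^ 2 + 1) * (n * Y) with hu
  have ea : a = u * (V + 1) := by rw [ha, ba, hu]; ring
  have hw : w ≠ 0 := by
    rintro rfl
    have hW0 : W = 0 := by rw [hW, bW]; ring
    have hV0 : V = 0 := by rw [hV, hW0, bV]; ring
    rw [hW0] at hdvd
    have h1 : 4 * a - 5 ∣ 2 := dcong hdvd (by ring)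
    have := Int.le_of_dvd (by norm_num) h1
    rw [ea, hV0] at this
    omega
  have hW2 : 2 ≤ W := by
    have : 0 < q ^ 2 * w ^ 2 := by positivity
    rw [hW, bW]; linarith
  have hV32 : 32 ≤ V := by rw [hV, bV]; nlinarith only [hW2, hY]
  have huV : u * 33 ≤ u * (V + 1) := mul_le_mul_of_nonneg_left (by omega) (by omega)
  have ha2 : 512 * (n : ℤ) ≤ a := by rw [ea]; linarith
  have hCp : C = py a (2 * n + 1) := dfi_back (by omega) (by omega) (by omega) hx hC hsq1
  have hJp : J = py b (n + 1) := J_index hn hY hl hV32 ha hb hCp hJ hsq2 hR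
  have hb2 : 2 ≤ b := by
    have : 0 < u ^ 2 * V := by
      have : 0 < u := by omega
      positivity
    have : b = 2 * (u ^ 2 * V) := by rw [hb, bb, hu]; ring
    omega
  have hJpos : 0 < J := by rw [hJp]; exact py_pos hb2 (by omega)
  have hCpos : 0 < C := by rw [hCp]; exact py_pos (by omega) (by omega)
  have h2 := abs_two_lt hR
  rw [abs_of_pos hJpos] at h2
  have h2' : 2 * (C - l * J * Y) < J ∧ -J < 2 * (C - l * J * Y) := by
    have := le_abs_self (C - l * J * Y)
    have := neg_abs_le (C - l * J * Y)
    omega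
  have hlpos : 1 ≤ l := by
    by_contra hcon
    have : l ≤ -1 := by omega
    have h3 : l * (J * Y) ≤ -1 * (J * Y) :=
      mul_le_mul_of_nonneg_right this (mul_nonneg hJpos.le (by omega))
    have h4 : J * 1 ≤ J * Y := mul_le_mul_of_nonneg_left (by omega) hJpos.le
    linarith [h2'.1]
  have hlY : 1 ≤ l * Y := by nlinarith only [hlpos, hY]
  -- first comparison
  have hCle : 2 * C < 3 * (l * Y) * J := by
    have : 1 * J ≤ (l * Y) * J := mul_le_mul_of_nonneg_right hlY hJpos.le
    linarith [h2'.1]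
  set U : ℤ := 2 * u with hU
  have e1 : 2 * a = U * (V + 1) := by rw [ea]; ring
  have e2 : 2 * b = U ^ 2 * V := by rw [hb, bb, hU, hu]; ring
  have bC := (py_bounds (show 2 ≤ a by omega) (2 * n)).2.2
  have bJ := (py_bounds hb2 n).2.2
  push_cast at bC bJ
  rw [← hCp] at bC
  rw [← hJp] at bJ
  have be := (bern (show 1 ≤ 2 * a by omega) (2 * n)).trans
    (mul_le_mul_of_nonneg_left bC.1 (by omega))
  push_cast at be
  have hCA : (2 * a) ^ (2 * n) ≤ 2 * C := by
    have h3 : 0 < (2 * a) ^ (2 * n) := pow_pos (by omega) _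
    have h4 : a * (2 * a) ^ (2 * n) ≤ (2 * a - 2 * n) * (2 * a) ^ (2 * n) :=
      mul_le_mul_of_nonneg_right (by omega) h3.le
    have h5 : a * (2 * a) ^ (2 * n) ≤ a * (2 * C) := by linarith
    exact le_of_mul_le_mul_left h5 (by omega)
  have hUpos : 0 < U := by omega
  have hVp : (V + 1) ^ (2 * n) < 3 * (l * Y) * V ^ n := by
    have h3 : U ^ (2 * n) * (V + 1) ^ (2 * n) < U ^ (2 * n) * (3 * (l * Y) * V ^ n) := by
      calc U ^ (2 * n) * (V + 1) ^ (2 * n) = (2 * a) ^ (2 * n) := by rw [e1, mul_pow U]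
        _ < 3 * (l * Y) * J := by omega
        _ ≤ 3 * (l * Y) * (2 * b) ^ n := mul_le_mul_of_nonneg_left bJ.2 (by omega)
        _ = _ := by rw [e2, mul_pow (U ^ 2), ← pow_mul]; simp only [hU]; ring
    exact lt_of_mul_lt_mul_left h3 (by positivity)
  have hVn : 0 < V ^ n := by positivity
  have hVl : V ^ n < 3 * (l * Y) := by
    have h3 : V ^ n * V ^ n ≤ (V + 1) ^ (2 * n) := by
      rw [← pow_add, ← two_mul]; exact pow_le_pow_left₀ (by omega) (by omega) _
    exact lt_of_mul_lt_mul_right (h3.trans_lt hVp) hVn.le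
  -- W is a power of two
  have hWpow : W = 2 ^ (2 * n + 1) := by
    have d1 := pow_two_dvd a (2 * n + 1)
    push_cast at d1
    rw [← hCp] at d1
    have d2 : 4 * a - 5 ∣ 2 * (W - 2 ^ (2 * n + 1)) * (2 ^ (2 * n + 1) * W + 1) := by
      have h44 : (4 : ℤ) ^ (2 * n + 1) = 2 ^ (2 * n + 1) * 2 ^ (2 * n + 1) := by
        rw [← mul_pow]; norm_num
      rw [h44] at d1
      exact dcong (dvd_sub (d1.mul_left W) (hdvd.mul_left (2 ^ (2 * n + 1)))) (by ring)
    set t : ℤ := 2 ^ (2 * n + 1) with ht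
    have ht2 : 2 ≤ t := by
      calc (2 : ℤ) = 2 ^ 1 := by norm_num
        _ ≤ t := pow_le_pow_right₀ (by norm_num) (by omega)
    have hsmall : |2 * (W - t) * (t * W + 1)| < 4 * a - 5 := by
      have hWt : |W - t| ≤ W * t := by
        rw [abs_le]; constructor <;> nlinarith only [hW2, ht2]
      have hbd : |2 * (W - t) * (t * W + 1)| ≤ 4 * (W * t) ^ 2 := by
        have hWt1 : 1 ≤ W * t := by nlinarith only [hW2, ht2]
        rw [abs_mul, abs_mul, abs_of_pos (show (0:ℤ) < 2 by norm_num),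
          abs_of_pos (show 0 < t * W + 1 by linarith)]
        have := mul_le_mul hWt (show t * W + 1 ≤ 2 * (W * t) by linarith) (by linarith)
          (by linarith)
        linarith
      have h3 : V ^ (n + 1) < 3 * a := by
        have h31 : V ^ n * V < 3 * (l * Y) * V := mul_lt_mul_of_pos_right hVl (by omega)
        have h32 : l * Y ≤ u := by
          have : l ≤ l ^ 2 + 1 := by nlinarith only [hlpos]
          have h33 : l * Y ≤ (l ^ 2 + 1) * Y := mul_le_mul_of_nonneg_right this (by omega)
          have h34 : 1 * ((l ^ 2 + 1) * Y) ≤ n * ((l ^ 2 + 1) * Y) :=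
            mul_le_mul_of_nonneg_right hX (by positivity)
          rw [hu]; linarith
        have h35 : (l * Y) * V ≤ u * V := mul_le_mul_of_nonneg_right h32 (by omega)
        rw [pow_succ, ea]; linarith
      have h4 : W ^ 2 * (1024 : ℤ) ^ (n + 1) ≤ V ^ (n + 1) := by
        have : V = W * (4 * Y) := by rw [hV, bV]; ring
        rw [this, mul_pow]
        apply mul_le_mul
        · exact pow_le_pow_right₀ (by omega) (by omega)
        · exact pow_le_pow_left₀ (by norm_num) (by omega) _
        · positivity
        · positivity
      have h5 : 64 * t ^ 2 ≤ (1024 : ℤ) ^ (n + 1) := by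
        have : 64 * t ^ 2 = 256 * 16 ^ n * 1 := by
          rw [ht, ← pow_mul, show (2 * n + 1) * 2 = 4 * n + 2 by ring, pow_add, pow_mul]; norm_num; ring
        rw [this, pow_succ]
        have h16 : (16 : ℤ) ^ n ≤ 1024 ^ n := pow_le_pow_left₀ (by norm_num) (by norm_num) _
        have : (0:ℤ) < 16 ^ n := by positivity
        linarith
      have h6 : W ^ 2 * (64 * t ^ 2) ≤ W ^ 2 * (1024 : ℤ) ^ (n + 1) :=
        mul_le_mul_of_nonneg_left h5 (sq_nonneg _)
      have h7 : 1 ≤ (W * t) ^ 2 := one_le_pow₀ (by nlinarith only [hW2, ht2])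
      have h8 : 64 * (W * t) ^ 2 < 3 * a := by linarith
      linarith
    have h0 := Int.eq_zero_of_abs_lt_dvd d2 hsmall
    have h9 : t * W + 1 ≠ 0 := by nlinarith only [hW2, ht2]
    rcases mul_eq_zero.1 h0 with h0 | h0
    · linarith
    · exact absurd h0 h9
  have hV8 : V = 8 * 4 ^ n * Y := by
    rw [hV, bV, hWpow, pow_succ, pow_mul, show (2 : ℤ) ^ 2 = 4 by norm_num]; ring
  refine ⟨?_, ?_⟩
  · have : 2 * (q * w) ^ 2 = 2 * 4 ^ n := by
      have h3 : (2 : ℤ) ^ (2 * n + 1) = 2 * 4 ^ n := by rw [pow_succ, pow_mul]; norm_num; ring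
      rw [← h3, ← hWpow, hW, bW]; ring
    linarith
  · have hZ : Zs n V ≤ 3 * l * Y := by
      have h3 := Zs_split n V
      have h4 : 0 ≤ ∑ j ∈ range n, ((2 * n).choose j : ℤ) * V ^ j := by positivity
      have h5 : V ^ n * Zs n V < V ^ n * (3 * l * Y) := by linarith
      exact (lt_of_mul_lt_mul_left h5 hVn.le).le
    obtain ⟨r1, r2⟩ := ratio hn (show 1 ≤ Y by omega) hlpos hV8 rfl hZ (ha ▸ hCp) (hb ▸ hJp)
    have hZY : l * Y = Zs n V := by
      set Z := Zs n V
      have q1 : 4 * (C - Z * J) ≤ J := by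
        rcases le_or_gt (C - Z * J) 0 with h0 | h0
        · linarith
        · nlinarith only [r1, h0, hY]
      have q2 : 4 * (Z * J - C) ≤ J := by
        rcases le_or_gt (Z * J - C) 0 with h0 | h0
        · linarith
        · nlinarith only [r2, h0, hY]
      have q3 : (l * Y - Z) * J < 1 * J := by linarith [h2'.2]
      have q4 : (-1) * J < (l * Y - Z) * J := by linarith [h2'.1]
      have := lt_of_mul_lt_mul_right q3 hJpos.le
      have := lt_of_mul_lt_mul_right q4 hJpos.le
      omega
    have hYV : Y ∣ V := ⟨4 * W, by rw [hV, bV]; ring⟩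
    rw [← Zs_dvd hYV, ← hZY]
    exact Dvd.intro_left l rfl

lemma bridge_forward {n : ℕ} (hn : 1 ≤ n) {Y q w : ℤ} (hY : 256 ≤ Y) (hqw : q * w = 2 ^ n)
    (hdv : Y ∣ ((2 * n).choose n : ℤ)) :
    ∃ l h k x y : ℤ, l ≠ 0 ∧ x ≠ 0 ∧ Blk n Y q w l h k x y ∧
    ∀ W V a b C J N : ℤ, W = bW q w → V = bV Y W → a = ba n Y l V → b = bb n Y l V →
      C = 2 * n + 1 + (a - 1) * h → J = n + 1 + (b - 1) * k → 0 ≤ N → N ≤ Y →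
      4 * N ^ 2 * (C - l * J * Y) ^ 2 < J ^ 2 := by
  have hX : (1 : ℤ) ≤ n := by exact_mod_cast hn
  obtain ⟨W, hW⟩ : ∃ W, W = bW q w := ⟨_, rfl⟩
  obtain ⟨V, hV⟩ : ∃ V, V = bV Y W := ⟨_, rfl⟩
  have hWpow : W = 2 ^ (2 * n + 1) := by
    rw [hW, bW, show 2 * q ^ 2 * w ^ 2 = 2 * (q * w) ^ 2 by ring, hqw]; ring
  have hV8 : V = 8 * 4 ^ n * Y := by
    rw [hV, bV, hWpow, pow_succ, pow_mul, show (2 : ℤ) ^ 2 = 4 by norm_num]; ring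
  have hVpos : 0 < V := by rw [hV8]; positivity
  have hYV : Y ∣ V := ⟨4 * W, by rw [hV, bV]; ring⟩
  obtain ⟨l, hl⟩ := (Zs_dvd hYV).2 hdv
  have hZpos : 0 < Zs n V := by
    unfold Zs
    apply sum_pos
    · intro i hi
      have : 0 < (2 * n).choose (n + i) := Nat.choose_pos (by simp at hi; omega)
      positivity
    · simp
  have hlpos : 1 ≤ l := by
    rw [hl] at hZpos
    have := pos_of_mul_pos_right hZpos (by omega)
    omega
  obtain ⟨a, ha⟩ : ∃ a, a = ba n Y l V := ⟨_, rfl⟩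
  obtain ⟨b, hb⟩ : ∃ b, b = bb n Y l V := ⟨_, rfl⟩
  have ha2 : 2 ≤ a := by
    have h1 : 0 < l ^ 2 * n * Y * (V + 1) := by positivity
    have h2 : 0 < (n * Y) * V := by positivity
    have h3 : 0 < (n : ℤ) * Y := by positivity
    rw [ha, ba]; linarith
  have hb2 : 2 ≤ b := by
    have h1 : 0 < (l ^ 2 + 1) ^ 2 * n ^ 2 * Y ^ 2 * V := by positivity
    rw [hb, bb]; linarith
  obtain ⟨h, hh⟩ := (py_modEq_self (dvd_refl (a - 1)) (2 * n + 1)).symm.dvd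
  obtain ⟨k, hk⟩ := (py_modEq_self (dvd_refl (b - 1)) (n + 1)).symm.dvd
  obtain ⟨x, y, hx, hdfi⟩ := dfi_forward ha2 (show (0 : ℤ) < 2 * n + 1 by omega)
  have eC : (2 * n + 1 : ℤ) + (a - 1) * h = py a (2 * n + 1) := by rw [← hh]; ring
  have eJ : (n + 1 : ℤ) + (b - 1) * k = py b (n + 1) := by rw [← hk]; ring
  refine ⟨l, h, k, x, y, by omega, hx, ?_, ?_⟩
  · rintro W' V' a' b' C' J' e1 e2 e3 e4 e5 e6
    rw [← hW] at e1; subst e1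
    rw [← hV] at e2; subst e2
    rw [← ha] at e3; subst e3
    rw [← hb] at e4; subst e4
    rw [eC] at e5
    rw [eJ] at e6
    refine ⟨by rw [e5]; exact hdfi, ⟨px b' (n + 1), by rw [e6, sq_eq_px, sq]⟩, ?_⟩
    have d1 := pow_two_dvd a' (2 * n + 1)
    push_cast at d1
    rw [← e5, ← hWpow] at d1
    have h44 : (4 : ℤ) ^ (2 * n + 1) = W' ^ 2 := by
      rw [hWpow, sq, ← mul_pow]; norm_num
    rwa [h44] at d1
  · rintro W' V' a' b' C' J' N e1 e2 e3 e4 e5 e6 hN hNY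
    rw [← hW] at e1; subst e1
    rw [← hV] at e2; subst e2
    rw [← ha] at e3; subst e3
    rw [← hb] at e4; subst e4
    rw [eC] at e5
    rw [eJ] at e6
    obtain ⟨r1, r2⟩ := ratio hn (show 1 ≤ Y by omega) hlpos hV8 rfl
      (by rw [hl]; nlinarith only [hlpos, hY]) (ha ▸ e5) (hb ▸ e6)
    have hJpos : 0 < J' := by rw [e6]; exact py_pos hb2 (by omega)
    have e7 : C' - l * J' * Y = C' - Zs n V' * J' := by rw [hl]; ring
    rw [e7]
    set d := C' - Zs n V' * J'
    have r2' : 4 * Y * (-d) ≤ J' := by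
      have : -d = Zs n V' * J' - C' := by simp only [d]; ring
      rw [this]; exact r2
    have h5 : |4 * Y * d| ≤ J' := by rw [abs_le]; constructor <;> linarith
    have h6 : (4 * Y * d) ^ 2 ≤ J' ^ 2 := by
      rw [← sq_abs]; exact pow_le_pow_left₀ (abs_nonneg _) h5 2
    have h7 : N ^ 2 ≤ Y ^ 2 := pow_le_pow_left₀ hN hNY 2
    have h8 : N ^ 2 * d ^ 2 ≤ Y ^ 2 * d ^ 2 := mul_le_mul_of_nonneg_right h7 (sq_nonneg d)
    have h9 : 0 < J' ^ 2 := by positivity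
    have h10 : 0 ≤ N ^ 2 * d ^ 2 := by positivity
    nlinarith only [h6, h8, h9, h10]

end UP

namespace UP
open Finset

/-- binary digit sum -/
def pc (n : ℕ) : ℕ := (Nat.digits 2 n).sum

lemma pc_zero : pc 0 = 0 := by simp [pc]

lemma pc_bit (n b : ℕ) (hb : b < 2) : pc (2 * n + b) = pc n + b := by
  rcases Nat.eq_zero_or_pos (2 * n + b) with h | h
  · obtain rfl : n = 0 := by omega
    obtain rfl : b = 0 := by omega
    simp [pc]
  · unfold pc
    rw [Nat.digits_def' (by norm_num) h, List.sum_cons]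
    have h1 : (2 * n + b) % 2 = b := by omega
    have h2 : (2 * n + b) / 2 = n := by omega
    rw [h1, h2, add_comm]

lemma pc_two_mul (n : ℕ) : pc (2 * n) = pc n := pc_bit n 0 (by norm_num)

lemma pc_succ_le (n : ℕ) : pc (n + 1) ≤ pc n + 1 := by
  induction n using Nat.strong_induction_on with
  | _ n ih =>
    obtain ⟨k, rfl | rfl⟩ := Nat.even_or_odd' n
    · rw [pc_bit k 1 (by norm_num), pc_two_mul]
    · have h1 := ih k (by omega)
      rw [show 2 * k + 1 + 1 = 2 * (k + 1) by ring, pc_two_mul, pc_bit k 1 (by norm_num)]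
      omega

lemma land_two (m n b c : ℕ) (hb : b < 2) (hc : c < 2) :
    (2 * m + b) &&& (2 * n + c) = 0 ↔ m &&& n = 0 ∧ (b = 0 ∨ c = 0) := by
  have h1 : ((2 * m + b) &&& (2 * n + c)) % 2 = b &&& c := by
    have := Nat.and_mod_two_pow (a := 2 * m + b) (b := 2 * n + c) (n := 1)
    rw [pow_one] at this
    rw [this, show (2 * m + b) % 2 = b by omega, show (2 * n + c) % 2 = c by omega]
  have h2 : ((2 * m + b) &&& (2 * n + c)) / 2 = m &&& n := by
    have := Nat.and_div_two_pow (a := 2 * m + b) (b := 2 * n + c) (n := 1)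
    rw [pow_one] at this
    rw [this, show (2 * m + b) / 2 = m by omega, show (2 * n + c) / 2 = n by omega]
  have h3 : b &&& c = 0 ↔ b = 0 ∨ c = 0 := by
    interval_cases b <;> interval_cases c <;> simp
  rw [← h3, ← h1, ← h2]
  omega

lemma pc_add_le (S T : ℕ) :
    pc (S + T) ≤ pc S + pc T ∧ (pc S + pc T ≤ pc (S + T) ↔ S &&& T = 0) := by
  induction S using Nat.strong_induction_on generalizing T with
  | _ S ih =>
    rcases Nat.eq_zero_or_pos S with rfl | hS
    · simp [pc_zero]
    obtain ⟨m, b, hb, rfl⟩ : ∃ m b, b < 2 ∧ S = 2 * m + b := ⟨S / 2, S % 2, by omega, by omega⟩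
    obtain ⟨n, c, hc, rfl⟩ : ∃ m b, b < 2 ∧ T = 2 * m + b := ⟨T / 2, T % 2, by omega, by omega⟩
    obtain ⟨h1, h2⟩ := ih m (by omega) n
    rw [land_two m n b c hb hc, pc_bit m b hb, pc_bit n c hc, ← h2]
    by_cases hbc : b + c < 2
    · rw [show 2 * m + b + (2 * n + c) = 2 * (m + n) + (b + c) by ring, pc_bit _ _ hbc]
      omega
    · rw [show 2 * m + b + (2 * n + c) = 2 * (m + n + 1) by omega, pc_two_mul]
      have := pc_succ_le (m + n)
      omega

lemma pc_block (m u v : ℕ) (hv : v < 2 ^ m) : pc (u * 2 ^ m + v) = pc u + pc v := by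
  induction m generalizing v with
  | zero => simp at hv; subst hv; simp [pc_zero]
  | succ k ih =>
    have h1 := ih (v / 2) (by rw [pow_succ] at hv; omega)
    have h2 : v = 2 * (v / 2) + v % 2 := by omega
    have h3 : u * 2 ^ (k + 1) + v = 2 * (u * 2 ^ k + v / 2) + v % 2 := by rw [pow_succ, ← mul_assoc]; omega
    have h4 : pc v = pc (v / 2) + v % 2 := by
      conv_lhs => rw [h2]
      exact pc_bit _ _ (by omega)
    rw [h3, pc_bit _ _ (by omega), h1, h4]; ring

lemma pc_compl (m v : ℕ) (hv : v < 2 ^ m) : pc (2 ^ m - 1 - v) + pc v = m := by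
  induction m generalizing v with
  | zero => simp at hv; subst hv; simp [pc_zero]
  | succ k ih =>
    rw [pow_succ] at hv ⊢
    have h1 := ih (v / 2) (by omega)
    have h2 : v = 2 * (v / 2) + v % 2 := by omega
    have h4 : pc v = pc (v / 2) + v % 2 := by
      conv_lhs => rw [h2]
      exact pc_bit _ _ (by omega)
    have h3 : 2 ^ k * 2 - 1 - v = 2 * (2 ^ k - 1 - v / 2) + (1 - v % 2) := by omega
    rw [h3, pc_bit _ _ (by omega), h4]; omega

lemma val_central (X : ℕ) : padicValNat 2 ((2 * X).choose X) = pc X := by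
  have := sub_one_mul_padicValNat_choose_eq_sub_sum_digits' (p := 2) (k := X) (n := X)
  rw [show X + X = 2 * X by ring] at this
  have h2 : (Nat.digits 2 (2 * X)).sum = (Nat.digits 2 X).sum := pc_two_mul X
  rw [h2] at this
  unfold pc
  omega

lemma central_dvd {m S T : ℕ} (hS : S < 2 ^ m) (hT : T < 2 ^ m) :
    (2 ^ m) ^ 2 ∣ (2 * ((2 ^ m - 1) * ((S + T + 1) * 2 ^ m + T + 1))).choose
      ((2 ^ m - 1) * ((S + T + 1) * 2 ^ m + T + 1)) ↔ S &&& T = 0 := by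
  have hX : (2 ^ m - 1) * ((S + T + 1) * 2 ^ m + T + 1)
      = ((S + T) * 2 ^ m + (2 ^ m - 1 - S)) * 2 ^ m + (2 ^ m - 1 - T) := by
    obtain ⟨c, hc⟩ : ∃ c, 2 ^ m = S + c + 1 := ⟨2 ^ m - 1 - S, by omega⟩
    obtain ⟨d, hd⟩ : ∃ d, 2 ^ m = T + d + 1 := ⟨2 ^ m - 1 - T, by omega⟩
    have e1 : 2 ^ m - 1 - S = c := by omega
    have e2 : 2 ^ m - 1 - T = d := by omega
    rw [e1, e2]
    obtain ⟨e, he⟩ : ∃ e, 2 ^ m = e + 1 := ⟨S + c, by omega⟩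
    have hc1 : e = S + c := by omega
    have hd1 : e = T + d := by omega
    rw [he]
    simp only [Nat.add_sub_cancel]
    zify at hc1 hd1 ⊢
    have hc' : (c : ℤ) = e - S := by linarith
    have hd' : (d : ℤ) = e - T := by linarith
    rw [hc', hd']; ring
  rw [hX]
  set X := ((S + T) * 2 ^ m + (2 ^ m - 1 - S)) * 2 ^ m + (2 ^ m - 1 - T) with hXd
  have hpc : pc X = pc (S + T) + pc (2 ^ m - 1 - S) + pc (2 ^ m - 1 - T) := by
    rw [hXd, pc_block _ _ _ (by omega), pc_block _ _ _ (by omega)]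
  have h1 := pc_compl m S hS
  have h2 := pc_compl m T hT
  have hne : (2 * X).choose X ≠ 0 := (Nat.choose_pos (by omega)).ne'
  rw [← pow_mul, padicValNat_dvd_iff_le hne, val_central, hpc, ← (pc_add_le S T).2]
  omega

lemma and_block {u g M K T : ℕ} (hg : g < 2 ^ u) (hM : M < 2 ^ u) :
    (g + K * 2 ^ u) &&& (M + T * 2 ^ u) = 0 ↔ g &&& M = 0 ∧ K &&& T = 0 := by
  have hp : 0 < 2 ^ u := by positivity
  have h1 : ((g + K * 2 ^ u) &&& (M + T * 2 ^ u)) % 2 ^ u = g &&& M := by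
    rw [Nat.and_mod_two_pow, Nat.add_mul_mod_self_right, Nat.add_mul_mod_self_right,
      Nat.mod_eq_of_lt hg, Nat.mod_eq_of_lt hM]
  have h2 : ((g + K * 2 ^ u) &&& (M + T * 2 ^ u)) / 2 ^ u = K &&& T := by
    rw [Nat.and_div_two_pow, Nat.add_mul_div_right _ _ hp, Nat.add_mul_div_right _ _ hp,
      Nat.div_eq_of_lt hg, Nat.div_eq_of_lt hM, zero_add, zero_add]
  rw [← h1, ← h2]
  constructor
  · intro h; rw [h]; simp
  · rintro ⟨h3, h4⟩
    have := Nat.div_add_mod ((g + K * 2 ^ u) &&& (M + T * 2 ^ u)) (2 ^ u)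
    rw [h3, h4] at this
    omega

lemma and_window (x u t : ℕ) : x &&& ((2 ^ u - 1) * 2 ^ t) = 0 ↔ (x / 2 ^ t) % 2 ^ u = 0 := by
  have h := and_block (u := t) (g := x % 2 ^ t) (M := 0) (K := x / 2 ^ t) (T := 2 ^ u - 1)
    (Nat.mod_lt _ (by positivity)) (by positivity)
  rw [mul_comm (x / 2 ^ t), Nat.mod_add_div, zero_add] at h
  rw [h, Nat.and_two_pow_sub_one_eq_mod]
  simp

lemma and_digit {d v e : ℕ} (he : e ≤ v) (hd : d < 2 ^ v) :
    d &&& (2 ^ v - 2 ^ e) = 0 ↔ d < 2 ^ e := by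
  have h1 : 2 ^ v - 2 ^ e = (2 ^ (v - e) - 1) * 2 ^ e := by
    rw [Nat.sub_mul, ← pow_add, Nat.sub_add_cancel he, one_mul]
  have h2 : d / 2 ^ e < 2 ^ (v - e) := by
    rw [Nat.div_lt_iff_lt_mul (by positivity), ← pow_add, Nat.sub_add_cancel he]; exact hd
  rw [h1, and_window, Nat.mod_eq_of_lt h2, Nat.div_eq_zero_iff]
  have : 0 < 2 ^ e := by positivity
  omega

lemma sum_digits_lt {B k : ℕ} (d : ℕ → ℕ) (hd : ∀ j < k, d j < B) :
    ∑ j ∈ range k, d j * B ^ j < B ^ k := by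
  induction k with
  | zero => simp
  | succ k ih =>
    rw [sum_range_succ, pow_succ]
    have h1 := ih (fun j hj => hd j (by omega))
    have h2 : (d k + 1) * B ^ k ≤ B * B ^ k := Nat.mul_le_mul_right _ (hd k (by omega))
    linarith

lemma exists_digits {B k g : ℕ} (hg : g < B ^ k) :
    ∃ d : ℕ → ℕ, (∀ j, d j < B ∨ k ≤ j) ∧ g = ∑ j ∈ range k, d j * B ^ j := by
  rcases Nat.eq_zero_or_pos B with rfl | hB
  · rcases k with _ | k
    · exact ⟨fun _ => 0, by simp, by simpa using hg⟩
    · simp at hg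
  induction k generalizing g with
  | zero => exact ⟨fun _ => 0, by simp, by simpa using hg⟩
  | succ k ih =>
    obtain ⟨d, h1, h2⟩ := ih (g := g % B ^ k) (Nat.mod_lt _ (by positivity))
    refine ⟨fun j => if j < k then d j else g / B ^ k, ?_, ?_⟩
    · intro j
      have h3 : g / B ^ k < B := by
        rw [Nat.div_lt_iff_lt_mul (by positivity)]; rwa [pow_succ, mul_comm] at hg
      by_cases h : j < k
      · left; simp only [h, if_true]; have := h1 j; omega
      · left; simp only [h, if_false]; exact h3
    · rw [sum_range_succ]
      have : ∑ j ∈ range k, (if j < k then d j else g / B ^ k) * B ^ j = g % B ^ k := by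
        rw [h2]; apply sum_congr rfl; intro j hj; rw [if_pos (by simpa using hj)]
      simp only [lt_irrefl, if_false]
      rw [this, mul_comm (g / B ^ k), Nat.mod_add_div]

lemma and_sum_digits {v k : ℕ} (d e : ℕ → ℕ) (hd : ∀ j < k, d j < 2 ^ v) (he : ∀ j < k, e j ≤ v) :
    (∑ j ∈ range k, d j * (2 ^ v) ^ j) &&& (∑ j ∈ range k, (2 ^ v - 2 ^ e j) * (2 ^ v) ^ j) = 0
      ↔ ∀ j < k, d j < 2 ^ e j := by
  induction k with
  | zero => simp
  | succ k ih =>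
    have hB : ∀ n, 2 ^ v - 2 ^ e n < 2 ^ v := fun n =>
      Nat.sub_lt (by positivity) (by positivity)
    have h1 := sum_digits_lt (B := 2 ^ v) (k := k) d (fun j hj => hd j (by omega))
    have h2 := sum_digits_lt (B := 2 ^ v) (k := k) (fun j => 2 ^ v - 2 ^ e j) (fun j _ => hB j)
    have hv : (2 ^ v) ^ k = 2 ^ (v * k) := by rw [pow_mul]
    rw [sum_range_succ, sum_range_succ]
    rw [hv] at h1 h2 ⊢
    rw [and_block h1 h2, ih (fun j hj => hd j (by omega)) (fun j hj => he j (by omega)),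
      and_digit (he k (by omega)) (hd k (by omega))]
    constructor
    · rintro ⟨h3, h4⟩ j hj
      rcases Nat.lt_succ_iff_lt_or_eq.1 hj with h | rfl
      · exact h3 j h
      · exact h4
    · intro h; exact ⟨fun j hj => h j (by omega), h k (by omega)⟩

/-- the mask exponents -/
noncomputable def mexp (ν δ e j : ℕ) : ℕ := by
  classical exact if ∃ s : Fin ν, j = (δ + 1) ^ ((s : ℕ) + 1) then e else 0

lemma pos_inj {ν δ : ℕ} (hδ : 1 ≤ δ) {s t : Fin ν}
    (h : (δ + 1) ^ ((s : ℕ) + 1) = (δ + 1) ^ ((t : ℕ) + 1)) : s = t := by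
  have := Nat.pow_right_injective (show 2 ≤ δ + 1 by omega) h
  exact Fin.ext (by omega)

lemma pos_lt {ν δ : ℕ} (s : Fin ν) : (δ + 1) ^ ((s : ℕ) + 1) < (δ + 1) ^ ν + 1 :=
  Nat.lt_succ_of_le (Nat.pow_le_pow_right (by omega) (by omega))

lemma mask_back {ν δ v e g : ℕ} (hδ : 1 ≤ δ) (he : e ≤ v)
    (hg : g < (2 ^ v) ^ ((δ + 1) ^ ν + 1))
    (h : g &&& (∑ j ∈ range ((δ + 1) ^ ν + 1), (2 ^ v - 2 ^ mexp ν δ e j) * (2 ^ v) ^ j) = 0) :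
    ∃ z : Fin ν → ℕ, (∀ s, z s < 2 ^ e) ∧ g = ∑ s, z s * (2 ^ v) ^ ((δ + 1) ^ ((s : ℕ) + 1)) := by
  classical
  obtain ⟨d, hd, hgd⟩ := exists_digits hg
  rw [hgd, and_sum_digits d _ (fun j hj => by have := hd j; omega)
    (fun j _ => by unfold mexp; split_ifs <;> omega)] at h
  refine ⟨fun s => d ((δ + 1) ^ ((s : ℕ) + 1)), ?_, ?_⟩
  · intro s
    have := h _ (pos_lt s)
    rwa [mexp, if_pos ⟨s, rfl⟩] at this
  · rw [hgd]
    have hinj : Function.Injective (fun s : Fin ν => (δ + 1) ^ ((s : ℕ) + 1)) :=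
      fun s t hst => pos_inj hδ hst
    rw [← sum_image (s := univ) (g := fun s : Fin ν => (δ + 1) ^ ((s : ℕ) + 1))
      (f := fun j => d j * (2 ^ v) ^ j) (hinj.injOn)]
    symm
    apply sum_subset
    · intro j hj
      obtain ⟨s, _, rfl⟩ := mem_image.1 hj
      exact mem_range.2 (pos_lt s)
    · intro j hj hj2
      have h1 := h j (mem_range.1 hj)
      rw [mexp, if_neg] at h1
      · have : d j = 0 := by simpa using h1
        rw [this, zero_mul]
      · rintro ⟨s, rfl⟩
        exact hj2 (mem_image_of_mem _ (mem_univ s))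

lemma mask_fwd {ν δ v e : ℕ} (hδ : 1 ≤ δ) (he : e ≤ v) (z : Fin ν → ℕ) (hz : ∀ s, z s < 2 ^ e) :
    (∑ s, z s * (2 ^ v) ^ ((δ + 1) ^ ((s : ℕ) + 1))) < (2 ^ v) ^ ((δ + 1) ^ ν + 1) ∧
    (∑ s, z s * (2 ^ v) ^ ((δ + 1) ^ ((s : ℕ) + 1))) &&&
      (∑ j ∈ range ((δ + 1) ^ ν + 1), (2 ^ v - 2 ^ mexp ν δ e j) * (2 ^ v) ^ j) = 0 := by
  classical
  set d : ℕ → ℕ := fun j => ∑ s : Fin ν, if (δ + 1) ^ ((s : ℕ) + 1) = j then z s else 0 with hd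
  have hg : ∑ s, z s * (2 ^ v) ^ ((δ + 1) ^ ((s : ℕ) + 1))
      = ∑ j ∈ range ((δ + 1) ^ ν + 1), d j * (2 ^ v) ^ j := by
    simp only [hd, sum_mul]
    rw [sum_comm]
    apply sum_congr rfl
    intro s _
    simp only [ite_mul, zero_mul]
    rw [sum_ite_eq, if_pos (mem_range.2 (pos_lt s))]
  have hdl : ∀ j, d j < 2 ^ mexp ν δ e j := by
    intro j
    by_cases hj : ∃ s : Fin ν, j = (δ + 1) ^ ((s : ℕ) + 1)
    · rw [mexp, if_pos hj]
      obtain ⟨s, rfl⟩ := hj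
      have : d ((δ + 1) ^ ((s : ℕ) + 1)) = z s := by
        simp only [hd]
        rw [sum_eq_single s]
        · simp
        · intro t _ hts; rw [if_neg]; intro h; exact hts (pos_inj hδ h)
        · simp
      rw [this]; exact hz s
    · rw [mexp, if_neg hj]
      have : d j = 0 := by
        simp only [hd]
        apply sum_eq_zero
        intro s _
        rw [if_neg]; intro h; exact hj ⟨s, h.symm⟩
      rw [this]; norm_num
  have hme : ∀ j, mexp ν δ e j ≤ v := by intro j; unfold mexp; split_ifs <;> omega
  have hdv : ∀ j, d j < 2 ^ v := fun j =>
    (hdl j).trans_le (Nat.pow_le_pow_right (by norm_num) (hme j))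
  rw [hg]
  exact ⟨sum_digits_lt d (fun j _ => hdv j), (and_sum_digits d _ (fun j _ => hdv j)
    (fun j _ => hme j)).2 (fun j _ => hdl j)⟩

end UP

namespace UP
open Finset

lemma digit_inj {n b : ℕ} (k l : Fin n → ℕ) (hk : ∀ s, k s < b) (hl : ∀ s, l s < b)
    (h : ∑ s, k s * b ^ (s : ℕ) = ∑ s, l s * b ^ (s : ℕ)) : k = l := by
  induction n with
  | zero => exact Subsingleton.elim _ _
  | succ n ih =>
    have key : ∀ k : Fin (n + 1) → ℕ, ∑ s, k s * b ^ (s : ℕ)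
        = k 0 + b * ∑ s : Fin n, k s.succ * b ^ (s : ℕ) := by
      intro k
      rw [Fin.sum_univ_succ, mul_sum]
      simp only [Fin.val_zero, pow_zero, mul_one, Fin.val_succ]
      congr 1
      apply sum_congr rfl; intros; ring
    rw [key, key] at h
    have hb : 0 < b := (Nat.zero_le _).trans_lt (hk 0)
    have h0 : k 0 = l 0 := by
      have := congrArg (· % b) h
      simpa [Nat.add_mul_mod_self_left, Nat.mod_eq_of_lt (hk 0), Nat.mod_eq_of_lt (hl 0)] using this
    have h1 := ih (fun s => k s.succ) (fun s => l s.succ) (fun s => hk _) (fun s => hl _)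
      (by rw [h0] at h; exact Nat.eq_of_mul_eq_mul_left hb (by omega))
    funext s
    refine Fin.cases h0 (fun s => congrFun h1 s) s

section
variable {ν : ℕ}

def eI (δ : ℕ) (i : Fin (ν + 1) →₀ ℕ) : ℕ := ∑ s, i s * (δ + 1) ^ (s : ℕ)
def wt (δ : ℕ) (i : Fin (ν + 1) →₀ ℕ) : ℤ := (∏ s, (i s).factorial : ℕ) * ((δ - ∑ s, i s).factorial : ℕ)
def DP (P : MvPolynomial (Fin (ν + 1)) ℤ) (δ : ℕ) (B : ℤ) : ℤ :=
  ∑ i ∈ P.support, wt δ i * P.coeff i * B ^ ((δ + 1) ^ (ν + 1) - eI δ i)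
noncomputable def DPp (P : MvPolynomial (Fin (ν + 1)) ℤ) (δ : ℕ) : Polynomial ℤ :=
  ∑ i ∈ P.support, Polynomial.monomial ((δ + 1) ^ (ν + 1) - eI δ i) (wt δ i * P.coeff i)
def LP (P : MvPolynomial (Fin (ν + 1)) ℤ) (δ : ℕ) : ℤ := ∑ i ∈ P.support, |wt δ i * P.coeff i|
noncomputable def cp (δ : ℕ) (y : Fin (ν + 1) → ℤ) : Polynomial ℤ :=
  1 + ∑ s : Fin (ν + 1), Polynomial.monomial ((δ + 1) ^ (s : ℕ)) (y s)

lemma sum_le_of_support {P : MvPolynomial (Fin (ν + 1)) ℤ} {δ : ℕ} (hP : P.totalDegree ≤ δ)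
    {i : Fin (ν + 1) →₀ ℕ} (hi : i ∈ P.support) : ∑ s, i s ≤ δ := by
  have := (MvPolynomial.le_totalDegree hi).trans hP
  rwa [Finsupp.sum_fintype _ _ (fun _ => rfl)] at this

lemma eI_lt {δ : ℕ} {i : Fin (ν + 1) →₀ ℕ} (hi : ∑ s, i s ≤ δ) :
    eI δ i < (δ + 1) ^ (ν + 1) := by
  have h1 : ∀ s, i s < δ + 1 := fun s =>
    Nat.lt_succ_of_le ((single_le_sum (fun _ _ => Nat.zero_le _) (mem_univ s)).trans hi)
  have key : ∀ n (k : Fin n → ℕ), (∀ s, k s < δ + 1) →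
      ∑ s, k s * (δ + 1) ^ (s : ℕ) < (δ + 1) ^ n := by
    intro n
    induction n with
    | zero => simp
    | succ n ih =>
      intro k hk
      rw [Fin.sum_univ_castSucc, pow_succ]
      have h2 := ih (fun s => k s.castSucc) (fun s => hk _)
      have h3 : (k (Fin.last n) + 1) * (δ + 1) ^ n ≤ (δ + 1) * (δ + 1) ^ n :=
        Nat.mul_le_mul_right _ (hk _)
      simp only [Fin.val_castSucc, Fin.val_last] at h2 ⊢
      linarith
  exact key _ _ h1

lemma eval_cp (δ : ℕ) (y : Fin (ν + 1) → ℤ) (B : ℤ) :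
    (cp δ y).eval B = 1 + ∑ s, y s * B ^ ((δ + 1) ^ (s : ℕ)) := by
  simp [cp, Polynomial.eval_finsetSum]

lemma eval_DPp (P : MvPolynomial (Fin (ν + 1)) ℤ) (δ : ℕ) (B : ℤ) :
    (DPp P δ).eval B = DP P δ B := by
  simp [DPp, DP, Polynomial.eval_finsetSum]

/-- coefficients of the power of `cp` -/
lemma coeff_cp_pow (δ : ℕ) (y : Fin (ν + 1) → ℤ) (i : Fin (ν + 1) →₀ ℕ) (hi : ∑ s, i s ≤ δ) :
    wt δ i * ((cp δ y) ^ δ).coeff (eI δ i) = δ.factorial * ∏ s, y s ^ i s := by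
  classical
  set f : Option (Fin (ν + 1)) → Polynomial ℤ := fun o => o.elim 1
    (fun s => Polynomial.monomial ((δ + 1) ^ (s : ℕ)) (y s)) with hf
  have hc : cp δ y = ∑ o, f o := by
    rw [Fintype.sum_option]; rfl
  have hprod : ∀ k : Option (Fin (ν + 1)) → ℕ, ∏ o, f o ^ k o
      = Polynomial.monomial (∑ s, k (some s) * (δ + 1) ^ (s : ℕ)) (∏ s, y s ^ k (some s)) := by
    intro k
    rw [Fintype.prod_option]
    simp only [hf, Option.elim, one_pow, one_mul, Polynomial.monomial_pow]
    have : ∀ t : Finset (Fin (ν + 1)), ∏ s ∈ t, Polynomial.monomial ((δ + 1) ^ (s : ℕ) * k (some s))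
        (y s ^ k (some s)) = Polynomial.monomial (∑ s ∈ t, k (some s) * (δ + 1) ^ (s : ℕ))
        (∏ s ∈ t, y s ^ k (some s)) := by
      intro t
      induction t using Finset.induction_on with
      | empty => simp
      | insert s t hs ih =>
        rw [prod_insert hs, sum_insert hs, prod_insert hs, ih, Polynomial.monomial_mul_monomial,
          mul_comm ((δ + 1) ^ (s : ℕ))]
    exact this univ
  set k0 : Option (Fin (ν + 1)) → ℕ := fun o => o.elim (δ - ∑ s, i s) i with hk0
  have hk0sum : ∑ o, k0 o = δ := by
    rw [Fintype.sum_option]; simp only [hk0, Option.elim]; omega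
  have hk0mem : k0 ∈ piAntidiag (univ : Finset (Option (Fin (ν + 1)))) δ := by
    simp [mem_piAntidiag, hk0sum]
  have hcoeff : ((cp δ y) ^ δ).coeff (eI δ i)
      = (Nat.multinomial univ k0 : ℤ) * ∏ s, y s ^ i s := by
    rw [hc, sum_pow_eq_sum_piAntidiag, Polynomial.finsetSum_coeff, sum_eq_single k0]
    · rw [hprod, ← Polynomial.C_eq_natCast, Polynomial.coeff_C_mul, Polynomial.coeff_monomial, if_pos]
      · simp [hk0]
      · simp [hk0, eI]
    · intro k hk hne
      rw [hprod, ← Polynomial.C_eq_natCast, Polynomial.coeff_C_mul, Polynomial.coeff_monomial, if_neg, mul_zero]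
      intro he
      apply hne
      rw [mem_piAntidiag] at hk
      have hks : ∀ o, k o < δ + 1 := fun o => by
        have := single_le_sum (f := k) (fun _ _ => Nat.zero_le _) (mem_univ o)
        rw [hk.1] at this; omega
      have h1 := digit_inj (fun s => k (some s)) i (fun s => hks _) (fun s =>
        Nat.lt_succ_of_le ((single_le_sum (f := i) (fun _ _ => Nat.zero_le _) (mem_univ s)).trans hi)) he
      have h2 : k none + ∑ s, k (some s) = δ := by rw [← hk.1, Fintype.sum_option]
      funext o
      rcases o with _ | s
      · simp only [hk0, Option.elim]
        have : ∑ s, k (some s) = ∑ s, i s := by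
          apply sum_congr rfl; intro s _; exact congrFun h1 s
        omega
      · exact congrFun h1 s
    · intro h; exact absurd hk0mem h
  have hm := Nat.multinomial_spec (univ : Finset (Option (Fin (ν + 1)))) k0
  rw [hk0sum, Fintype.prod_option] at hm
  have e0 : k0 none = δ - ∑ s, i s := rfl
  have e1 : ∀ s, k0 (some s) = i s := fun _ => rfl
  simp only [e0, e1] at hm
  rw [hcoeff, wt, ← hm]
  push_cast
  ring

def Bd (p : Polynomial ℤ) (K : ℤ) : Prop := ∀ j, |p.coeff j| ≤ K

lemma Bd_add {p q : Polynomial ℤ} {K L : ℤ} (hp : Bd p K) (hq : Bd q L) : Bd (p + q) (K + L) := by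
  intro j; rw [Polynomial.coeff_add]; exact (abs_add_le _ _).trans (add_le_add (hp j) (hq j))

lemma Bd_sum {ι : Type*} (t : Finset ι) (p : ι → Polynomial ℤ) (K : ι → ℤ)
    (h : ∀ i ∈ t, Bd (p i) (K i)) : Bd (∑ i ∈ t, p i) (∑ i ∈ t, K i) := by
  intro j
  rw [Polynomial.finsetSum_coeff]
  exact (abs_sum_le_sum_abs _ _).trans (sum_le_sum fun i hi => h i hi j)

lemma Bd_monomial_mul {p : Polynomial ℤ} {K : ℤ} (hp : Bd p K) (n : ℕ) (c : ℤ) :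
    Bd (Polynomial.monomial n c * p) (|c| * K) := by
  intro j
  have hK : 0 ≤ K := (abs_nonneg _).trans (hp 0)
  rw [← Polynomial.C_mul_X_pow_eq_monomial, mul_assoc, Polynomial.coeff_C_mul, abs_mul,
    Polynomial.coeff_X_pow_mul']
  apply mul_le_mul_of_nonneg_left _ (abs_nonneg _)
  split_ifs
  · exact hp _
  · simpa using hK

lemma Bd_DPp (P : MvPolynomial (Fin (ν + 1)) ℤ) (δ : ℕ) : Bd (DPp P δ) (LP P δ) := by
  apply Bd_sum
  intro i _ j
  rw [Polynomial.coeff_monomial]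
  split_ifs
  · exact le_rfl
  · rw [abs_zero]; exact abs_nonneg _

lemma Bd_cp_mul (δ : ℕ) (y : Fin (ν + 1) → ℤ) (hy : ∀ s, 0 ≤ y s) {p : Polynomial ℤ} {K : ℤ}
    (hp : Bd p K) : Bd (cp δ y * p) ((1 + ∑ s, y s) * K) := by
  rw [cp, add_mul, one_mul, add_mul, one_mul, sum_mul, sum_mul]
  apply Bd_add hp
  apply Bd_sum
  intro s _
  have := Bd_monomial_mul hp ((δ + 1) ^ (s : ℕ)) (y s)
  rwa [abs_of_nonneg (hy s)] at this

lemma Bd_cp_pow_mul (δ n : ℕ) (y : Fin (ν + 1) → ℤ) (hy : ∀ s, 0 ≤ y s) {p : Polynomial ℤ} {K : ℤ}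
    (hp : Bd p K) : Bd (cp δ y ^ n * p) ((1 + ∑ s, y s) ^ n * K) := by
  induction n with
  | zero => simpa using hp
  | succ n ih =>
    have := Bd_cp_mul δ y hy ih
    rwa [← mul_assoc, ← mul_assoc, ← pow_succ', ← pow_succ'] at this

theorem coding_digits (P : MvPolynomial (Fin (ν + 1)) ℤ) (δ : ℕ) (hP : P.totalDegree ≤ δ)
    (y : Fin (ν + 1) → ℤ) (hy : ∀ s, 0 ≤ y s) :
    ∃ κ : ℕ → ℤ, (∀ B : ℤ, (1 + ∑ s, y s * B ^ ((δ + 1) ^ (s : ℕ))) ^ δ * DP P δ B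
        = ∑ j ∈ range ((2 * δ + 1) * (δ + 1) ^ ν + 1), κ j * B ^ j) ∧
      (∀ j, |κ j| ≤ (1 + ∑ s, y s) ^ δ * LP P δ) ∧
      κ ((δ + 1) ^ (ν + 1)) = δ.factorial * MvPolynomial.eval y P := by
  refine ⟨fun j => (cp δ y ^ δ * DPp P δ).coeff j, ?_, ?_, ?_⟩
  · intro B
    rw [← eval_cp, ← eval_DPp, ← Polynomial.eval_pow, ← Polynomial.eval_mul]
    apply Polynomial.eval_eq_sum_range'
    have h1 : (cp δ y).natDegree ≤ (δ + 1) ^ ν := by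
      unfold cp
      apply Polynomial.natDegree_add_le_of_degree_le (by simp)
      apply Polynomial.natDegree_sum_le_of_forall_le
      intro s _
      exact (Polynomial.natDegree_monomial_le _).trans
        (Nat.pow_le_pow_right (by omega) (by have := s.2; omega))
    have h2 : (DPp P δ).natDegree ≤ (δ + 1) ^ (ν + 1) := by
      unfold DPp
      apply Polynomial.natDegree_sum_le_of_forall_le
      intro s _
      exact (Polynomial.natDegree_monomial_le _).trans (Nat.sub_le _ _)
    have h3 : (cp δ y ^ δ).natDegree ≤ δ * (δ + 1) ^ ν :=
      Polynomial.natDegree_pow_le_of_le δ h1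
    have h4 := Polynomial.natDegree_mul_le_of_le h3 h2
    calc _ ≤ _ := h4
      _ < _ := by rw [pow_succ]; ring_nf; omega
  · exact Bd_cp_pow_mul δ δ y hy (Bd_DPp P δ)
  · simp only [DPp, mul_sum]
    rw [Polynomial.finsetSum_coeff, MvPolynomial.eval_eq', mul_sum]
    apply sum_congr rfl
    intro i hi
    have hs := sum_le_of_support hP hi
    have hlt := eI_lt hs
    have := coeff_cp_pow δ y i hs
    rw [← Polynomial.C_mul_X_pow_eq_monomial, mul_comm (cp δ y ^ δ), mul_assoc, Polynomial.coeff_C_mul,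
      Polynomial.coeff_X_pow_mul', if_pos (Nat.sub_le _ _), Nat.sub_sub_self hlt.le]
    linear_combination P.coeff i * this

end

end UP

namespace UP
open Finset

lemma isum_digits {B : ℤ} (d : ℕ → ℤ) (k : ℕ) (h0 : ∀ j, 0 ≤ d j) (h1 : ∀ j, d j + 1 ≤ B) (hB : 0 ≤ B) :
    0 ≤ ∑ j ∈ range k, d j * B ^ j ∧ ∑ j ∈ range k, d j * B ^ j + 1 ≤ B ^ k := by
  induction k with
  | zero => simp
  | succ k ih =>
    rw [sum_range_succ, pow_succ]
    have hp : 0 ≤ B ^ k := pow_nonneg hB k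
    have h2 := mul_nonneg (h0 k) hp
    have h3 := mul_le_mul_of_nonneg_right (h1 k) hp
    constructor
    · linarith [ih.1]
    · linarith [ih.2]

lemma mask2 {v0 top k k' : ℕ} (κ : ℕ → ℤ) (hκ : ∀ j, |κ j| < 2 ^ v0) (Kn : ℕ)
    (hK : (Kn : ℤ) = ∑ j ∈ range (top + (1 + k)), κ j * (2 ^ (v0 + 1)) ^ j
      + ∑ j ∈ range (top + (1 + k)), 2 ^ v0 * (2 ^ (v0 + 1) : ℤ) ^ j + (2 ^ (v0 + 1)) ^ (top + (1 + k'))) :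
    Kn &&& ((2 ^ v0 - 1) * 2 ^ ((v0 + 1) * top)) = 0 ↔ κ top = 0 := by
  rw [and_window]
  set H : ℤ := 2 ^ v0 with hH
  have hHpos : 0 < H := by positivity
  have hB : (2 : ℤ) ^ (v0 + 1) = 2 * H := by rw [hH]; ring
  rw [hB] at hK
  set B : ℤ := 2 * H with hBdef
  have hd := isum_digits (B := B) (fun j => κ j + H) top
    (fun j => by have := (abs_lt.1 (hκ j)).1; show 0 ≤ κ j + H; linarith)
    (fun j => by have := (abs_lt.1 (hκ j)).2; show κ j + H + 1 ≤ B; linarith) (by linarith)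
  have hBp : 0 < B ^ top := by positivity
  obtain ⟨hi, hhi⟩ : ∃ hi : ℤ, (Kn : ℤ) = (∑ j ∈ range top, (κ j + H) * B ^ j)
      + B ^ top * (κ top + H * hi) := by
    rw [← sum_add_distrib] at hK
    simp only [← add_mul] at hK
    rw [sum_range_add, sum_range_add _ 1 k] at hK
    refine ⟨1 + 2 * ∑ x ∈ range k, (κ (top + (1 + x)) + H) * B ^ x + 2 * B ^ k', ?_⟩
    rw [hK]
    have e : ∑ x ∈ range k, (κ (top + (1 + x)) + H) * B ^ (top + (1 + x))
        = B ^ top * (B * ∑ x ∈ range k, (κ (top + (1 + x)) + H) * B ^ x) := by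
      rw [mul_sum, mul_sum]; apply sum_congr rfl; intros; ring
    rw [e]
    simp only [sum_range_one, add_zero]
    rw [pow_add B top (1 + k'), pow_add B 1 k', hBdef]
    ring
  have hdiv : ((Kn / 2 ^ ((v0 + 1) * top) : ℕ) : ℤ) = κ top + H * hi := by
    push_cast
    rw [pow_mul, hB, hhi, Int.add_mul_ediv_left _ _ hBp.ne',
      Int.ediv_eq_zero_of_lt hd.1 (by linarith [hd.2]), zero_add]
  have : (Kn / 2 ^ ((v0 + 1) * top)) % 2 ^ v0 = 0 ↔ H ∣ κ top + H * hi := by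
    rw [← hdiv, ← Nat.dvd_iff_mod_eq_zero, ← Int.natCast_dvd_natCast]
    push_cast; rfl
  rw [this, dvd_add_left (dvd_mul_right _ _)]
  constructor
  · intro h; exact Int.eq_zero_of_abs_lt_dvd h (hκ top)
  · intro h; rw [h]; exact dvd_zero _

section
variable {ν : ℕ}

def KK (P : MvPolynomial (Fin (ν + 1)) ℤ) (δ : ℕ) (a H B g : ℤ) : ℤ :=
  (1 + a * B + g) ^ δ * DP P δ B + ∑ j ∈ range ((2 * δ + 1) * (δ + 1) ^ ν + 1), H * B ^ j
    + B ^ ((2 * δ + 1) * (δ + 1) ^ ν + 2 * δ + 1)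
open Classical in
noncomputable def MM (ν δ : ℕ) (b B : ℤ) : ℤ :=
  ∑ j ∈ range ((δ + 1) ^ ν + 1), (B - (if ∃ s : Fin ν, j = (δ + 1) ^ ((s : ℕ) + 1) then b else 1)) * B ^ j
def N0 (ν δ : ℕ) (B : ℤ) : ℤ := B ^ ((δ + 1) ^ ν + 1)
def SS (P : MvPolynomial (Fin (ν + 1)) ℤ) (δ : ℕ) (a H B g : ℤ) : ℤ := g + KK P δ a H B g * N0 ν δ B
noncomputable def TT (ν δ : ℕ) (b H B : ℤ) : ℤ := MM ν δ b B + (H - 1) * B ^ ((δ + 1) ^ (ν + 1)) * N0 ν δ B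
def NN (ν δ : ℕ) (B : ℤ) : ℤ := N0 ν δ B * B ^ ((2 * δ + 1) * (δ + 1) ^ ν + 2 * δ + 3)

lemma LP_nonneg (P : MvPolynomial (Fin (ν + 1)) ℤ) (δ : ℕ) : 0 ≤ LP P δ :=
  sum_nonneg fun _ _ => abs_nonneg _

lemma DP_bound (P : MvPolynomial (Fin (ν + 1)) ℤ) (δ : ℕ) {B : ℤ} (hB : 1 ≤ B) :
    |DP P δ B| ≤ LP P δ * B ^ ((δ + 1) ^ (ν + 1)) := by
  unfold DP LP
  rw [sum_mul]
  apply (abs_sum_le_sum_abs _ _).trans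
  apply sum_le_sum
  intro i _
  rw [abs_mul, abs_of_nonneg (pow_nonneg (by linarith : (0:ℤ) ≤ B) _)]
  exact mul_le_mul_of_nonneg_left (pow_le_pow_right₀ hB (Nat.sub_le _ _)) (abs_nonneg _)

lemma KK_bound (P : MvPolynomial (Fin (ν + 1)) ℤ) (δ : ℕ) {a b H B g : ℤ} (ha : 0 ≤ a) (hab : a < b)
    (hbB : b ≤ B) (hBH : B = 2 * H) (hB4 : 4 ≤ B) (hL : LP P δ ≤ B) (hg : 0 ≤ g) (hgN : g < N0 ν δ B) :
    0 ≤ KK P δ a H B g ∧ KK P δ a H B g + 1 ≤ B ^ ((2 * δ + 1) * (δ + 1) ^ ν + 2 * δ + 3) := by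
  have hB1 : 1 ≤ B := by linarith
  have hB0 : 0 ≤ B := by linarith
  set n0 := (δ + 1) ^ ν with hn0
  have hn1 : 1 ≤ n0 := Nat.one_le_pow _ _ (by omega)
  have htop : (δ + 1) ^ (ν + 1) = (δ + 1) * n0 := by rw [pow_succ, mul_comm]
  have hc0 : 0 ≤ 1 + a * B + g := by positivity
  have hc : 1 + a * B + g ≤ B ^ (n0 + 2) := by
    have h1 : g + 1 ≤ B ^ (n0 + 1) := hgN
    have h2 : a * B ≤ B * B := mul_le_mul_of_nonneg_right (by linarith) hB0
    have h3 : B ^ 2 ≤ B ^ (n0 + 1) := pow_le_pow_right₀ hB1 (by omega)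
    have h4 : B ^ (n0 + 2) = B ^ (n0 + 1) * B := pow_succ _ _
    have h5 : 0 ≤ B ^ (n0 + 1) := by positivity
    have h6 := mul_le_mul_of_nonneg_left hB4 h5
    rw [pow_two] at h3
    linarith
  have hD := DP_bound P δ hB1
  have hD2 : |DP P δ B| ≤ B ^ ((δ + 1) * n0 + 1) := by
    rw [htop] at hD
    refine hD.trans ?_
    rw [pow_succ, mul_comm]
    exact mul_le_mul_of_nonneg_left hL (by positivity)
  have hcd : |(1 + a * B + g) ^ δ * DP P δ B| ≤ B ^ ((2 * δ + 1) * n0 + 2 * δ + 1) := by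
    rw [abs_mul, abs_of_nonneg (pow_nonneg hc0 δ)]
    calc _ ≤ (B ^ (n0 + 2)) ^ δ * B ^ ((δ + 1) * n0 + 1) := by
            apply mul_le_mul (pow_le_pow_left₀ hc0 hc δ) hD2 (abs_nonneg _) (by positivity)
      _ = _ := by rw [← pow_mul, ← pow_add]; congr 1; ring
  have hs := isum_digits (B := B) (fun _ => H) ((2 * δ + 1) * n0 + 1) (fun _ => by show 0 ≤ H; linarith)
    (fun _ => by show H + 1 ≤ B; linarith) hB0
  have hs2 : B ^ ((2 * δ + 1) * n0 + 1) ≤ B ^ ((2 * δ + 1) * n0 + 2 * δ + 1) :=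
    pow_le_pow_right₀ hB1 (by omega)
  unfold KK
  rw [← hn0]
  have hlast : B ^ ((2 * δ + 1) * n0 + 2 * δ + 3) = B ^ ((2 * δ + 1) * n0 + 2 * δ + 1) * (B * B) := by
    rw [pow_succ, pow_succ]; ring
  have h16 : (16 : ℤ) ≤ B * B := by nlinarith only [hB4]
  have hp : 0 ≤ B ^ ((2 * δ + 1) * n0 + 2 * δ + 1) := by positivity
  have hm := mul_le_mul_of_nonneg_left h16 hp
  have := abs_le.1 hcd
  rw [hlast]
  constructor
  · linarith [this.1, hs.1]
  · linarith [this.2, hs.2]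

lemma MM_bound (ν δ : ℕ) {b B : ℤ} (hb : 1 ≤ b) (hbB : b ≤ B) :
    0 ≤ MM ν δ b B ∧ MM ν δ b B + 1 ≤ N0 ν δ B := by
  classical
  unfold MM N0
  apply isum_digits (B := B)
    (fun j => (B - (if ∃ s : Fin ν, j = (δ + 1) ^ ((s : ℕ) + 1) then b else 1)))
  · intro j; split_ifs <;> linarith
  · intro j; split_ifs <;> linarith
  · linarith

lemma TT_bound (ν δ : ℕ) {b H B : ℤ} (hb : 1 ≤ b) (hbB : b ≤ B) (hBH : B = 2 * H) (hB4 : 4 ≤ B) :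
    0 ≤ TT ν δ b H B ∧ TT ν δ b H B + 1 ≤ NN ν δ B := by
  have hB1 : 1 ≤ B := by linarith
  obtain ⟨h1, h2⟩ := MM_bound ν δ hb hbB
  have hN : 0 ≤ N0 ν δ B := by linarith
  have hn1 : 1 ≤ (δ + 1) ^ ν := Nat.one_le_pow _ _ (by omega)
  have hpow : B ^ ((δ + 1) ^ (ν + 1)) * B ≤ B ^ ((2 * δ + 1) * (δ + 1) ^ ν + 2 * δ + 3) := by
    rw [← pow_succ]
    apply pow_le_pow_right₀ hB1
    rw [pow_succ]; nlinarith only [hn1]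
  have hp1 : 1 ≤ B ^ ((δ + 1) ^ (ν + 1)) := one_le_pow₀ hB1
  have h3 := mul_le_mul_of_nonneg_right hpow hN
  have h4 := mul_le_mul_of_nonneg_right hp1 hN
  have hpn : 0 ≤ B ^ ((δ + 1) ^ (ν + 1)) * N0 ν δ B := by positivity
  have h5 := mul_nonneg (by linarith : 0 ≤ H - 1) hpn
  have h6 := mul_nonneg (by linarith : 0 ≤ H) hpn
  unfold TT NN
  constructor
  · linarith
  · rw [hBH] at *
    linarith

lemma SS_bound (P : MvPolynomial (Fin (ν + 1)) ℤ) (δ : ℕ) {a b H B g : ℤ} (ha : 0 ≤ a) (hab : a < b)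
    (hbB : b ≤ B) (hBH : B = 2 * H) (hB4 : 4 ≤ B) (hL : LP P δ ≤ B) (hg : 0 ≤ g) (hgN : g < N0 ν δ B) :
    0 ≤ SS P δ a H B g ∧ SS P δ a H B g + 1 ≤ NN ν δ B := by
  obtain ⟨h1, h2⟩ := KK_bound P δ ha hab hbB hBH hB4 hL hg hgN
  have hN : 0 ≤ N0 ν δ B := by linarith
  have h3 := mul_le_mul_of_nonneg_right h2 hN
  have h4 := mul_nonneg h1 hN
  unfold SS NN
  constructor <;> linarith

lemma NN_ge (ν δ : ℕ) {B : ℤ} (hB4 : 4 ≤ B) : 16 ≤ NN ν δ B ∧ N0 ν δ B ≤ NN ν δ B := by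
  have h1 : 1 ≤ N0 ν δ B := one_le_pow₀ (by linarith)
  have h2 : B ^ 2 ≤ B ^ ((2 * δ + 1) * (δ + 1) ^ ν + 2 * δ + 3) := pow_le_pow_right₀ (by linarith) (by omega)
  have h3 : 16 ≤ B ^ 2 := by nlinarith only [hB4]
  unfold NN
  constructor <;> nlinarith only [h1, h2, h3]

end
end UP

namespace UP
open Finset
variable {ν : ℕ}

lemma MM_cast (ν δ e v0 : ℕ) (hev : e ≤ v0 + 1) :
    MM ν δ (2 ^ e) (2 ^ (v0 + 1)) = ((∑ j ∈ range ((δ + 1) ^ ν + 1),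
      (2 ^ (v0 + 1) - 2 ^ mexp ν δ e j) * (2 ^ (v0 + 1)) ^ j : ℕ) : ℤ) := by
  classical
  unfold MM
  rw [Nat.cast_sum]
  apply sum_congr rfl
  intro j _
  have hle : 2 ^ mexp ν δ e j ≤ 2 ^ (v0 + 1) :=
    Nat.pow_le_pow_right (by norm_num) (by unfold mexp; split_ifs <;> omega)
  rw [Nat.cast_mul, Nat.cast_sub hle]
  unfold mexp
  split_ifs <;> push_cast <;> simp

theorem codeB (P : MvPolynomial (Fin (ν + 1)) ℤ) (δ : ℕ) (hP : P.totalDegree ≤ δ) (hδ : 1 ≤ δ)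
    (e ρ a g : ℕ) (hρ : LP P δ * (ν + 2) ^ δ < 2 ^ ρ) (ha : a < 2 ^ e) {b H B : ℤ}
    (hb : b = 2 ^ e) (hH : H = 2 ^ ρ * b ^ δ) (hB : B = 2 * H) (hB4 : 4 ≤ B) (hg : (g : ℤ) < N0 ν δ B)
    (Sn Tn : ℕ) (hS : (Sn : ℤ) = SS P δ a H B g) (hT : (Tn : ℤ) = TT ν δ b H B) :
    Sn &&& Tn = 0 ↔ ∃ z : Fin ν → ℕ, (∀ s, z s < 2 ^ e) ∧
      (g : ℤ) = ∑ s, (z s : ℤ) * B ^ ((δ + 1) ^ ((s : ℕ) + 1)) ∧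
      MvPolynomial.eval (Fin.cons (a : ℤ) (fun i => (z i : ℤ)) : Fin (ν + 1) → ℤ) P = 0 := by
  set v0 := ρ + e * δ with hv0
  have hHv : H = 2 ^ v0 := by rw [hH, hb, hv0, pow_add, pow_mul]
  have hBv : B = 2 ^ (v0 + 1) := by rw [hB, hHv, pow_succ]; ring
  have hev : e ≤ v0 + 1 := by
    have : e * 1 ≤ e * δ := Nat.mul_le_mul_left _ hδ
    omega
  have hLP := LP_nonneg P δ
  have hab : (a : ℤ) < b := by rw [hb]; exact_mod_cast ha
  have hbB : b ≤ B := by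
    rw [hb, hBv]; exact pow_le_pow_right₀ (by norm_num) hev
  have hb1 : 1 ≤ b := by rw [hb]; exact one_le_pow₀ (by norm_num)
  have hLB : LP P δ ≤ B := by
    have h1 : (1 : ℤ) ≤ (ν + 2) ^ δ := one_le_pow₀ (by linarith [Int.natCast_nonneg ν])
    have h2 : (1 : ℤ) ≤ b ^ δ := one_le_pow₀ hb1
    have h3 : (2 : ℤ) ^ ρ ≤ H := by rw [hH]; exact le_mul_of_one_le_right (by positivity) h2
    have h4 := le_mul_of_one_le_right hLP h1
    have : (0 : ℤ) < 2 ^ ρ := by positivity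
    linarith
  obtain ⟨hK0, hK1⟩ := KK_bound P δ (Int.natCast_nonneg a) hab hbB hB hB4 hLB (Int.natCast_nonneg g) hg
  set Kn := (KK P δ a H B g).toNat with hKn
  have hKc : (Kn : ℤ) = KK P δ a H B g := Int.toNat_of_nonneg hK0
  set n0 := (δ + 1) ^ ν with hn0
  set Mn : ℕ := ∑ j ∈ range (n0 + 1), (2 ^ (v0 + 1) - 2 ^ mexp ν δ e j) * (2 ^ (v0 + 1)) ^ j with hMn
  have hMc : (Mn : ℤ) = MM ν δ b B := by rw [hb, hBv, MM_cast ν δ e v0 hev]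
  have hgn : g < (2 ^ (v0 + 1)) ^ (n0 + 1) := by
    have : (g : ℤ) < (2 ^ (v0 + 1)) ^ (n0 + 1) := by rw [← hBv]; exact hg
    exact_mod_cast this
  have hMlt : Mn < (2 ^ (v0 + 1)) ^ (n0 + 1) := by
    have := (MM_bound ν δ hb1 hbB).2
    rw [← hMc] at this
    have h2 : (Mn : ℤ) + 1 ≤ (2 ^ (v0 + 1)) ^ (n0 + 1) := by rw [← hBv]; exact this
    exact_mod_cast h2
  have hSn : Sn = g + Kn * 2 ^ ((v0 + 1) * (n0 + 1)) := by
    have : (Sn : ℤ) = g + Kn * 2 ^ ((v0 + 1) * (n0 + 1)) := by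
      rw [hS, SS, hKc, N0, ← hn0, pow_mul, ← hBv]
    exact_mod_cast this
  set top := (δ + 1) ^ (ν + 1) with htop
  have hTn : Tn = Mn + ((2 ^ v0 - 1) * 2 ^ ((v0 + 1) * top)) * 2 ^ ((v0 + 1) * (n0 + 1)) := by
    have : (Tn : ℤ) = (Mn + ((2 ^ v0 - 1) * 2 ^ ((v0 + 1) * top)) * 2 ^ ((v0 + 1) * (n0 + 1)) : ℕ) := by
      push_cast [Nat.one_le_two_pow]
      rw [hT, TT, hMc, N0, ← hn0, pow_mul, pow_mul, ← hBv, ← hHv]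
    exact_mod_cast this
  have hblock : Sn &&& Tn = 0 ↔ g &&& Mn = 0 ∧ Kn &&& ((2 ^ v0 - 1) * 2 ^ ((v0 + 1) * top)) = 0 := by
    rw [hSn, hTn]
    rw [← pow_mul] at hgn hMlt
    exact and_block hgn hMlt
  rw [hblock]
  -- the key equivalence for a given z
  have key : ∀ z : Fin ν → ℕ, (∀ s, z s < 2 ^ e) →
      (g : ℤ) = ∑ s, (z s : ℤ) * B ^ ((δ + 1) ^ ((s : ℕ) + 1)) →
      (Kn &&& ((2 ^ v0 - 1) * 2 ^ ((v0 + 1) * top)) = 0 ↔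
        MvPolynomial.eval (Fin.cons (a : ℤ) (fun i => (z i : ℤ)) : Fin (ν + 1) → ℤ) P = 0) := by
    intro z hz hgz
    have hy : ∀ s, 0 ≤ (Fin.cons (a : ℤ) (fun i => (z i : ℤ)) : Fin (ν + 1) → ℤ) s := by
      intro s
      refine Fin.cases ?_ (fun s => ?_) s
      · simp
      · simp
    obtain ⟨κ, hκ1, hκ2, hκ3⟩ := coding_digits P δ hP _ hy
    have hn1 : 1 ≤ n0 := Nat.one_le_pow _ _ (by omega)
    have htn : top = (δ + 1) * n0 := by rw [htop, pow_succ, mul_comm]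
    have hκb : ∀ j, |κ j| < 2 ^ v0 := by
      intro j
      refine (hκ2 j).trans_lt ?_
      have hsum : 1 + ∑ s, (Fin.cons (a : ℤ) (fun i => (z i : ℤ)) : Fin (ν + 1) → ℤ) s
          ≤ (ν + 2) * b := by
        rw [Fin.sum_univ_succ]
        simp only [Fin.cons_zero, Fin.cons_succ]
        have : ∑ s, (z s : ℤ) ≤ ∑ s : Fin ν, b := by
          apply sum_le_sum; intro s _; rw [hb]; exact_mod_cast (hz s).le
        simp only [sum_const, card_univ, Fintype.card_fin, nsmul_eq_mul] at this
        linarith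
      have h0 : 0 ≤ 1 + ∑ s, (Fin.cons (a : ℤ) (fun i => (z i : ℤ)) : Fin (ν + 1) → ℤ) s := by
        have := sum_nonneg (fun s (_ : s ∈ univ) => hy s)
        linarith
      calc _ ≤ ((ν + 2) * b) ^ δ * LP P δ :=
            mul_le_mul_of_nonneg_right (pow_le_pow_left₀ h0 hsum δ) hLP
        _ = (LP P δ * (ν + 2) ^ δ) * b ^ δ := by rw [mul_pow]; ring
        _ < 2 ^ ρ * b ^ δ := mul_lt_mul_of_pos_right hρ (by positivity)
        _ = 2 ^ v0 := by rw [← hH, hHv]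
    have e1 : (2 * δ + 1) * n0 + 1 = top + (1 + δ * n0) := by rw [htn]; ring
    have e2 : (2 * δ + 1) * n0 + 2 * δ + 1 = top + (1 + (δ * n0 + 2 * δ)) := by rw [htn]; ring
    rw [mask2 (top := top) (k := δ * n0) (k' := δ * n0 + 2 * δ) κ hκb Kn, hκ3]
    · simp [Nat.factorial_ne_zero]
    · rw [hKc, KK, ← hn0, ← hBv, ← hHv, ← e1, ← e2, ← hκ1 B]
      congr 4
      rw [Fin.sum_univ_succ, hgz]
      simp only [Fin.cons_zero, Fin.cons_succ, Fin.val_zero, pow_zero, pow_one, Fin.val_succ]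
      ring
  constructor
  · rintro ⟨h1, h2⟩
    obtain ⟨z, hz, hgz⟩ := mask_back hδ hev hgn h1
    have hgz' : (g : ℤ) = ∑ s, (z s : ℤ) * B ^ ((δ + 1) ^ ((s : ℕ) + 1)) := by
      rw [hgz, hBv]; push_cast; rfl
    exact ⟨z, hz, hgz', (key z hz hgz').1 h2⟩
  · rintro ⟨z, hz, hgz', h2⟩
    refine ⟨?_, (key z hz hgz').2 h2⟩
    have := (mask_fwd hδ hev z hz).2
    have hgz : g = ∑ s, z s * (2 ^ (v0 + 1)) ^ ((δ + 1) ^ ((s : ℕ) + 1)) := by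
      rw [hBv] at hgz'; exact_mod_cast hgz'
    rw [hgz]; exact this

end UP

namespace UP
open Finset
variable {ν : ℕ}

def XX (S T N : ℤ) : ℤ := (N - 1) * ((S + T + 1) * N + T + 1)
def RR (g l x y0 C J Y : ℤ) : ℤ := l ^ 2 * x ^ 2 * ((g + 1) * (y0 - g) * J ^ 2 - 4 * y0 ^ 2 * (C - l * J * Y) ^ 2)

lemma q_bound (a : ℕ) (f q : ℤ) (hq : q = 1 + 3 * (2 * a + 1) * (2 * f + 1)) :
    q ≠ 0 ∧ (a : ℤ) < q ^ 2 ∧ 4 ≤ q ^ 2 := by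
  have ha : (0 : ℤ) ≤ a := Int.natCast_nonneg a
  have h : 6 * (a : ℤ) + 2 ≤ |q| := by
    rcases le_or_gt 0 f with hf | hf
    · have : 0 ≤ (2 * (a : ℤ) + 1) * f := by positivity
      exact le_trans (by rw [hq]; linarith) (le_abs_self q)
    · have : 0 ≤ (2 * (a : ℤ) + 1) * (-1 - f) := mul_nonneg (by linarith) (by linarith)
      exact le_trans (by rw [hq]; linarith) (neg_le_abs q)
  have h2 : q ^ 2 = |q| ^ 2 := (sq_abs q).symm
  refine ⟨?_, ?_, ?_⟩
  · intro h0; rw [h0, abs_zero] at h; linarith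
  · rw [h2]; nlinarith only [h, ha]
  · rw [h2]; nlinarith only [h, ha]

lemma params (P : MvPolynomial (Fin (ν + 1)) ℤ) (δ : ℕ) (hδ : 1 ≤ δ) (ρ : ℕ)
    (hρ : LP P δ * (ν + 2) ^ δ < 2 ^ ρ) {b H B : ℤ} (hb4 : 4 ≤ b) (hH : H = 2 ^ ρ * b ^ δ) (hB : B = 2 * H) :
    b ≤ B ∧ 4 ≤ B ∧ LP P δ ≤ B := by
  have hb1 : 1 ≤ b := by linarith
  have h1 : (1 : ℤ) ≤ (ν + 2) ^ δ := one_le_pow₀ (by linarith [Int.natCast_nonneg ν])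
  have h2 : b ≤ b ^ δ := le_self_pow₀ hb1 (by omega)
  have h3 : (2 : ℤ) ^ ρ ≤ H := by rw [hH]; exact le_mul_of_one_le_right (by positivity) (by linarith)
  have h4 := le_mul_of_one_le_right (LP_nonneg P δ) h1
  have h5 : (1 : ℤ) ≤ 2 ^ ρ := one_le_pow₀ (by norm_num)
  have h6 : b ^ δ ≤ H := by rw [hH]; exact le_mul_of_one_le_left (by linarith) h5
  refine ⟨by linarith, by linarith, by linarith⟩

lemma NN_pow (ν δ u : ℕ) : ∃ m : ℕ, NN ν δ (2 ^ u) = 2 ^ m := by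
  refine ⟨u * ((δ + 1) ^ ν + 1) + u * ((2 * δ + 1) * (δ + 1) ^ ν + 2 * δ + 3), ?_⟩
  rw [NN, N0, pow_add 2, pow_mul, pow_mul]

lemma XX_pos {S T N : ℤ} (hS : 0 ≤ S) (hT : 0 ≤ T) (hN : 16 ≤ N) : N - 1 ≤ XX S T N := by
  unfold XX
  have : 0 ≤ (S + T + 1) * N := by positivity
  exact le_mul_of_one_le_right (by linarith) (by linarith)

lemma XX_nat {S T N X : ℤ} {Sn Tn m n : ℕ} (hS : (Sn : ℤ) = S) (hT : (Tn : ℤ) = T) (hN : N = 2 ^ m)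
    (hX : X = XX S T N) (hn : (n : ℤ) = X) : n = (2 ^ m - 1) * ((Sn + Tn + 1) * 2 ^ m + Tn + 1) := by
  have : (n : ℤ) = ((2 ^ m - 1) * ((Sn + Tn + 1) * 2 ^ m + Tn + 1) : ℕ) := by
    push_cast [Nat.one_le_two_pow]
    rw [hn, hX, XX, hS, hT, hN]
  exact_mod_cast this

theorem core_back (P : MvPolynomial (Fin (ν + 1)) ℤ) (δ : ℕ) (hP : P.totalDegree ≤ δ) (hδ : 1 ≤ δ)
    (ρ : ℕ) (hρ : LP P δ * (ν + 2) ^ δ < 2 ^ ρ) (a : ℕ) {f g h k l w x y : ℤ}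
    {q b H B Nz N S T X Y W V aa bb' C J : ℤ}
    (eq : q = 1 + 3 * (2 * a + 1) * (2 * f + 1)) (eb : b = q ^ 2) (eH : H = 2 ^ ρ * b ^ δ)
    (eB : B = 2 * H) (eNz : Nz = N0 ν δ B) (eN : N = NN ν δ B) (eS : S = SS P δ a H B g)
    (eT : T = TT ν δ b H B) (eX : X = XX S T N) (eY : Y = N ^ 2) (eW : W = bW q w) (eV : V = bV Y W)
    (ea : aa = ba X Y l V) (eb' : bb' = bb X Y l V) (eC : C = 2 * X + 1 + (aa - 1) * h)
    (eJ : J = X + 1 + (bb' - 1) * k)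
    (h1 : IsSquare (dfi aa (2 * X + 1) C x y)) (h2 : IsSquare ((bb' ^ 2 - 1) * J ^ 2 + 1))
    (h3 : 4 * aa - 5 ∣ 3 * W * C - 2 * (W ^ 2 - 1)) (h4 : 0 < RR g l x Nz C J Y) :
    ∃ z : Fin ν → ℕ,
      MvPolynomial.eval (Fin.cons (a : ℤ) (fun i => (z i : ℤ)) : Fin (ν + 1) → ℤ) P = 0 := by
  obtain ⟨hq0, haq, hq4⟩ := q_bound a f q eq
  rw [← eb] at haq hq4
  obtain ⟨hbB, hB4, hLB⟩ := params P δ hδ ρ hρ hq4 eH eB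
  obtain ⟨hN16, hNzN⟩ := NN_ge ν δ hB4
  have hNz1 : 1 ≤ Nz := by rw [eNz]; exact one_le_pow₀ (by linarith)
  rw [← eN] at hN16 hNzN
  rw [← eNz] at hNzN
  -- consequences of R > 0
  have hl : l ≠ 0 := by rintro rfl; simp [RR] at h4
  have hx : x ≠ 0 := by rintro rfl; simp [RR] at h4
  have hbr : 0 < (g + 1) * (Nz - g) * J ^ 2 - 4 * Nz ^ 2 * (C - l * J * Y) ^ 2 := by
    unfold RR at h4
    exact pos_of_mul_pos_right h4 (by positivity)
  have hgN : 0 < (g + 1) * (Nz - g) := by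
    by_contra hcon
    push Not at hcon
    have e1 := mul_nonneg (neg_nonneg.2 hcon) (sq_nonneg J)
    have e2 : 0 ≤ 4 * Nz ^ 2 * (C - l * J * Y) ^ 2 := by positivity
    linarith
  have hg0 : 0 ≤ g := by
    by_contra hcon
    push Not at hcon
    have := mul_nonneg (by linarith : 0 ≤ -(g + 1)) (by linarith : 0 ≤ Nz - g)
    linarith
  have hgz : g < Nz := by
    by_contra hcon
    push Not at hcon
    have := mul_nonneg (by linarith : 0 ≤ g + 1) (by linarith : 0 ≤ g - Nz)
    linarith
  have hR : 4 * (C - l * J * Y) ^ 2 < J ^ 2 := by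
    have e1 : (g + 1) * (Nz - g) ≤ Nz * Nz :=
      mul_le_mul (by linarith) (by linarith) (by linarith) (by linarith)
    have e2 := mul_le_mul_of_nonneg_right e1 (sq_nonneg J)
    have e3 : Nz ^ 2 * (4 * (C - l * J * Y) ^ 2) < Nz ^ 2 * J ^ 2 := by linarith
    exact lt_of_mul_lt_mul_left e3 (by positivity)
  have hgz' : g < N0 ν δ B := by rw [← eNz]; exact hgz
  obtain ⟨hS0, hS1⟩ := SS_bound P δ (Int.natCast_nonneg a) haq hbB eB hB4 hLB hg0 hgz'
  obtain ⟨hT0, hT1⟩ := TT_bound ν δ (by linarith : 1 ≤ b) hbB eB hB4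
  rw [← eS, ← eN] at hS1
  rw [← eT, ← eN] at hT1
  rw [← eS] at hS0
  rw [← eT] at hT0
  have hXN := XX_pos hS0 hT0 hN16
  rw [← eX] at hXN
  obtain ⟨n, hn⟩ := Int.eq_ofNat_of_zero_le (by linarith : 0 ≤ X)
  obtain ⟨Sn, hSn⟩ := Int.eq_ofNat_of_zero_le hS0
  obtain ⟨Tn, hTn⟩ := Int.eq_ofNat_of_zero_le hT0
  obtain ⟨gn, hgn⟩ := Int.eq_ofNat_of_zero_le hg0
  have hn1 : 1 ≤ n := by
    have : (1 : ℤ) ≤ n := by rw [← hn]; linarith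
    exact_mod_cast this
  have hY : 256 ≤ Y := by rw [eY]; nlinarith only [hN16]
  rw [hn] at ea eb' eC eJ h1
  have hblk : Blk n Y q w l h k x y := by
    intro W' V' a' b' C' J' e1 e2 e3 e4 e5 e6
    rw [← eW] at e1; subst e1
    rw [← eV] at e2; subst e2
    rw [← ea] at e3; subst e3
    rw [← eb'] at e4; subst e4
    rw [← eC] at e5; subst e5
    rw [← eJ] at e6; subst e6
    exact ⟨h1, h2, h3⟩
  obtain ⟨hqw, hYd⟩ := bridge_back hn1 hY hq0 hl hx hblk eW eV ea eb' eC eJ hR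
  -- q is a power of two
  obtain ⟨e', he'⟩ : ∃ e', q.natAbs = 2 ^ e' := by
    have : q.natAbs ∣ 2 ^ n := by
      have e0 : (q * w).natAbs = 2 ^ n := by
        have : (q * w) ^ 2 = ((2 : ℤ) ^ n) ^ 2 := by
          rw [hqw, ← pow_mul, mul_comm, pow_mul]; norm_num
        have := Int.natAbs_eq_iff_sq_eq.2 this
        rw [this, Int.natAbs_pow]; rfl
      rw [← e0, Int.natAbs_mul]; exact dvd_mul_right _ _
    obtain ⟨k, _, hk⟩ := (Nat.dvd_prime_pow Nat.prime_two).1 this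
    exact ⟨k, hk⟩
  have hb2 : b = 2 ^ (2 * e') := by
    have : b = (q.natAbs : ℤ) ^ 2 := by rw [eb]; simp
    rw [this, he']; push_cast; rw [← pow_mul, mul_comm]
  have hB2 : B = 2 ^ (1 + ρ + 2 * e' * δ) := by
    rw [eB, eH, hb2, pow_add, pow_add, pow_mul _ (2 * e') δ, pow_one, mul_assoc]
  obtain ⟨m, hm⟩ := NN_pow ν δ (1 + ρ + 2 * e' * δ)
  rw [← hB2, ← eN] at hm
  have hcd : Sn &&& Tn = 0 := by
    have hX' := XX_nat hSn.symm hTn.symm hm eX hn.symm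
    have hS2 : Sn < 2 ^ m := by
      have : (Sn : ℤ) < 2 ^ m := by rw [← hm, ← hSn]; linarith
      exact_mod_cast this
    have hT2 : Tn < 2 ^ m := by
      have : (Tn : ℤ) < 2 ^ m := by rw [← hm, ← hTn]; linarith
      exact_mod_cast this
    rw [← central_dvd hS2 hT2, ← hX']
    rw [eY, hm] at hYd
    exact_mod_cast hYd
  have ha2 : a < 2 ^ (2 * e') := by
    have : (a : ℤ) < 2 ^ (2 * e') := by rw [← hb2]; exact haq
    exact_mod_cast this
  rw [hgn] at eS hgz'
  obtain ⟨z, _, _, hz⟩ := (codeB P δ hP hδ (2 * e') ρ a gn hρ ha2 hb2 eH eB hB4 hgz' Sn Tn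
    (hSn.symm.trans eS) (hTn.symm.trans eT)).1 hcd
  exact ⟨z, hz⟩

lemma exists_q (a t : ℕ) : ∃ (e' : ℕ) (f : ℤ), (2 : ℤ) ^ e' = 1 + 3 * (2 * a + 1) * (2 * f + 1) ∧ t < 2 ^ e' := by
  have hcop : Nat.Coprime 2 (3 * (2 * a + 1)) := by
    rw [Nat.coprime_two_left]
    exact Odd.mul (by decide) ⟨a, rfl⟩
  have hφ : 0 < Nat.totient (3 * (2 * a + 1)) := Nat.totient_pos.2 (by omega)
  have h1 := (Nat.ModEq.pow_totient hcop).pow (t + 1)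
  rw [one_pow, ← pow_mul] at h1
  set e' := Nat.totient (3 * (2 * a + 1)) * (t + 1) with he'
  have hte : t + 1 ≤ e' := Nat.le_mul_of_pos_left _ hφ
  have hd := (Nat.modEq_iff_dvd' Nat.one_le_two_pow).1 h1.symm
  obtain ⟨k, hk⟩ := hd
  have hk2 : 2 ^ e' = 1 + 3 * (2 * a + 1) * k := by
    have := Nat.one_le_two_pow (n := e'); omega
  have hodd : Odd k := by
    rw [← Nat.not_even_iff_odd]
    rintro ⟨j, rfl⟩
    have : 2 ∣ 2 ^ e' := dvd_pow_self _ (by omega)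
    rw [hk2] at this
    have h3 : 2 ∣ 3 * (2 * a + 1) * (j + j) := ⟨3 * (2 * a + 1) * j, by ring⟩
    omega
  obtain ⟨j, rfl⟩ := hodd
  refine ⟨e', j, ?_, ?_⟩
  · exact_mod_cast hk2
  · exact lt_of_lt_of_le (Nat.lt_two_pow_self) (Nat.pow_le_pow_right (by norm_num) (by omega))

theorem core_fwd (P : MvPolynomial (Fin (ν + 1)) ℤ) (δ : ℕ) (hP : P.totalDegree ≤ δ) (hδ : 1 ≤ δ)
    (ρ : ℕ) (hρ : LP P δ * (ν + 2) ^ δ < 2 ^ ρ) (a : ℕ) (z : Fin ν → ℕ)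
    (hz : MvPolynomial.eval (Fin.cons (a : ℤ) (fun i => (z i : ℤ)) : Fin (ν + 1) → ℤ) P = 0) :
    ∃ f g h k l w x y : ℤ, ∀ q b H B Nz N S T X Y W V aa bb' C J : ℤ,
    q = 1 + 3 * (2 * a + 1) * (2 * f + 1) → b = q ^ 2 → H = 2 ^ ρ * b ^ δ →
    B = 2 * H → Nz = N0 ν δ B → N = NN ν δ B → S = SS P δ a H B g →
    T = TT ν δ b H B → X = XX S T N → Y = N ^ 2 → W = bW q w → V = bV Y W →
    aa = ba X Y l V → bb' = bb X Y l V → C = 2 * X + 1 + (aa - 1) * h →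
    J = X + 1 + (bb' - 1) * k →
    IsSquare (dfi aa (2 * X + 1) C x y) ∧ IsSquare ((bb' ^ 2 - 1) * J ^ 2 + 1) ∧
    4 * aa - 5 ∣ 3 * W * C - 2 * (W ^ 2 - 1) ∧ 0 < RR g l x Nz C J Y := by
  obtain ⟨e', f, hq, ht⟩ := exists_q a (∑ s, z s)
  obtain ⟨b, eb⟩ : ∃ b : ℤ, b = ((2 : ℤ) ^ e') ^ 2 := ⟨_, rfl⟩
  obtain ⟨H, eH⟩ : ∃ H : ℤ, H = 2 ^ ρ * b ^ δ := ⟨_, rfl⟩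
  obtain ⟨B, eB⟩ : ∃ B : ℤ, B = 2 * H := ⟨_, rfl⟩
  obtain ⟨hq0, haq, hq4⟩ := q_bound a f _ hq
  rw [← eb] at haq hq4
  obtain ⟨hbB, hB4, hLB⟩ := params P δ hδ ρ hρ hq4 eH eB
  obtain ⟨hN16, hNzN⟩ := NN_ge ν δ hB4
  have hb2 : b = 2 ^ (2 * e') := by rw [eb, ← pow_mul, mul_comm]
  have hB2 : B = 2 ^ (1 + ρ + 2 * e' * δ) := by
    rw [eB, eH, hb2, pow_add, pow_add, pow_mul _ (2 * e') δ, pow_one, mul_assoc]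
  have hzs : ∀ s, z s < 2 ^ (2 * e') := fun s => by
    have h1 : z s ≤ ∑ s, z s := single_le_sum (f := z) (fun _ _ => Nat.zero_le _) (mem_univ s)
    have h2 : 2 ^ e' ≤ 2 ^ (2 * e') := Nat.pow_le_pow_right (by norm_num) (by omega)
    omega
  set u := 1 + ρ + 2 * e' * δ with hu
  have heu : 2 * e' ≤ u := by
    have : 2 * e' * 1 ≤ 2 * e' * δ := Nat.mul_le_mul_left _ hδ
    omega
  set gn : ℕ := ∑ s, z s * (2 ^ u) ^ ((δ + 1) ^ ((s : ℕ) + 1)) with hgn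
  have hgc : (gn : ℤ) = ∑ s, (z s : ℤ) * B ^ ((δ + 1) ^ ((s : ℕ) + 1)) := by
    rw [hgn, hB2]; push_cast; rfl
  have hgN : (gn : ℤ) < N0 ν δ B := by
    have := (mask_fwd hδ heu z hzs).1
    rw [N0, hB2]; exact_mod_cast this
  obtain ⟨hS0, hS1⟩ := SS_bound P δ (Int.natCast_nonneg a) haq hbB eB hB4 hLB (Int.natCast_nonneg gn) hgN
  obtain ⟨hT0, hT1⟩ := TT_bound ν δ (by linarith : 1 ≤ b) hbB eB hB4
  obtain ⟨S, eS⟩ : ∃ S : ℤ, S = SS P δ a H B gn := ⟨_, rfl⟩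
  obtain ⟨T, eT⟩ : ∃ T : ℤ, T = TT ν δ b H B := ⟨_, rfl⟩
  obtain ⟨N, eN⟩ : ∃ N : ℤ, N = NN ν δ B := ⟨_, rfl⟩
  obtain ⟨X, eX⟩ : ∃ X : ℤ, X = XX S T N := ⟨_, rfl⟩
  obtain ⟨Y, eY⟩ : ∃ Y : ℤ, Y = N ^ 2 := ⟨_, rfl⟩
  rw [← eS] at hS0
  rw [← eT] at hT0
  rw [← eS, ← eN] at hS1
  rw [← eT, ← eN] at hT1
  rw [← eN] at hN16 hNzN
  have hXN := XX_pos hS0 hT0 hN16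
  rw [← eX] at hXN
  obtain ⟨n, hn⟩ := Int.eq_ofNat_of_zero_le (by linarith : 0 ≤ X)
  obtain ⟨Sn, hSn⟩ := Int.eq_ofNat_of_zero_le hS0
  obtain ⟨Tn, hTn⟩ := Int.eq_ofNat_of_zero_le hT0
  have hn1 : 1 ≤ n := by
    have : (1 : ℤ) ≤ n := by rw [← hn]; linarith
    exact_mod_cast this
  have hY : 256 ≤ Y := by rw [eY]; nlinarith only [hN16]
  have hNY : N0 ν δ B ≤ Y := by rw [eY]; nlinarith only [hN16, hNzN]
  have hNz1 : B ≤ N0 ν δ B := le_self_pow₀ (by linarith) (by omega)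
  obtain ⟨m, hm⟩ := NN_pow ν δ u
  rw [← hB2, ← eN] at hm
  have ha2 : a < 2 ^ (2 * e') := by
    have : (a : ℤ) < 2 ^ (2 * e') := by rw [← hb2]; exact haq
    exact_mod_cast this
  have hYd : Y ∣ ((2 * n).choose n : ℤ) := by
    have hX' := XX_nat hSn.symm hTn.symm hm eX hn.symm
    have hS2 : Sn < 2 ^ m := by
      have : (Sn : ℤ) < 2 ^ m := by rw [← hm, ← hSn]; linarith
      exact_mod_cast this
    have hT2 : Tn < 2 ^ m := by
      have : (Tn : ℤ) < 2 ^ m := by rw [← hm, ← hTn]; linarith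
      exact_mod_cast this
    have hcd := (codeB P δ hP hδ (2 * e') ρ a gn hρ ha2 hb2 eH eB hB4 hgN Sn Tn
      (hSn.symm.trans eS) (hTn.symm.trans eT)).2 ⟨z, hzs, hgc, hz⟩
    rw [← central_dvd hS2 hT2, ← hX'] at hcd
    rw [eY, hm]
    exact_mod_cast hcd
  have hen : e' ≤ n := by
    have h1 : e' < 2 ^ e' := Nat.lt_two_pow_self
    have h2 : (e' : ℤ) < 2 ^ e' := by exact_mod_cast h1
    have h3 : (2 : ℤ) ^ e' ≤ b := by rw [hb2]; exact pow_le_pow_right₀ (by norm_num) (by omega)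
    have : (e' : ℤ) ≤ n := by rw [← hn]; linarith
    exact_mod_cast this
  have hqw : (2 : ℤ) ^ e' * 2 ^ (n - e') = 2 ^ n := by rw [← pow_add]; congr 1; omega
  obtain ⟨l, h, k, x, y, hl, hx, hblk, hR⟩ := bridge_forward hn1 hY hqw hYd
  refine ⟨f, gn, h, k, l, 2 ^ (n - e'), x, y, ?_⟩
  intro q b2 H2 B2 Nz N2 S2 T2 X2 Y2 W V aa bb' C J e1 e2 e3 e4 e5 e6 e7 e8 e9 e10 e11 e12 e13 e14 e15 e16
  rw [← hq] at e1; subst e1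
  rw [← eb] at e2; subst e2
  rw [← eH] at e3; subst e3
  rw [← eB] at e4; subst e4
  rw [← eN] at e6; subst e6
  rw [← eS] at e7; subst e7
  rw [← eT] at e8; subst e8
  rw [← eX] at e9; subst e9
  rw [← eY] at e10; subst e10
  rw [hn] at e13 e14 e15 e16 ⊢
  obtain ⟨h1, h2, h3⟩ := hblk W V aa bb' C J e11 e12 e13 e14 e15 e16
  refine ⟨h1, h2, h3, ?_⟩
  have hR' := hR W V aa bb' C J Nz e11 e12 e13 e14 e15 e16 (by rw [e5]; linarith) (by rw [e5]; exact hNY)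
  rw [← e5] at hgN
  unfold RR
  apply mul_pos (by positivity)
  have hg0 := Int.natCast_nonneg gn
  have h5 : 1 ≤ ((gn : ℤ) + 1) * (Nz - gn) := by
    have := mul_le_mul (by linarith : (1 : ℤ) ≤ gn + 1) (by linarith : 1 ≤ Nz - gn) (by norm_num) (by linarith)
    linarith
  have h6 := mul_le_mul_of_nonneg_right h5 (sq_nonneg J)
  linarith

end UP

namespace UP
open Finset

def PF (d : ℕ) (φ : (Fin 12 → ℤ) → ℤ) : Prop :=
  ∃ P : MvPolynomial (Fin 12) ℤ, P.totalDegree ≤ d ∧ ∀ v, MvPolynomial.eval v P = φ v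

namespace PF
variable {d e : ℕ} {φ ψ : (Fin 12 → ℤ) → ℤ}

lemma mono (h : PF d φ) (hde : d ≤ e) : PF e φ := by
  obtain ⟨P, h1, h2⟩ := h; exact ⟨P, h1.trans hde, h2⟩
lemma cst (c : ℤ) : PF 0 (fun _ => c) := ⟨MvPolynomial.C c, (MvPolynomial.totalDegree_C c).le, fun _ => MvPolynomial.eval_C c⟩
lemma var (i : Fin 12) : PF 1 (fun v => v i) := ⟨MvPolynomial.X i, by simp, by simp⟩
lemma add (h : PF d φ) (k : PF e ψ) : PF (max d e) (fun v => φ v + ψ v) := by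
  obtain ⟨P, h1, h2⟩ := h
  obtain ⟨Q, k1, k2⟩ := k
  exact ⟨P + Q, (MvPolynomial.totalDegree_add _ _).trans (max_le_max h1 k1), fun v => by simp [h2, k2]⟩
lemma mul (h : PF d φ) (k : PF e ψ) : PF (d + e) (fun v => φ v * ψ v) := by
  obtain ⟨P, h1, h2⟩ := h
  obtain ⟨Q, k1, k2⟩ := k
  exact ⟨P * Q, (MvPolynomial.totalDegree_mul _ _).trans (add_le_add h1 k1), fun v => by simp [h2, k2]⟩
lemma pow (h : PF d φ) (n : ℕ) : PF (n * d) (fun v => φ v ^ n) := by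
  obtain ⟨P, h1, h2⟩ := h
  exact ⟨P ^ n, (MvPolynomial.totalDegree_pow _ _).trans (Nat.mul_le_mul_left _ h1), fun v => by simp [h2]⟩
lemma sub (h : PF d φ) (k : PF e ψ) : PF (max d e) (fun v => φ v - ψ v) := by
  obtain ⟨P, h1, h2⟩ := h
  obtain ⟨Q, k1, k2⟩ := k
  exact ⟨P - Q, (MvPolynomial.totalDegree_sub _ _).trans (max_le_max h1 k1), fun v => by simp [h2, k2]⟩
lemma sum {ι : Type*} (s : Finset ι) (F : ι → (Fin 12 → ℤ) → ℤ) (h : ∀ i ∈ s, PF d (F i)) :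
    PF d (fun v => ∑ i ∈ s, F i v) := by
  classical
  induction s using Finset.induction_on with
  | empty => simpa using (cst 0).mono (Nat.zero_le d)
  | insert i s hi ih =>
    simp only [sum_insert hi]
    exact ((h i (mem_insert_self _ _)).add (ih fun j hj => h j (mem_insert_of_mem hj))).mono (by simp)
end PF

open PF

section
variable {A1 A2 S T R n a b C x y X Y l V W q w g J N Nz H B : (Fin 12 → ℤ) → ℤ}

lemma PF_dfi {α : ℕ} (ha : PF α a) (hb : PF (α + 1) b) (hC : PF (α + 1) C) (hx : PF 1 x) (hy : PF 1 y) :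
    PF (88 * α + 64) (fun v => dfi (a v) (b v) (C v) (x v) (y v)) := by
  have hD : PF (4 * α + 2) (fun v => dD (a v) (C v)) :=
    ((((ha.pow 2).sub (cst 1)).mul (hC.pow 2)).add (cst 1)).mono (by omega)
  have hE : PF (6 * α + 5) (fun v => dE (a v) (C v) (x v)) :=
    ((((cst 2).mul (hC.pow 2)).mul hD).mul hx).mono (by omega)
  have hF : PF (14 * α + 10) (fun v => dF (a v) (C v) (x v)) :=
    ((((ha.pow 2).sub (cst 1)).mul (hE.pow 2)).add (cst 1)).mono (by omega)
  have hG : PF (20 * α + 14) (fun v => dG (a v) (C v) (x v)) :=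
    (ha.add (hF.mul (((cst 1).sub ha).add (((cst 2).mul (hC.pow 2)).mul hD)))).mono (by omega)
  have hH : PF (15 * α + 12) (fun v => dH (a v) (b v) (C v) (x v) (y v)) :=
    (hC.add (hF.mul ((hb.sub hC).add (((cst 2).mul hC).mul hy)))).mono (by omega)
  have hI : PF (70 * α + 52) (fun v => dI (a v) (b v) (C v) (x v) (y v)) :=
    ((((hG.pow 2).sub (cst 1)).mul (hH.pow 2)).add (cst 1)).mono (by omega)
  exact ((hD.mul hF).mul hI).mono (by omega)

lemma PF_relM {t : ℕ} (h1 : PF (768 + 616 * t) A1) (h2 : PF (42 + 48 * t) A2) (hS : PF (8 + 7 * t) S)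
    (hT : PF (15 + 7 * t) T) (hR : PF (28 + 30 * t) R) (hn : PF 2 n) :
    PF (12464 + 10032 * t) (fun v => relM (A1 v) (A2 v) (S v) (T v) (R v) (n v)) := by
  have hX : PF (1536 + 1232 * t) (fun v => relX (A1 v) (A2 v)) :=
    (((cst 1).add (h1.pow 2)).add (h2.pow 2)).mono (by omega)
  have hQ : PF (44 + 44 * t) (fun v => relQ (S v) (R v)) :=
    ((hS.pow 2).mul (((cst 2).mul hR).sub (cst 1))).mono (by omega)
  have hZ : PF (3116 + 2508 * t) (fun v => relZ (A1 v) (A2 v) (S v) (T v) (R v) (n v)) :=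
    ((((hS.pow 2).mul hn).add (hT.pow 2)).sub (hQ.mul ((hT.pow 2).add (hX.pow 2)))).mono (by omega)
  exact (((hZ.pow 4).sub (((cst 2).mul (hZ.pow 2)).mul (((hQ.pow 2).mul h1).add
    (((hQ.pow 2).mul (hX.pow 2)).mul h2)))).add ((((hQ.pow 2).mul h1).sub
    (((hQ.pow 2).mul (hX.pow 2)).mul h2)).pow 2)).mono (by omega)

end

section
variable {ν : ℕ}

/-- the degree of the modulus -/
def tdeg (ν δ : ℕ) : ℕ := 4 * δ * (((δ + 1) ^ ν + 1) + ((2 * δ + 1) * (δ + 1) ^ ν + 2 * δ + 3))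

lemma PF_Bpow {δ : ℕ} {B : (Fin 12 → ℤ) → ℤ} (hB : PF (4 * δ) B) {j k : ℕ} (hjk : j ≤ k) :
    PF (4 * δ * k) (fun v => B v ^ j) :=
  (hB.pow j).mono (by rw [mul_comm]; exact Nat.mul_le_mul_left _ hjk)

lemma PF_N0 {δ : ℕ} {B : (Fin 12 → ℤ) → ℤ} (hB : PF (4 * δ) B) :
    PF (4 * δ * ((δ + 1) ^ ν + 1)) (fun v => N0 ν δ (B v)) := PF_Bpow hB le_rfl

lemma PF_NN {δ : ℕ} {B : (Fin 12 → ℤ) → ℤ} (hB : PF (4 * δ) B) :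
    PF (tdeg ν δ) (fun v => NN ν δ (B v)) :=
  ((PF_N0 hB).mul (PF_Bpow hB le_rfl)).mono (le_of_eq (by unfold tdeg; ring))

lemma PF_TT {δ : ℕ} (hδ : 1 ≤ δ) {b H B : (Fin 12 → ℤ) → ℤ} (hb : PF 4 b) (hH : PF (4 * δ) H)
    (hB : PF (4 * δ) B) : PF (tdeg ν δ) (fun v => TT ν δ (b v) (H v) (B v)) := by
  classical
  have hn1 : 1 ≤ (δ + 1) ^ ν := Nat.one_le_pow _ _ (by omega)
  have hM : PF (4 * δ * ((δ + 1) ^ ν + 1)) (fun v => MM ν δ (b v) (B v)) := by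
    unfold MM
    apply PF.sum
    intro j hj
    rw [mem_range] at hj
    have h1 : PF (4 * δ) (fun v => B v - (if ∃ s : Fin ν, j = (δ + 1) ^ ((s : ℕ) + 1) then b v else 1)) := by
      split_ifs
      · exact (hB.sub hb).mono (by omega)
      · exact (hB.sub (cst 1)).mono (by omega)
    exact (h1.mul (PF_Bpow hB (Nat.lt_succ_iff.1 hj))).mono (by rw [mul_add]; omega)
  have h2 := ((hH.sub (cst 1)).mul (PF_Bpow hB (le_refl ((δ + 1) ^ (ν + 1))))).mul (PF_N0 (ν := ν) hB)
  refine (hM.add h2).mono ?_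
  unfold tdeg
  have e : 4 * δ ⊔ 0 + 4 * δ * (δ + 1) ^ (ν + 1) + 4 * δ * ((δ + 1) ^ ν + 1)
      = 4 * δ * (1 + (δ + 1) ^ (ν + 1) + ((δ + 1) ^ ν + 1)) := by
    rw [Nat.max_zero]; ring
  rw [e]
  apply max_le
  · exact Nat.mul_le_mul_left _ (by omega)
  · apply Nat.mul_le_mul_left
    rw [pow_succ]
    nlinarith only [hn1]

lemma PF_SS (P : MvPolynomial (Fin (ν + 1)) ℤ) {δ : ℕ} (hδ : 1 ≤ δ) {a H B g : (Fin 12 → ℤ) → ℤ}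
    (ha : PF 1 a) (hg : PF 1 g) (hH : PF (4 * δ) H)
    (hB : PF (4 * δ) B) : PF (tdeg ν δ) (fun v => SS P δ (a v) (H v) (B v) (g v)) := by
  have hn1 : 1 ≤ (δ + 1) ^ ν := Nat.one_le_pow _ _ (by omega)
  have hD : PF (4 * δ * (δ + 1) ^ (ν + 1)) (fun v => DP P δ (B v)) := by
    unfold DP
    apply PF.sum
    intro i _
    exact ((cst (wt δ i * P.coeff i)).mul (PF_Bpow hB (Nat.sub_le _ _))).mono (by omega)
  have hc : PF (1 + 4 * δ) (fun v => 1 + a v * B v + g v) :=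
    (((cst 1).add (ha.mul hB)).add hg).mono (by omega)
  have hK : PF (4 * δ * ((2 * δ + 1) * (δ + 1) ^ ν + 2 * δ + 3))
      (fun v => KK P δ (a v) (H v) (B v) (g v)) := by
    have h1 := (hc.pow δ).mul hD
    have h2 : PF (4 * δ * ((2 * δ + 1) * (δ + 1) ^ ν + 2 * δ + 3)) (fun v =>
        ∑ j ∈ range ((2 * δ + 1) * (δ + 1) ^ ν + 1), H v * B v ^ j) := by
      apply PF.sum
      intro j hj
      rw [mem_range] at hj
      refine (hH.mul (PF_Bpow hB (Nat.lt_succ_iff.1 hj))).mono ?_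
      have e : 4 * δ + 4 * δ * ((2 * δ + 1) * (δ + 1) ^ ν) = 4 * δ * (1 + (2 * δ + 1) * (δ + 1) ^ ν) := by ring
      rw [e]
      exact Nat.mul_le_mul_left _ (by omega)
    have h3 := PF_Bpow hB (show (2 * δ + 1) * (δ + 1) ^ ν + 2 * δ + 1 ≤
      (2 * δ + 1) * (δ + 1) ^ ν + 2 * δ + 3 by omega)
    have h1' : PF (4 * δ * ((2 * δ + 1) * (δ + 1) ^ ν + 2 * δ + 3))
        (fun v => (1 + a v * B v + g v) ^ δ * DP P δ (B v)) := by
      refine h1.mono ?_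
      have e2 : δ * (1 + 4 * δ) + 4 * δ * (δ + 1) ^ (ν + 1) ≤ 4 * δ * ((1 + δ) + (δ + 1) ^ (ν + 1)) := by
        nlinarith only [Nat.zero_le δ]
      refine e2.trans (Nat.mul_le_mul_left _ ?_)
      rw [pow_succ]
      nlinarith only [hn1]
    exact ((h1'.add h2).add h3).mono (by simp)
  have h4 := hg.add (hK.mul (PF_N0 (ν := ν) hB))
  refine h4.mono ?_
  unfold tdeg
  have : 1 ≤ 4 * δ * ((2 * δ + 1) * (δ + 1) ^ ν + 2 * δ + 3) := Nat.mul_pos (by omega) (by omega)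
  rw [mul_add (4 * δ) ((δ + 1) ^ ν + 1)]
  apply max_le
  · omega
  · omega

lemma budget (ν δ : ℕ) (hδ : 1 ≤ δ) : 12464 + 10032 * tdeg ν δ ≤
    15616 + 233856 * δ + 233952 * δ * (2 * δ + 1) ^ (ν + 1) + 467712 * δ ^ 2 * (2 * δ + 1) ^ (ν + 1) := by
  have hn : (δ + 1) ^ ν ≤ (2 * δ + 1) ^ ν := Nat.pow_le_pow_left (by omega) ν
  have hn1 : 1 ≤ (δ + 1) ^ ν := Nat.one_le_pow _ _ (by omega)
  unfold tdeg
  rw [pow_succ]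
  generalize (2 * δ + 1) ^ ν = U at *
  generalize (δ + 1) ^ ν = n0 at *
  have h1 : δ * (δ * n0) ≤ δ * (δ * U) := Nat.mul_le_mul_left _ (Nat.mul_le_mul_left _ hn)
  have h2 : δ * n0 ≤ δ * U := Nat.mul_le_mul_left _ hn
  have h3 : δ * (δ * 1) ≤ δ * (δ * U) := Nat.mul_le_mul_left _ (Nat.mul_le_mul_left _ (hn1.trans hn))
  have h4 : 0 ≤ δ * (δ * (δ * U)) := Nat.zero_le _
  nlinarith only [h1, h2, h3, h4]

end

end UP

namespace UP
open Finset PF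

lemma mk12 (a f g h k l w x y x1 x2 x3 : ℤ) : ∃ (z : Fin 11 → ℤ) (u : Fin 12 → ℤ), u = Fin.cons a z ∧
    u 0 = a ∧ u 1 = f ∧ u 2 = g ∧ u 3 = h ∧ u 4 = k ∧ u 5 = l ∧ u 6 = w ∧ u 7 = x ∧ u 8 = y ∧
    u 9 = x1 ∧ u 10 = x2 ∧ u 11 = x3 :=
  ⟨![f, g, h, k, l, w, x, y, x1, x2, x3], _, rfl, rfl, rfl, rfl, rfl, rfl, rfl, rfl, rfl, rfl, rfl, rfl, rfl⟩

set_option maxHeartbeats 1000000 in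
theorem main_pos (ν δ : ℕ) (hδ : 1 ≤ δ) (P : MvPolynomial (Fin (ν + 1)) ℤ) (hP : P.totalDegree ≤ δ) :
    ∃ Q : MvPolynomial (Fin 12) ℤ, Q.totalDegree ≤
      15616 + 233856 * δ + 233952 * δ * (2 * δ + 1) ^ (ν + 1) + 467712 * δ ^ 2 * (2 * δ + 1) ^ (ν + 1) ∧
      ∀ a : ℕ, (∃ z : Fin ν → ℕ,
        MvPolynomial.eval (Fin.cons (a : ℤ) (fun i => (z i : ℤ)) : Fin (ν + 1) → ℤ) P = 0) ↔
        ∃ z : Fin 11 → ℤ, MvPolynomial.eval (Fin.cons (a : ℤ) z : Fin 12 → ℤ) Q = 0 := by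
  obtain ⟨ρ, hρ⟩ := pow_unbounded_of_one_lt (LP P δ * (ν + 2) ^ δ) (by norm_num : (1 : ℤ) < 2)
  obtain ⟨q, eq⟩ : ∃ q : (Fin 12 → ℤ) → ℤ, q = fun v => 1 + 3 * (2 * v 0 + 1) * (2 * v 1 + 1) := ⟨_, rfl⟩
  obtain ⟨b, eb⟩ : ∃ b : (Fin 12 → ℤ) → ℤ, b = fun v => q v ^ 2 := ⟨_, rfl⟩
  obtain ⟨H, eH⟩ : ∃ H : (Fin 12 → ℤ) → ℤ, H = fun v => 2 ^ ρ * b v ^ δ := ⟨_, rfl⟩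
  obtain ⟨B, eB⟩ : ∃ B : (Fin 12 → ℤ) → ℤ, B = fun v => 2 * H v := ⟨_, rfl⟩
  obtain ⟨Nz, eNz⟩ : ∃ Nz : (Fin 12 → ℤ) → ℤ, Nz = fun v => N0 ν δ (B v) := ⟨_, rfl⟩
  obtain ⟨N, eN⟩ : ∃ N : (Fin 12 → ℤ) → ℤ, N = fun v => NN ν δ (B v) := ⟨_, rfl⟩
  obtain ⟨S, eS⟩ : ∃ S : (Fin 12 → ℤ) → ℤ, S = fun v => SS P δ (v 0) (H v) (B v) (v 2) := ⟨_, rfl⟩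
  obtain ⟨T, eT⟩ : ∃ T : (Fin 12 → ℤ) → ℤ, T = fun v => TT ν δ (b v) (H v) (B v) := ⟨_, rfl⟩
  obtain ⟨X, eX⟩ : ∃ X : (Fin 12 → ℤ) → ℤ, X = fun v => XX (S v) (T v) (N v) := ⟨_, rfl⟩
  obtain ⟨Y, eY⟩ : ∃ Y : (Fin 12 → ℤ) → ℤ, Y = fun v => N v ^ 2 := ⟨_, rfl⟩
  obtain ⟨W, eW⟩ : ∃ W : (Fin 12 → ℤ) → ℤ, W = fun v => bW (q v) (v 6) := ⟨_, rfl⟩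
  obtain ⟨V, eV⟩ : ∃ V : (Fin 12 → ℤ) → ℤ, V = fun v => bV (Y v) (W v) := ⟨_, rfl⟩
  obtain ⟨aa, ea⟩ : ∃ aa : (Fin 12 → ℤ) → ℤ, aa = fun v => ba (X v) (Y v) (v 5) (V v) := ⟨_, rfl⟩
  obtain ⟨bc, ebc⟩ : ∃ bc : (Fin 12 → ℤ) → ℤ, bc = fun v => bb (X v) (Y v) (v 5) (V v) := ⟨_, rfl⟩
  obtain ⟨C, eC⟩ : ∃ C : (Fin 12 → ℤ) → ℤ, C = fun v => 2 * X v + 1 + (aa v - 1) * v 3 := ⟨_, rfl⟩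
  obtain ⟨J, eJ⟩ : ∃ J : (Fin 12 → ℤ) → ℤ, J = fun v => X v + 1 + (bc v - 1) * v 4 := ⟨_, rfl⟩
  obtain ⟨A1, eA1⟩ : ∃ A1 : (Fin 12 → ℤ) → ℤ,
    A1 = fun v => dfi (aa v) (2 * X v + 1) (C v) (v 7) (v 8) := ⟨_, rfl⟩
  obtain ⟨A2, eA2⟩ : ∃ A2 : (Fin 12 → ℤ) → ℤ, A2 = fun v => (bc v ^ 2 - 1) * J v ^ 2 + 1 := ⟨_, rfl⟩
  obtain ⟨Sr, eSr⟩ : ∃ Sr : (Fin 12 → ℤ) → ℤ, Sr = fun v => 4 * aa v - 5 := ⟨_, rfl⟩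
  obtain ⟨Tr, eTr⟩ : ∃ Tr : (Fin 12 → ℤ) → ℤ, Tr = fun v => 3 * W v * C v - 2 * (W v ^ 2 - 1) := ⟨_, rfl⟩
  obtain ⟨R, eR⟩ : ∃ R : (Fin 12 → ℤ) → ℤ,
    R = fun v => RR (v 2) (v 5) (v 7) (Nz v) (C v) (J v) (Y v) := ⟨_, rfl⟩
  obtain ⟨n, en⟩ : ∃ n : (Fin 12 → ℤ) → ℤ, n = fun v => v 9 ^ 2 + v 10 ^ 2 + v 11 ^ 2 + v 11 := ⟨_, rfl⟩
  -- degrees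
  set t := tdeg ν δ with ht
  have hq : PF 2 q := by
    rw [eq]
    exact ((cst 1).add (((cst 3).mul (((cst 2).mul (var 0)).add (cst 1))).mul
      (((cst 2).mul (var 1)).add (cst 1)))).mono (by omega)
  have hb : PF 4 b := by rw [eb]; exact (hq.pow 2).mono (by omega)
  have hH : PF (4 * δ) H := by rw [eH]; exact ((cst (2 ^ ρ)).mul (hb.pow δ)).mono (by omega)
  have hB : PF (4 * δ) B := by rw [eB]; exact ((cst 2).mul hH).mono (by omega)
  have hN : PF t N := by rw [eN]; exact PF_NN hB
  have hNz : PF t Nz := by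
    rw [eNz]
    refine (PF_N0 hB).mono ?_
    rw [ht, tdeg]; exact Nat.mul_le_mul_left _ (Nat.le_add_right _ _)
  have hS : PF t S := by rw [eS]; exact PF_SS P hδ (var 0) (var 2) hH hB
  have hT : PF t T := by rw [eT]; exact PF_TT hδ hb hH hB
  have hX : PF (3 * t) X := by
    rw [eX]
    exact ((hN.sub (cst 1)).mul (((((hS.add hT).add (cst 1)).mul hN).add hT).add (cst 1))).mono (by omega)
  have hY : PF (2 * t) Y := by rw [eY]; exact hN.pow 2
  have hW : PF 6 W := by
    rw [eW]; exact (((cst 2).mul (hq.pow 2)).mul ((var 6).pow 2)).mono (by omega)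
  have hV : PF (6 + 2 * t) V := by rw [eV]; exact (((cst 4).mul hW).mul hY).mono (by omega)
  have haa : PF (8 + 7 * t) aa := by
    rw [ea]
    exact ((((((var 5).pow 2).add (cst 1)).mul hX).mul hY).mul (hV.add (cst 1))).mono (by omega)
  have hbc : PF (10 + 12 * t) bc := by
    rw [ebc]
    exact (((((cst 2).mul ((((var 5).pow 2).add (cst 1)).pow 2)).mul (hX.pow 2)).mul (hY.pow 2)).mul
      hV).mono (by omega)
  have h2X : PF (8 + 7 * t + 1) (fun v => 2 * X v + 1) := (((cst 2).mul hX).add (cst 1)).mono (by omega)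
  have hC : PF (8 + 7 * t + 1) C := by
    rw [eC]; exact (h2X.add ((haa.sub (cst 1)).mul (var 3))).mono (by omega)
  have hJ : PF (11 + 12 * t) J := by
    rw [eJ]; exact ((hX.add (cst 1)).add ((hbc.sub (cst 1)).mul (var 4))).mono (by omega)
  have hA1 : PF (768 + 616 * t) A1 := by
    rw [eA1]; exact (PF_dfi haa h2X hC (var 7) (var 8)).mono (by omega)
  have hA2 : PF (42 + 48 * t) A2 := by
    rw [eA2]; exact ((((hbc.pow 2).sub (cst 1)).mul (hJ.pow 2)).add (cst 1)).mono (by omega)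
  have hSr : PF (8 + 7 * t) Sr := by
    rw [eSr]; exact (((cst 4).mul haa).sub (cst 5)).mono (by omega)
  have hTr : PF (15 + 7 * t) Tr := by
    rw [eTr]
    exact ((((cst 3).mul hW).mul hC).sub ((cst 2).mul ((hW.pow 2).sub (cst 1)))).mono (by omega)
  have hR : PF (28 + 30 * t) R := by
    rw [eR]
    exact ((((var 5).pow 2).mul ((var 7).pow 2)).mul
      (((((var 2).add (cst 1)).mul (hNz.sub (var 2))).mul (hJ.pow 2)).sub
      (((cst 4).mul (hNz.pow 2)).mul ((hC.sub (((var 5).mul hJ).mul hY)).pow 2)))).mono (by omega)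
  have hn : PF 2 n := by
    rw [en]
    exact (((((var 9).pow 2).add ((var 10).pow 2)).add ((var 11).pow 2)).add (var 11)).mono (by omega)
  obtain ⟨Q, hQ1, hQ2⟩ := PF_relM hA1 hA2 hSr hTr hR hn
  have hQ2 : ∀ v, MvPolynomial.eval v Q = relM (A1 v) (A2 v) (Sr v) (Tr v) (R v) (n v) := hQ2
  refine ⟨Q, hQ1.trans (budget ν δ hδ), fun a => ?_⟩
  have hSr0 : ∀ v, Sr v ≠ 0 := by intro v; rw [eSr]; show 4 * aa v - 5 ≠ 0; omega
  constructor
  · rintro ⟨z, hz⟩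
    obtain ⟨f, g, h, k, l, w, x, y, hall⟩ := core_fwd P δ hP hδ ρ hρ a z hz
    have hrel : ∀ u : Fin 12 → ℤ, u 0 = a → u 1 = f → u 2 = g → u 3 = h → u 4 = k → u 5 = l →
        u 6 = w → u 7 = x → u 8 = y →
        IsSquare (A1 u) ∧ IsSquare (A2 u) ∧ Sr u ∣ Tr u ∧ 0 < R u := by
      rintro u u0 rfl rfl rfl rfl rfl rfl rfl rfl
      have := hall (q u) (b u) (H u) (B u) (Nz u) (N u) (S u) (T u) (X u) (Y u) (W u) (V u) (aa u) (bc u)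
        (C u) (J u) (by rw [eq, ← u0]) (by rw [eb]) (by rw [eH]) (by rw [eB]) (by rw [eNz]) (by rw [eN])
        (by rw [eS, ← u0]) (by rw [eT]) (by rw [eX]) (by rw [eY]) (by rw [eW]) (by rw [eV]) (by rw [ea])
        (by rw [ebc]) (by rw [eC]) (by rw [eJ])
      rw [eA1, eA2, eSr, eTr, eR]
      exact this
    have hval : ∀ u u' : Fin 12 → ℤ, u 0 = u' 0 → u 1 = u' 1 → u 2 = u' 2 → u 3 = u' 3 → u 4 = u' 4 →
        u 5 = u' 5 → u 6 = u' 6 → u 7 = u' 7 → u 8 = u' 8 →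
        A1 u = A1 u' ∧ A2 u = A2 u' ∧ Sr u = Sr u' ∧ Tr u = Tr u' ∧ R u = R u' := by
      intro u u' e0 e1 e2 e3 e4 e5 e6 e7 e8
      have hq : q u = q u' := by rw [eq]; simp only [e0, e1]
      have hb : b u = b u' := by rw [eb]; simp only [hq]
      have hH : H u = H u' := by rw [eH]; simp only [hb]
      have hB : B u = B u' := by rw [eB]; simp only [hH]
      have hNz : Nz u = Nz u' := by rw [eNz]; simp only [hB]
      have hN : N u = N u' := by rw [eN]; simp only [hB]
      have hS : S u = S u' := by rw [eS]; simp only [e0, e2, hH, hB]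
      have hT : T u = T u' := by rw [eT]; simp only [hb, hH, hB]
      have hX : X u = X u' := by rw [eX]; simp only [hS, hT, hN]
      have hY : Y u = Y u' := by rw [eY]; simp only [hN]
      have hW : W u = W u' := by rw [eW]; simp only [hq, e6]
      have hV : V u = V u' := by rw [eV]; simp only [hY, hW]
      have haa : aa u = aa u' := by rw [ea]; simp only [hX, hY, e5, hV]
      have hbc : bc u = bc u' := by rw [ebc]; simp only [hX, hY, e5, hV]
      have hC : C u = C u' := by rw [eC]; simp only [hX, haa, e3]
      have hJ : J u = J u' := by rw [eJ]; simp only [hX, hbc, e4]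
      rw [eA1, eA2, eSr, eTr, eR]
      simp only [haa, hX, hC, e7, e8, hbc, hJ, hW, e2, e5, hNz, hY, and_self]
    obtain ⟨z', u', _, a0, a1, a2, a3, a4, a5, a6, a7, a8, _⟩ := mk12 a f g h k l w x y 0 0 0
    obtain ⟨m, hm⟩ := (relM_iff (hSr0 _)).1 (hrel u' a0 a1 a2 a3 a4 a5 a6 a7 a8)
    obtain ⟨x1, x2, x3, hx⟩ := gauss_form m
    obtain ⟨z, u, hu, b0, b1, b2, b3, b4, b5, b6, b7, b8, b9, b10, b11⟩ := mk12 a f g h k l w x y x1 x2 x3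
    refine ⟨z, ?_⟩
    rw [← hu, hQ2]
    obtain ⟨v1, v2, v3, v4, v5⟩ := hval u u' (b0.trans a0.symm) (b1.trans a1.symm) (b2.trans a2.symm)
      (b3.trans a3.symm) (b4.trans a4.symm) (b5.trans a5.symm) (b6.trans a6.symm) (b7.trans a7.symm)
      (b8.trans a8.symm)
    have hnv : n u = m := by rw [hx, en]; simp only [b9, b10, b11]
    rw [v1, v2, v3, v4, v5, hnv]
    exact hm
  · rintro ⟨z, hz⟩
    rw [hQ2] at hz
    set u : Fin 12 → ℤ := Fin.cons (a : ℤ) z with hu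
    have hn0 : 0 ≤ n u := by
      rw [en]
      have : 0 ≤ u 11 ^ 2 + u 11 := by
        rcases le_or_gt 0 (u 11) with h | h
        · positivity
        · nlinarith only [h]
      show 0 ≤ u 9 ^ 2 + u 10 ^ 2 + u 11 ^ 2 + u 11
      linarith [sq_nonneg (u 9), sq_nonneg (u 10)]
    obtain ⟨m, hm⟩ := Int.eq_ofNat_of_zero_le hn0
    rw [hm] at hz
    obtain ⟨h1, h2, h3, h4⟩ := (relM_iff (hSr0 u)).2 ⟨m, hz⟩
    have u0 : u 0 = a := rfl
    rw [eA1] at h1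
    rw [eA2] at h2
    rw [eSr, eTr] at h3
    rw [eR] at h4
    have g0 : q u = 1 + 3 * (2 * (a : ℤ) + 1) * (2 * u 1 + 1) := by rw [← u0]; exact congrFun eq u
    have gS : S u = SS P δ (a : ℤ) (H u) (B u) (u 2) := by rw [← u0]; exact congrFun eS u
    exact core_back P δ hP hδ ρ hρ a (f := u 1) g0 (congrFun eb u) (congrFun eH u)
      (congrFun eB u) (congrFun eNz u) (congrFun eN u) gS (congrFun eT u) (congrFun eX u)
      (congrFun eY u) (congrFun eW u) (congrFun eV u) (congrFun ea u) (congrFun ebc u)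
      (congrFun eC u) (congrFun eJ u) h1 h2 h3 h4

end UP

/-- **Universal pairs from ℕ to ℤ.** If `(ν, δ)` is universal over `ℕ`, then
`(11, η(ν, δ))` is universal over `ℤ`, where
`η(ν, δ) = 15616 + 233856·δ + 233952·δ·(2δ+1)^{ν+1} + 467712·δ²·(2δ+1)^{ν+1}`. -/
theorem universal_pair_nat_to_int (ν δ : ℕ) (h : IsUniversalPairNat ν δ) :
    IsUniversalPairInt 11
      (15616 + 233856 * δ + 233952 * δ * (2 * δ + 1) ^ (ν + 1)
        + 467712 * δ ^ 2 * (2 * δ + 1) ^ (ν + 1)) := by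
  intro A hA
  obtain ⟨P, hP, hPA⟩ := h A hA
  rcases Nat.eq_zero_or_pos δ with h0 | hδ
  · obtain ⟨c, rfl⟩ : ∃ c, P = MvPolynomial.C c :=
      ⟨_, MvPolynomial.totalDegree_eq_zero_iff_eq_C.1 (by omega)⟩
    refine ⟨MvPolynomial.C c, by rw [MvPolynomial.totalDegree_C]; exact Nat.zero_le _, fun a => ?_⟩
    rw [hPA a]
    simp only [MvPolynomial.eval_C]
    exact ⟨fun ⟨_, h⟩ => ⟨0, h⟩, fun ⟨_, h⟩ => ⟨0, h⟩⟩
  · obtain ⟨Q, hQ, hQA⟩ := UP.main_pos ν δ hδ P hP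
    exact ⟨Q, hQ, fun a => (hPA a).trans (hQA a)⟩
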